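/- Let p ∈ (0,1) be fixed. For each n, let d(n) ∈ ℕ and α = α(n) ∈ ℝ^{d(n)} be a vector of nonnegative entries. If (‖α‖₂/‖α‖₃)⁶ / n³ → 0 as n → ∞, then the total variation distance between the distribution of the signed triangle count τ(G(n,p)) and the distribution of the signed triangle count τ(G(n,p,α)) converges to 1. -/

import Mathlib

open MeasureTheory ProbabilityTheory Real Filter
open scoped Classical ENNReal NNReal

noncomputable section

/-- Euclidean inner product on `Fin d → ℝ`. -/
def dotp {d : ℕ} (x y : Fin d → ℝ) : ℝ := ∑ i, x i * y i

/-- The `q`-norm of a vector `α ∈ ℝ^d`. -/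
def nrm {d : ℕ} (q : ℕ) (α : Fin d → ℝ) : ℝ := (∑ i, α i ^ q) ^ ((1 : ℝ) / q)

/-- The centered Gaussian measure `N(0, D_α)` on `ℝ^d`, `D_α = diag α`. -/
def gaussPi (d : ℕ) (α : Fin d → ℝ) : Measure (Fin d → ℝ) :=
  Measure.pi fun i => gaussianReal 0 (Real.toNNReal (α i))

/-- The law of `n` i.i.d. samples from `N(0, D_α)`. -/
def sampleMeasure (n d : ℕ) (α : Fin d → ℝ) : Measure (Fin n → Fin d → ℝ) :=
  Measure.pi fun _ => gaussPi d α

/-- `t` is the `p`-th upper quantile of `⟨X₁, X₂⟩` for `X₁, X₂` i.i.d. `N(0, D_α)`. -/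
def IsThreshold (d : ℕ) (α : Fin d → ℝ) (p t : ℝ) : Prop :=
  ((gaussPi d α).prod (gaussPi d α)) {xy | t ≤ dotp xy.1 xy.2} = ENNReal.ofReal p

instance (n : ℕ) : MeasurableSpace (SimpleGraph (Fin n)) := ⊤

/-- The anisotropic random geometric graph `G(n, p, α)`, with threshold `t = t_{p,α}`. -/
def geomGraph (n d : ℕ) (α : Fin d → ℝ) (t : ℝ) : Measure (SimpleGraph (Fin n)) :=
  Measure.map (fun X => SimpleGraph.fromRel fun i j => t ≤ dotp (X i) (X j))
    (sampleMeasure n d α)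

/-- The Erdős–Rényi random graph `G(n, p)`. -/
def erGraph (n : ℕ) (p : ℝ) : Measure (SimpleGraph (Fin n)) :=
  Measure.map (fun x => SimpleGraph.fromRel fun i j => x s(i, j) ≤ p)
    (Measure.pi fun _ : Sym2 (Fin n) => volume.restrict (Set.Icc (0 : ℝ) 1))

/-- Total variation distance between two measures. -/
def tvDist {Ω : Type*} [MeasurableSpace Ω] (μ ν : Measure Ω) : ℝ :=
  ⨆ s : {s : Set Ω // MeasurableSet s}, |(μ s.1).toReal - (ν s.1).toReal|

/-- The `{0,1}`-valued adjacency indicator of a graph. -/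
def adjInd {n : ℕ} (G : SimpleGraph (Fin n)) (i j : Fin n) : ℝ :=
  if G.Adj i j then 1 else 0

/-- The signed triangle count `τ(G) = ∑_{{i,j,k}} (A_{ij}-p)(A_{ik}-p)(A_{jk}-p)`,
written as `1/6` times the sum over ordered triples of pairwise distinct vertices. -/
def signedTriangles {n : ℕ} (p : ℝ) (G : SimpleGraph (Fin n)) : ℝ :=
  (1 / 6) * ∑ i, ∑ j, ∑ k,
    if i ≠ j ∧ i ≠ k ∧ j ≠ k then
      (adjInd G i j - p) * (adjInd G i k - p) * (adjInd G j k - p)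
    else 0

/-!
The signed triangle count of `G(n, p)` is centered with variance of order `n³`, so it suffices that
the signed triangle count of the geometric graph exceeds the order `n^{3/2}` with high probability.
The latter is a U-statistic whose kernel is `H(x, y, z) = K(x, y) K(x, z) K(y, z)` with
`K(x, y) = 1 - p` if `⟨x, y⟩ ≥ t` and `K(x, y) = -p` otherwise. Normalize `‖α‖₂ = 1` and put
`r = ‖α‖₃³`, so that the assumption reads `n³ r² → ∞`.

If `|E H| ≥ c r`, Hoeffding's decomposition bounds the variance of the U-statistic by
`O(n⁵ ‖α‖₄⁴ + n³)`, and Chebyshev's inequality around the mean, which is of order `n³ r`, suffices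
because `‖α‖₄⁴ ≤ r^{4/3}`. When `r` is small, this lower bound holds: conditionally on `x`, the
variable `⟨x, Y⟩` is Gaussian with variance `∑ αᵢ xᵢ²`, close to `1`, and expanding in this variance
gives `E H ≥ φ(t)³ r - O(‖α‖₄⁴)` with `φ` the standard Gaussian density. When `r` is bounded below,
some `αₘ` is bounded below. For large `|xₘ|` the sign of `⟨x, y⟩` is that of `xₘ yₘ`, so `K(x, ·)`
is almost a function of the sign of `yₘ`, and `E H(x, Y, Z)` is bounded below on an event of `x` of
positive probability. Hence either `|E H|` is bounded below, or the Hájek projection of the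
U-statistic is a sum of `n` i.i.d. variables of variance bounded below, multiplied by `n²`, and a
characteristic function argument shows that it does not concentrate at scale `n²`.
-/

/-- Bounded measurable real functions. The bound is pointwise rather than almost sure, so that the
class is stable under composition with arbitrary measurable maps and under integration of one
variable. -/
@[fun_prop]
structure BoundedMeasurable {A : Type*} [MeasurableSpace A] (f : A → ℝ) : Prop where
  measurable : Measurable f
  exists_abs_le : ∃ C, ∀ x, |f x| ≤ C

lemma abs_integral_le_of_abs_le {A : Type*} [MeasurableSpace A] (μ : Measure A)
    [IsProbabilityMeasure μ] {f : A → ℝ} {C : ℝ} (h : ∀ x, |f x| ≤ C) : |∫ x, f x ∂μ| ≤ C := by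
  simpa using norm_integral_le_of_norm_le_const (μ := μ) (f := f) (C := C) (.of_forall h)

namespace BoundedMeasurable

variable {A B : Type*} [MeasurableSpace A] [MeasurableSpace B] {f g : A → ℝ}

@[fun_prop]
lemma const (c : ℝ) : BoundedMeasurable fun _ : A => c :=
  ⟨measurable_const, |c|, fun _ => le_rfl⟩

@[fun_prop]
lemma add (hf : BoundedMeasurable f) (hg : BoundedMeasurable g) :
    BoundedMeasurable fun x => f x + g x := by
  obtain ⟨hf, C, hC⟩ := hf
  obtain ⟨hg, D, hD⟩ := hg
  exact ⟨hf.add hg, C + D, fun x => (abs_add_le _ _).trans (add_le_add (hC x) (hD x))⟩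

@[fun_prop]
lemma mul (hf : BoundedMeasurable f) (hg : BoundedMeasurable g) :
    BoundedMeasurable fun x => f x * g x := by
  obtain ⟨hf, C, hC⟩ := hf
  obtain ⟨hg, D, hD⟩ := hg
  refine ⟨hf.mul hg, C * D, fun x => ?_⟩
  rw [abs_mul]
  exact mul_le_mul (hC x) (hD x) (abs_nonneg _) ((abs_nonneg _).trans (hC x))

@[fun_prop]
lemma sub (hf : BoundedMeasurable f) (hg : BoundedMeasurable g) :
    BoundedMeasurable fun x => f x - g x := by
  simpa [sub_eq_add_neg] using hf.add ((const (-1)).mul hg)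

@[fun_prop]
lemma abs (hf : BoundedMeasurable f) : BoundedMeasurable fun x => |f x| := by
  obtain ⟨hf, C, hC⟩ := hf
  exact ⟨hf.abs, C, fun x => (abs_abs _).trans_le (hC x)⟩

@[fun_prop]
lemma pow (hf : BoundedMeasurable f) (k : ℕ) : BoundedMeasurable fun x => f x ^ k := by
  induction k with
  | zero => simpa using const (A := A) 1
  | succ k ih => simpa [pow_succ] using ih.mul hf

@[fun_prop]
lemma finset_sum {κ : Type*} (s : Finset κ) {F : κ → A → ℝ}
    (hF : ∀ k ∈ s, BoundedMeasurable (F k)) : BoundedMeasurable fun x => ∑ k ∈ s, F k x := by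
  induction s using Finset.induction_on with
  | empty => simpa using const (A := A) 0
  | insert a s ha ih =>
    simp only [Finset.sum_insert ha]
    exact (hF a (s.mem_insert_self a)).add (ih fun k hk => hF k (Finset.mem_insert_of_mem hk))

@[fun_prop]
lemma ite (P : Prop) [Decidable P] (hf : BoundedMeasurable f) (hg : BoundedMeasurable g) :
    BoundedMeasurable fun x => if P then f x else g x := by
  split_ifs <;> assumption

lemma comp {f : B → ℝ} (hf : BoundedMeasurable f) {u : A → B} (hu : Measurable u) :
    BoundedMeasurable fun x => f (u x) := by
  obtain ⟨hf, C, hC⟩ := hf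
  exact ⟨hf.comp hu, C, fun x => hC _⟩

lemma integrable (hf : BoundedMeasurable f) (μ : Measure A) [IsFiniteMeasure μ] :
    Integrable f μ := by
  obtain ⟨hf, C, hC⟩ := hf
  exact .of_bound hf.aestronglyMeasurable C (.of_forall hC)

lemma integrable_mul (hf : BoundedMeasurable f) {μ : Measure A} (hg : Integrable g μ) :
    Integrable (fun x => f x * g x) μ := by
  obtain ⟨hf, C, hC⟩ := hf
  exact hg.bdd_mul hf.aestronglyMeasurable (.of_forall hC)

lemma memLp (hf : BoundedMeasurable f) (q : ℝ≥0∞) (μ : Measure A) [IsFiniteMeasure μ] :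
    MemLp f q μ := by
  obtain ⟨hf, C, hC⟩ := hf
  exact .of_bound hf.aestronglyMeasurable C (.of_forall hC)

@[fun_prop]
lemma integral {F : A → B → ℝ} (hF : BoundedMeasurable fun z : A × B => F z.1 z.2)
    (μ : Measure B) [IsProbabilityMeasure μ] : BoundedMeasurable fun x => ∫ y, F x y ∂μ := by
  obtain ⟨hF, C, hC⟩ := hF
  exact ⟨(StronglyMeasurable.integral_prod_right (f := F) hF.stronglyMeasurable).measurable, C,
    fun x => abs_integral_le_of_abs_le μ fun y => hC (x, y)⟩

lemma sq_integral_le (hf : BoundedMeasurable f) (μ : Measure A) [IsProbabilityMeasure μ] :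
    (∫ x, f x ∂μ) ^ 2 ≤ ∫ x, f x ^ 2 ∂μ := by
  have := variance_nonneg f μ
  rw [variance_eq_sub (hf.memLp 2 μ)] at this
  simpa using this

lemma integral_sub_integral_sq (hf : BoundedMeasurable f) (μ : Measure A)
    [IsProbabilityMeasure μ] :
    ∫ x, (f x - ∫ y, f y ∂μ) ^ 2 ∂μ = ∫ x, f x ^ 2 ∂μ - (∫ x, f x ∂μ) ^ 2 := by
  rw [← variance_eq_integral hf.measurable.aemeasurable, variance_eq_sub (hf.memLp 2 μ)]
  simp

lemma integral_mul_le_of_integral_sq_le (hf : BoundedMeasurable f) (hg : BoundedMeasurable g)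
    (μ : Measure A) [IsProbabilityMeasure μ] {V : ℝ} (hfV : ∫ x, f x ^ 2 ∂μ ≤ V)
    (hgV : ∫ x, g x ^ 2 ∂μ ≤ V) : ∫ x, f x * g x ∂μ ≤ V := by
  have hle : ∫ x, f x * g x ∂μ ≤ ∫ x, ((1 / 2) * f x ^ 2 + (1 / 2) * g x ^ 2) ∂μ :=
    integral_mono (integrable (by fun_prop) μ) (integrable (by fun_prop) μ) fun x => by
      linarith [two_mul_le_add_sq (f x) (g x)]
  simp (disch := exact integrable (by fun_prop) _) only [integral_add, integral_const_mul] at hle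
  linarith

lemma integral_add_sq_le (hf : BoundedMeasurable f) (hg : BoundedMeasurable g) (μ : Measure A)
    [IsFiniteMeasure μ] :
    ∫ x, (f x + g x) ^ 2 ∂μ ≤ 2 * ∫ x, f x ^ 2 ∂μ + 2 * ∫ x, g x ^ 2 ∂μ := by
  have hle : ∫ x, (f x + g x) ^ 2 ∂μ ≤ ∫ x, (2 * f x ^ 2 + 2 * g x ^ 2) ∂μ :=
    integral_mono (integrable (by fun_prop) μ) (integrable (by fun_prop) μ) fun x => by
      linarith [add_sq_le (a := f x) (b := g x)]
  simpa (disch := exact integrable (by fun_prop) _) only [integral_add, integral_const_mul]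
    using hle

end BoundedMeasurable

lemma measureReal_le_abs_le_integral_sq_div {A : Type*} [MeasurableSpace A] (μ : Measure A)
    {f : A → ℝ} (hf : Integrable (fun x => f x ^ 2) μ) {a : ℝ} (ha : 0 < a) :
    μ.real {x | a ≤ |f x|} ≤ (∫ x, f x ^ 2 ∂μ) / a ^ 2 := by
  have hmarkov := mul_meas_ge_le_integral_of_nonneg (.of_forall fun x => sq_nonneg (f x)) hf (a ^ 2)
  simp only [sq_le_sq, abs_of_pos ha] at hmarkov
  rwa [le_div_iff₀ (by positivity), mul_comm]

section Resampling

variable {ι : Type*} [Fintype ι] [DecidableEq ι] {E : ι → Type*} [∀ i, MeasurableSpace (E i)]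
  (μ : ∀ i, Measure (E i)) [∀ i, IsProbabilityMeasure (μ i)]

lemma measurePreserving_update (a : ι) :
    MeasurePreserving (fun z : (∀ i, E i) × E a => Function.update z.1 a z.2)
      ((Measure.pi μ).prod (μ a)) (Measure.pi μ) := by
  refine ⟨measurable_update', (Measure.pi_eq fun s hs => ?_).symm⟩
  have hpre : (fun z : (∀ i, E i) × E a => Function.update z.1 a z.2) ⁻¹' Set.univ.pi s
      = Set.univ.pi (Function.update s a Set.univ) ×ˢ s a := by
    ext ⟨X, x⟩
    simp only [Set.mem_preimage, Set.mem_univ_pi, Set.mem_prod]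
    refine ⟨fun h => ⟨fun i => ?_, by simpa using h a⟩, fun ⟨h, hx⟩ i => ?_⟩ <;>
      obtain rfl | hi := eq_or_ne i a
    · simp
    · simpa [hi] using h i
    · simpa using hx
    · simpa [hi] using h i
  rw [Measure.map_apply measurable_update' (.univ_pi hs), hpre, Measure.prod_prod, Measure.pi_pi,
    ← Finset.prod_erase_mul _ _ (Finset.mem_univ a),
    ← Finset.prod_erase_mul _ (fun i => μ i (s i)) (Finset.mem_univ a), Function.update_self,
    measure_univ, mul_one]
  congr 1
  exact Finset.prod_congr rfl fun i hi => by
    rw [Function.update_of_ne (Finset.ne_of_mem_erase hi)]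

lemma integral_pi_eq_integral_update (a : ι) {F : (∀ i, E i) → ℝ}
    (hF : Integrable F (Measure.pi μ)) :
    ∫ X, F X ∂Measure.pi μ = ∫ X, ∫ x, F (Function.update X a x) ∂μ a ∂Measure.pi μ := by
  have hmp := measurePreserving_update μ a
  have hF' : Integrable F (((Measure.pi μ).prod (μ a)).map _) := hmp.map_eq.symm ▸ hF
  rw [← integral_prod (f := fun z => F (Function.update z.1 a z.2))
    (hF'.comp_measurable hmp.measurable),
    ← integral_map hmp.measurable.aemeasurable hF'.aestronglyMeasurable, hmp.map_eq]

lemma integral_pi_mul_eq_zero (a : ι) {F G : (∀ i, E i) → ℝ}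
    (hFG : Integrable (fun X => F X * G X) (Measure.pi μ))
    (hG : ∀ X x, G (Function.update X a x) = G X)
    (hF : ∀ X, ∫ x, F (Function.update X a x) ∂μ a = 0) :
    ∫ X, F X * G X ∂Measure.pi μ = 0 := by
  rw [integral_pi_eq_integral_update μ a hFG]
  simp only [hG, integral_mul_const, hF, zero_mul, integral_zero]

lemma integral_sum_sq_le_of_degenerate {κ : Type*} [Fintype κ] (Z : κ → (∀ i, E i) → ℝ)
    (supp : κ → Finset ι) {V c : ℝ} (hZ : ∀ T, BoundedMeasurable (Z T))
    (hdep : ∀ T, ∀ a ∉ supp T, ∀ X x, Z T (Function.update X a x) = Z T X)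
    (hzero : ∀ T, ∀ a ∈ supp T, ∀ X, ∫ x, Z T (Function.update X a x) ∂μ a = 0)
    (hV : ∀ T, ∫ X, Z T X ^ 2 ∂Measure.pi μ ≤ V)
    (hc : ∀ T, ((Finset.univ.filter fun T' => supp T' ⊆ supp T).card : ℝ) ≤ c) :
    ∫ X, (∑ T, Z T X) ^ 2 ∂Measure.pi μ ≤ Fintype.card κ * (c * V) := by
  have hterm : ∀ T T', ∫ X, Z T' X * Z T X ∂Measure.pi μ ≤ if supp T' ⊆ supp T then V else 0 := by
    intro T T'
    split_ifs with h
    · exact (hZ T').integral_mul_le_of_integral_sq_le (hZ T) _ (hV T') (hV T)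
    · obtain ⟨a, ha', ha⟩ := Finset.not_subset.1 h
      exact (integral_pi_mul_eq_zero μ a (((hZ T').mul (hZ T)).integrable _) (hdep T a ha)
        (hzero T' a ha')).le
  have hrow : ∀ T, ∑ T', ∫ X, Z T' X * Z T X ∂Measure.pi μ ≤ c * V := by
    intro T
    have hV0 : 0 ≤ V := (integral_nonneg fun X => sq_nonneg _).trans (hV T)
    calc ∑ T', ∫ X, Z T' X * Z T X ∂Measure.pi μ
        ≤ ∑ T', if supp T' ⊆ supp T then V else 0 := Finset.sum_le_sum fun T' _ => hterm T T'
      _ = (Finset.univ.filter fun T' => supp T' ⊆ supp T).card * V := by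
        rw [← Finset.sum_filter, Finset.sum_const, nsmul_eq_mul]
      _ ≤ c * V := mul_le_mul_of_nonneg_right (hc T) hV0
  calc ∫ X, (∑ T, Z T X) ^ 2 ∂Measure.pi μ
      = ∑ T, ∑ T', ∫ X, Z T' X * Z T X ∂Measure.pi μ := by
        simp only [sq, Finset.sum_mul_sum]
        simp (disch := intros; exact BoundedMeasurable.integrable (by fun_prop) _) only
          [integral_finsetSum]
        rw [Finset.sum_comm]
    _ ≤ ∑ _T : κ, c * V := Finset.sum_le_sum fun T _ => hrow T
    _ = Fintype.card κ * (c * V) := by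
        rw [Finset.sum_const, nsmul_eq_mul, Finset.card_univ]

end Resampling

lemma integral_pi_eval_pair {ι : Type*} [Fintype ι] {E : ι → Type*} [∀ i, MeasurableSpace (E i)]
    (μ : ∀ i, Measure (E i)) [∀ i, IsProbabilityMeasure (μ i)] {a b : ι} (hab : a ≠ b)
    {f : E a → E b → ℝ}
    (hf : BoundedMeasurable fun z : E a × E b => f z.1 z.2) :
    ∫ X, f (X a) (X b) ∂Measure.pi μ = ∫ x, ∫ y, f x y ∂μ b ∂μ a := by
  have hfX : BoundedMeasurable fun X : ∀ i, E i => f (X a) (X b) :=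
    hf.comp (u := fun X : ∀ i, E i => (X a, X b)) (by fun_prop)
  rw [integral_pi_eq_integral_update μ b (hfX.integrable _)]
  simp only [Function.update_self, Function.update_of_ne hab]
  exact integral_comp_eval (hf.integral (μ b)).measurable.aestronglyMeasurable

section DistinctSums

variable {ι : Type*} [Fintype ι] [DecidableEq ι]

/-- The sum of `F` over ordered pairs of distinct indices. -/
def distinctPairSum (F : ι → ι → ℝ) : ℝ := ∑ i, ∑ j, if i ≠ j then F i j else 0

/-- The sum of `F` over ordered triples of pairwise distinct indices. -/
def distinctTripleSum (F : ι → ι → ι → ℝ) : ℝ :=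
  ∑ i, ∑ j, ∑ k, if i ≠ j ∧ i ≠ k ∧ j ≠ k then F i j k else 0

lemma distinctTripleSum_add (F G : ι → ι → ι → ℝ) :
    distinctTripleSum (fun i j k => F i j k + G i j k)
      = distinctTripleSum F + distinctTripleSum G := by
  simp only [distinctTripleSum, ← Finset.sum_add_distrib]
  refine Finset.sum_congr rfl fun i _ => Finset.sum_congr rfl fun j _ =>
    Finset.sum_congr rfl fun k _ => ?_
  split_ifs <;> simp

lemma distinctTripleSum_swap₂₃ (F : ι → ι → ι → ℝ) :
    distinctTripleSum (fun i j k => F i k j) = distinctTripleSum F := by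
  refine Finset.sum_congr rfl fun i _ => ?_
  rw [Finset.sum_comm]
  refine Finset.sum_congr rfl fun k _ => Finset.sum_congr rfl fun j _ => ?_
  grind

lemma distinctTripleSum_swap₁₂ (F : ι → ι → ι → ℝ) :
    distinctTripleSum (fun i j k => F j i k) = distinctTripleSum F := by
  rw [distinctTripleSum, Finset.sum_comm]
  refine Finset.sum_congr rfl fun i _ => Finset.sum_congr rfl fun j _ =>
    Finset.sum_congr rfl fun k _ => ?_
  grind

lemma sum_distinct_eq_card_sub_one_mul (i : ι) (c : ℝ) :
    (∑ j, if i ≠ j then c else 0) = ((Fintype.card ι : ℝ) - 1) * c := by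
  have hcompl : Finset.univ.filter (fun j => i ≠ j) = {i}ᶜ := by ext; simp [eq_comm]
  rw [← Finset.sum_filter, hcompl, Finset.sum_const, nsmul_eq_mul, Finset.card_compl,
    Finset.card_singleton, Nat.cast_sub (Fintype.card_pos_iff.2 ⟨i⟩), Nat.cast_one]

lemma sum_distinct_eq_card_sub_two_mul (i j : ι) (c : ℝ) :
    (∑ k, if i ≠ j ∧ i ≠ k ∧ j ≠ k then c else 0)
      = if i ≠ j then ((Fintype.card ι : ℝ) - 2) * c else 0 := by
  split_ifs with h
  · have hcompl : Finset.univ.filter (fun k => i ≠ j ∧ i ≠ k ∧ j ≠ k) = {i, j}ᶜ := by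
      ext; simp [h, eq_comm]
    have hcard : 2 ≤ Fintype.card ι := Finset.card_pair h ▸ Finset.card_le_univ _
    rw [← Finset.sum_filter, hcompl, Finset.sum_const, nsmul_eq_mul, Finset.card_compl,
      Finset.card_pair h, Nat.cast_sub hcard, Nat.cast_ofNat]
  · simp [h]

lemma distinctTripleSum_of_two (F : ι → ι → ℝ) :
    distinctTripleSum (fun i j _ => F i j)
      = ((Fintype.card ι : ℝ) - 2) * distinctPairSum F := by
  simp only [distinctTripleSum, distinctPairSum, sum_distinct_eq_card_sub_two_mul,
    Finset.mul_sum, mul_ite, mul_zero]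

lemma distinctTripleSum_of_one (F : ι → ℝ) :
    distinctTripleSum (fun i _ _ => F i)
      = ((Fintype.card ι : ℝ) - 1) * ((Fintype.card ι : ℝ) - 2) * ∑ i, F i := by
  rw [distinctTripleSum_of_two fun i _ => F i, distinctPairSum]
  simp only [sum_distinct_eq_card_sub_one_mul, ← Finset.mul_sum]
  ring

end DistinctSums

@[fun_prop]
lemma BoundedMeasurable.distinctPairSum {A ι : Type*} [MeasurableSpace A] [Fintype ι]
    [DecidableEq ι] {F : A → ι → ι → ℝ} (hF : ∀ i j, BoundedMeasurable fun a => F a i j) :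
    BoundedMeasurable fun a => distinctPairSum (F a) := by
  unfold _root_.distinctPairSum
  fun_prop

@[fun_prop]
lemma BoundedMeasurable.distinctTripleSum {A ι : Type*} [MeasurableSpace A] [Fintype ι]
    [DecidableEq ι] {F : A → ι → ι → ι → ℝ}
    (hF : ∀ i j k, BoundedMeasurable fun a => F a i j k) :
    BoundedMeasurable fun a => distinctTripleSum (F a) := by
  unfold _root_.distinctTripleSum
  fun_prop

/-- Symmetric measurable kernels of three variables with values in `[-1, 1]`; symmetry is
recorded on the two transpositions generating the symmetric group. -/
structure SymmKernel (E : Type*) [MeasurableSpace E] where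
  toFun : E → E → E → ℝ
  measurable_toFun : Measurable fun z : (E × E) × E => toFun z.1.1 z.1.2 z.2
  abs_le_one : ∀ x y z, |toFun x y z| ≤ 1
  swap₁₂ : ∀ x y z, toFun x y z = toFun y x z
  swap₂₃ : ∀ x y z, toFun x y z = toFun x z y

namespace SymmKernel

variable {E : Type*} [MeasurableSpace E]

instance : CoeFun (SymmKernel E) fun _ => E → E → E → ℝ := ⟨toFun⟩

variable (H : SymmKernel E) (μ : Measure E)

/-- The conditional expectation of `H (X, Y, Z)` given `X = x` and `Y = y`. -/
def marginal₂ (x y : E) : ℝ := ∫ z, H x y z ∂μ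

/-- The conditional expectation of `H (X, Y, Z)` given `X = x`. -/
def marginal₁ (x : E) : ℝ := ∫ y, H.marginal₂ μ x y ∂μ

/-- The expectation of `H (X, Y, Z)` for independent `X, Y, Z` of law `μ`. -/
def mean : ℝ := ∫ x, H.marginal₁ μ x ∂μ

/-- The second moment of `marginal₂`, which controls the lower-order part of the variance of the
U-statistic of `H`. -/
def energy : ℝ := ∫ x, ∫ y, H.marginal₂ μ x y ^ 2 ∂μ ∂μ

/-- The first component of the Hoeffding decomposition of `H`. -/
def hoeffding₁ (x : E) : ℝ := H.marginal₁ μ x - H.mean μ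

/-- The second component of the Hoeffding decomposition of `H`. -/
def hoeffding₂ (x y : E) : ℝ :=
  H.marginal₂ μ x y - H.marginal₁ μ x - H.marginal₁ μ y + H.mean μ

/-- The third component of the Hoeffding decomposition of `H`. -/
def hoeffding₃ (x y z : E) : ℝ :=
  H x y z - H.marginal₂ μ x y - H.marginal₂ μ x z - H.marginal₂ μ y z
    + H.marginal₁ μ x + H.marginal₁ μ y + H.marginal₁ μ z - H.mean μ

lemma energy_nonneg : 0 ≤ H.energy μ :=
  integral_nonneg fun _ => integral_nonneg fun _ => sq_nonneg _

lemma marginal₂_comm (x y : E) : H.marginal₂ μ x y = H.marginal₂ μ y x := by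
  simp only [marginal₂, H.swap₁₂ x y]

lemma hoeffding₂_comm (x y : E) : H.hoeffding₂ μ x y = H.hoeffding₂ μ y x := by
  rw [hoeffding₂, hoeffding₂, H.marginal₂_comm μ x y]; ring

lemma hoeffding₃_swap₁₂ (x y z : E) : H.hoeffding₃ μ x y z = H.hoeffding₃ μ y x z := by
  rw [hoeffding₃, hoeffding₃, H.marginal₂_comm μ x y, H.swap₁₂ x y z]; ring

lemma hoeffding₃_swap₂₃ (x y z : E) : H.hoeffding₃ μ x y z = H.hoeffding₃ μ x z y := by
  rw [hoeffding₃, hoeffding₃, H.marginal₂_comm μ y z, H.swap₂₃ x y z]; ring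

section Measurability

variable {A : Type*} [MeasurableSpace A] {u v w : A → E}

@[fun_prop]
lemma boundedMeasurable_toFun (hu : Measurable u) (hv : Measurable v) (hw : Measurable w) :
    BoundedMeasurable fun a => H (u a) (v a) (w a) :=
  ⟨H.measurable_toFun.comp ((hu.prodMk hv).prodMk hw), 1, fun _ => H.abs_le_one _ _ _⟩

variable [IsProbabilityMeasure μ]

@[fun_prop]
lemma boundedMeasurable_marginal₂ (hu : Measurable u) (hv : Measurable v) :
    BoundedMeasurable fun a => H.marginal₂ μ (u a) (v a) := by
  unfold marginal₂; fun_prop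

@[fun_prop]
lemma boundedMeasurable_marginal₁ (hu : Measurable u) :
    BoundedMeasurable fun a => H.marginal₁ μ (u a) := by
  unfold marginal₁; fun_prop

@[fun_prop]
lemma boundedMeasurable_hoeffding₁ (hu : Measurable u) :
    BoundedMeasurable fun a => H.hoeffding₁ μ (u a) := by
  unfold hoeffding₁; fun_prop

@[fun_prop]
lemma boundedMeasurable_hoeffding₂ (hu : Measurable u) (hv : Measurable v) :
    BoundedMeasurable fun a => H.hoeffding₂ μ (u a) (v a) := by
  unfold hoeffding₂; fun_prop

@[fun_prop]
lemma boundedMeasurable_hoeffding₃ (hu : Measurable u) (hv : Measurable v) (hw : Measurable w) :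
    BoundedMeasurable fun a => H.hoeffding₃ μ (u a) (v a) (w a) := by
  unfold hoeffding₃; fun_prop

end Measurability

variable [IsProbabilityMeasure μ]

lemma abs_marginal₂_le_one (x y : E) : |H.marginal₂ μ x y| ≤ 1 :=
  abs_integral_le_of_abs_le μ (H.abs_le_one x y)

lemma abs_marginal₁_le_one (x : E) : |H.marginal₁ μ x| ≤ 1 :=
  abs_integral_le_of_abs_le μ (H.abs_marginal₂_le_one μ x)

lemma abs_mean_le_one : |H.mean μ| ≤ 1 :=
  abs_integral_le_of_abs_le μ (H.abs_marginal₁_le_one μ)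

lemma sq_hoeffding₃_le (x y z : E) : H.hoeffding₃ μ x y z ^ 2 ≤ 64 := by
  have habs : |H.hoeffding₃ μ x y z| ≤ 8 := by
    have h₀ := abs_le.1 (H.abs_le_one x y z)
    have hxy := abs_le.1 (H.abs_marginal₂_le_one μ x y)
    have hxz := abs_le.1 (H.abs_marginal₂_le_one μ x z)
    have hyz := abs_le.1 (H.abs_marginal₂_le_one μ y z)
    have hx := abs_le.1 (H.abs_marginal₁_le_one μ x)
    have hy := abs_le.1 (H.abs_marginal₁_le_one μ y)
    have hz := abs_le.1 (H.abs_marginal₁_le_one μ z)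
    have hm := abs_le.1 (H.abs_mean_le_one μ)
    rw [abs_le, hoeffding₃]
    constructor <;> linarith
  calc H.hoeffding₃ μ x y z ^ 2 ≤ 8 ^ 2 := sq_le_sq.2 (by simpa using habs)
    _ = 64 := by norm_num

lemma integral_hoeffding₁ : ∫ x, H.hoeffding₁ μ x ∂μ = 0 := by
  simp (disch := exact BoundedMeasurable.integrable (by fun_prop) _) only
    [hoeffding₁, integral_sub, integral_const, probReal_univ, one_smul]
  exact sub_self _

lemma integral_hoeffding₂ (x : E) : ∫ y, H.hoeffding₂ μ x y ∂μ = 0 := by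
  simp (disch := exact BoundedMeasurable.integrable (by fun_prop) _) only
    [hoeffding₂, integral_add, integral_sub, integral_const, probReal_univ, one_smul]
  simp only [mean, marginal₁]
  ring

lemma integral_hoeffding₃ (x y : E) : ∫ z, H.hoeffding₃ μ x y z ∂μ = 0 := by
  simp (disch := exact BoundedMeasurable.integrable (by fun_prop) _) only
    [hoeffding₃, integral_add, integral_sub, integral_const, probReal_univ, one_smul]
  simp only [mean, marginal₁, marginal₂]
  ring

lemma energy_le_one : H.energy μ ≤ 1 := by
  refine (le_abs_self _).trans ?_
  refine abs_integral_le_of_abs_le μ fun x => abs_integral_le_of_abs_le μ fun y => ?_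
  rw [abs_of_nonneg (sq_nonneg _), sq_le_one_iff_abs_le_one]
  exact H.abs_marginal₂_le_one μ x y

lemma integral_sq_marginal₁_le : ∫ x, H.marginal₁ μ x ^ 2 ∂μ ≤ H.energy μ :=
  integral_mono (BoundedMeasurable.integrable (by fun_prop) μ)
    (BoundedMeasurable.integrable (by fun_prop) μ)
    fun _ => BoundedMeasurable.sq_integral_le (by fun_prop) μ

lemma sq_mean_le : H.mean μ ^ 2 ≤ H.energy μ :=
  (BoundedMeasurable.sq_integral_le (by fun_prop) μ).trans (H.integral_sq_marginal₁_le μ)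

lemma integral_sq_hoeffding₁_le : ∫ x, H.hoeffding₁ μ x ^ 2 ∂μ ≤ H.energy μ := by
  have hvar : ∫ x, H.hoeffding₁ μ x ^ 2 ∂μ = ∫ x, H.marginal₁ μ x ^ 2 ∂μ - H.mean μ ^ 2 :=
    BoundedMeasurable.integral_sub_integral_sq (by fun_prop) μ
  linarith [H.integral_sq_marginal₁_le μ, sq_nonneg (H.mean μ)]

lemma integral_sq_hoeffding₂_le :
    ∫ x, ∫ y, H.hoeffding₂ μ x y ^ 2 ∂μ ∂μ ≤ 16 * H.energy μ := by
  have hsq : ∀ x y, H.hoeffding₂ μ x y ^ 2 ≤ 4 * H.marginal₂ μ x y ^ 2 + 4 * H.marginal₁ μ x ^ 2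
      + 4 * H.marginal₁ μ y ^ 2 + 4 * H.mean μ ^ 2 := fun x y => by
    unfold hoeffding₂
    nlinarith [sq_nonneg (H.marginal₂ μ x y + H.marginal₁ μ x),
      sq_nonneg (H.marginal₂ μ x y + H.marginal₁ μ y), sq_nonneg (H.marginal₂ μ x y - H.mean μ),
      sq_nonneg (H.marginal₁ μ x - H.marginal₁ μ y), sq_nonneg (H.marginal₁ μ x + H.mean μ),
      sq_nonneg (H.marginal₁ μ y + H.mean μ)]
  have hle : ∫ x, ∫ y, H.hoeffding₂ μ x y ^ 2 ∂μ ∂μ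
      ≤ ∫ x, ∫ y, (4 * H.marginal₂ μ x y ^ 2 + 4 * H.marginal₁ μ x ^ 2
        + 4 * H.marginal₁ μ y ^ 2 + 4 * H.mean μ ^ 2) ∂μ ∂μ :=
    integral_mono (BoundedMeasurable.integrable (by fun_prop) μ)
      (BoundedMeasurable.integrable (by fun_prop) μ) fun x =>
      integral_mono (BoundedMeasurable.integrable (by fun_prop) μ)
        (BoundedMeasurable.integrable (by fun_prop) μ) (hsq x)
  simp (disch := exact BoundedMeasurable.integrable (by fun_prop) _) only
    [integral_add, integral_const_mul, integral_const, probReal_univ, one_smul] at hle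
  have henergy : ∫ x, ∫ y, H.marginal₂ μ x y ^ 2 ∂μ ∂μ = H.energy μ := rfl
  linarith [H.integral_sq_marginal₁_le μ, H.sq_mean_le μ]

end SymmKernel

lemma card_filter_triple_subset_le {ι : Type*} [Fintype ι] [DecidableEq ι] (s : Finset ι) :
    (Finset.univ.filter fun T : ι × ι × ι => {T.1, T.2.1, T.2.2} ⊆ s).card ≤ s.card ^ 3 := by
  calc (Finset.univ.filter fun T : ι × ι × ι => {T.1, T.2.1, T.2.2} ⊆ s).card
      ≤ (s ×ˢ s ×ˢ s).card := Finset.card_le_card fun T hT => by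
        simpa [Finset.insert_subset_iff] using hT
    _ = s.card ^ 3 := by simp only [Finset.card_product]; ring

lemma card_filter_pair_subset_le {ι : Type*} [Fintype ι] [DecidableEq ι] (s : Finset ι) :
    (Finset.univ.filter fun T : ι × ι => {T.1, T.2} ⊆ s).card ≤ s.card ^ 2 := by
  calc (Finset.univ.filter fun T : ι × ι => {T.1, T.2} ⊆ s).card
      ≤ (s ×ˢ s).card := Finset.card_le_card fun T hT => by
        simpa [Finset.insert_subset_iff] using hT
    _ = s.card ^ 2 := by simp only [Finset.card_product]; ring

namespace SymmKernel

variable {E : Type*} [MeasurableSpace E] (H : SymmKernel E) (μ : Measure E) {n : ℕ}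

/-- The U-statistic of the kernel `H`, summed over ordered triples and without normalization. -/
def uStatistic (X : Fin n → E) : ℝ := distinctTripleSum fun i j k => H (X i) (X j) (X k)

lemma uStatistic_eq (X : Fin n → E) :
    H.uStatistic X = distinctTripleSum (fun i j k => H.hoeffding₃ μ (X i) (X j) (X k))
      + 3 * (n - 2) * distinctPairSum (fun i j => H.hoeffding₂ μ (X i) (X j))
      + 3 * ((n - 1) * (n - 2)) * ∑ i, H.hoeffding₁ μ (X i)
      + n * (n - 1) * (n - 2) * H.mean μ := by
  have hdecomp : ∀ i j k, H (X i) (X j) (X k) = H.hoeffding₃ μ (X i) (X j) (X k)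
      + H.hoeffding₂ μ (X i) (X j) + H.hoeffding₂ μ (X i) (X k) + H.hoeffding₂ μ (X k) (X j)
      + H.hoeffding₁ μ (X i) + H.hoeffding₁ μ (X j) + H.hoeffding₁ μ (X k) + H.mean μ := by
    intro i j k
    unfold hoeffding₃ hoeffding₂ hoeffding₁
    rw [H.marginal₂_comm μ (X k) (X j)]; ring
  have hpair₁₃ : distinctTripleSum (fun i _ k => H.hoeffding₂ μ (X i) (X k))
      = distinctTripleSum (fun i j _ => H.hoeffding₂ μ (X i) (X j)) :=
    distinctTripleSum_swap₂₃ fun i j _ => H.hoeffding₂ μ (X i) (X j)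
  have hpair₃₂ : distinctTripleSum (fun _ j k => H.hoeffding₂ μ (X k) (X j))
      = distinctTripleSum (fun i j _ => H.hoeffding₂ μ (X i) (X j)) := by
    simp only [H.hoeffding₂_comm μ (X _) (X _), ← hpair₁₃]
    exact distinctTripleSum_swap₁₂ fun i _ k => H.hoeffding₂ μ (X i) (X k)
  have hpoint₂ : distinctTripleSum (fun _ j _ => H.hoeffding₁ μ (X j))
      = distinctTripleSum (fun i _ _ => H.hoeffding₁ μ (X i)) :=
    distinctTripleSum_swap₁₂ fun i _ _ => H.hoeffding₁ μ (X i)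
  have hpoint₃ : distinctTripleSum (fun _ _ k => H.hoeffding₁ μ (X k))
      = distinctTripleSum (fun i _ _ => H.hoeffding₁ μ (X i)) :=
    (distinctTripleSum_swap₂₃ fun _ j _ => H.hoeffding₁ μ (X j)).trans hpoint₂
  have hpoint := distinctTripleSum_of_one fun i : Fin n => H.hoeffding₁ μ (X i)
  have hconst := distinctTripleSum_of_one fun _ : Fin n => H.mean μ
  simp only [uStatistic, hdecomp, distinctTripleSum_add, hpair₁₃, hpair₃₂, hpoint₂, hpoint₃,
    hpoint, hconst]
  simp only [distinctTripleSum_of_two, Fintype.card_fin, Finset.sum_const, Finset.card_univ,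
    nsmul_eq_mul]
  ring

variable [IsProbabilityMeasure μ]

@[fun_prop]
lemma boundedMeasurable_uStatistic {A : Type*} [MeasurableSpace A] {u : A → Fin n → E}
    (hu : Measurable u) : BoundedMeasurable fun a => H.uStatistic (u a) := by
  unfold uStatistic
  fun_prop

lemma integral_hoeffding₃_update_eq_zero {i j k a : Fin n} (hij : i ≠ j) (hik : i ≠ k)
    (hjk : j ≠ k) (ha : a ∈ ({i, j, k} : Finset (Fin n))) (X : Fin n → E) :
    ∫ x, H.hoeffding₃ μ (Function.update X a x i) (Function.update X a x j)
      (Function.update X a x k) ∂μ = 0 := by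
  simp only [Finset.mem_insert, Finset.mem_singleton] at ha
  obtain rfl | rfl | rfl := ha
  · simp only [Function.update_self, Function.update_of_ne hij.symm,
      Function.update_of_ne hik.symm, H.hoeffding₃_swap₁₂ μ _ (X j),
      H.hoeffding₃_swap₂₃ μ _ _ (X k)]
    exact H.integral_hoeffding₃ μ (X j) (X k)
  · simp only [Function.update_self, Function.update_of_ne hij, Function.update_of_ne hjk.symm,
      H.hoeffding₃_swap₂₃ μ _ _ (X k)]
    exact H.integral_hoeffding₃ μ (X i) (X k)
  · simp only [Function.update_self, Function.update_of_ne hik, Function.update_of_ne hjk]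
    exact H.integral_hoeffding₃ μ (X i) (X j)

lemma integral_sq_distinctTripleSum_hoeffding₃_le :
    ∫ X, distinctTripleSum (fun i j k : Fin n => H.hoeffding₃ μ (X i) (X j) (X k)) ^ 2
      ∂Measure.pi (fun _ => μ) ≤ 1728 * (n : ℝ) ^ 3 := by
  have hmoment := integral_sum_sq_le_of_degenerate (fun _ : Fin n => μ)
    (fun (T : Fin n × Fin n × Fin n) X => if T.1 ≠ T.2.1 ∧ T.1 ≠ T.2.2 ∧ T.2.1 ≠ T.2.2 then
      H.hoeffding₃ μ (X T.1) (X T.2.1) (X T.2.2) else 0)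
    (fun T => {T.1, T.2.1, T.2.2}) (V := 64) (c := 27) (fun T => by fun_prop)
    (fun T a ha X x => ?_) (fun T a ha X => ?_) (fun T => ?_) (fun T => ?_)
  · simp only [Fintype.sum_prod_type, Fintype.card_prod, Fintype.card_fin] at hmoment
    refine hmoment.trans_eq ?_
    push_cast
    ring
  · simp only [Finset.mem_insert, Finset.mem_singleton, not_or] at ha
    simp only [Function.update_of_ne (Ne.symm ha.1), Function.update_of_ne (Ne.symm ha.2.1),
      Function.update_of_ne (Ne.symm ha.2.2)]
  · by_cases hT : T.1 ≠ T.2.1 ∧ T.1 ≠ T.2.2 ∧ T.2.1 ≠ T.2.2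
    · simpa only [if_pos hT] using H.integral_hoeffding₃_update_eq_zero μ hT.1 hT.2.1 hT.2.2 ha X
    · simp only [if_neg hT, integral_zero]
  · refine (le_abs_self _).trans (abs_integral_le_of_abs_le _ fun X => ?_)
    rw [abs_of_nonneg (sq_nonneg _)]
    split_ifs
    · exact H.sq_hoeffding₃_le μ _ _ _
    · norm_num
  · have hcard : ({T.1, T.2.1, T.2.2} : Finset (Fin n)).card ^ 3 ≤ 3 ^ 3 :=
      Nat.pow_le_pow_left Finset.card_le_three 3
    exact_mod_cast (card_filter_triple_subset_le _).trans hcard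

lemma integral_sq_distinctPairSum_hoeffding₂_le :
    ∫ X, distinctPairSum (fun i j : Fin n => H.hoeffding₂ μ (X i) (X j)) ^ 2
      ∂Measure.pi (fun _ => μ) ≤ 64 * (n : ℝ) ^ 2 * H.energy μ := by
  have hmoment := integral_sum_sq_le_of_degenerate (fun _ : Fin n => μ)
    (fun (T : Fin n × Fin n) X => if T.1 ≠ T.2 then H.hoeffding₂ μ (X T.1) (X T.2) else 0)
    (fun T => {T.1, T.2}) (V := 16 * H.energy μ) (c := 4) (fun T => by fun_prop)
    (fun T a ha X x => ?_) (fun T a ha X => ?_) (fun T => ?_) (fun T => ?_)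
  · simp only [Fintype.sum_prod_type, Fintype.card_prod, Fintype.card_fin] at hmoment
    refine hmoment.trans_eq ?_
    push_cast
    ring
  · simp only [Finset.mem_insert, Finset.mem_singleton, not_or] at ha
    simp only [Function.update_of_ne (Ne.symm ha.1), Function.update_of_ne (Ne.symm ha.2)]
  · by_cases hT : T.1 ≠ T.2
    · simp only [if_pos hT]
      simp only [Finset.mem_insert, Finset.mem_singleton] at ha
      obtain rfl | rfl := ha
      · simp only [Function.update_self, Function.update_of_ne hT.symm,
          H.hoeffding₂_comm μ _ (X T.2)]
        exact H.integral_hoeffding₂ μ (X T.2)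
      · simp only [Function.update_self, Function.update_of_ne hT]
        exact H.integral_hoeffding₂ μ (X T.1)
    · simp only [if_neg hT, integral_zero]
  · by_cases hT : T.1 ≠ T.2
    · simp only [if_pos hT]
      rw [integral_pi_eval_pair (fun _ => μ) hT (f := fun x y => H.hoeffding₂ μ x y ^ 2)
        (by fun_prop)]
      exact H.integral_sq_hoeffding₂_le μ
    · simpa [hT] using H.energy_nonneg μ
  · have hcard : ({T.1, T.2} : Finset (Fin n)).card ^ 2 ≤ 2 ^ 2 :=
      Nat.pow_le_pow_left Finset.card_le_two 2
    exact_mod_cast (card_filter_pair_subset_le _).trans hcard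

lemma integral_sq_sum_hoeffding₁_le :
    ∫ X, (∑ i : Fin n, H.hoeffding₁ μ (X i)) ^ 2 ∂Measure.pi (fun _ => μ)
      ≤ n * H.energy μ := by
  have hmoment := integral_sum_sq_le_of_degenerate (fun _ : Fin n => μ)
    (fun (i : Fin n) X => H.hoeffding₁ μ (X i)) (fun i => {i}) (V := H.energy μ) (c := 1)
    (fun i => by fun_prop) (fun i a ha X x => ?_) (fun i a ha X => ?_) (fun i => ?_)
    (fun i => by simp [Finset.filter_eq'])
  · simpa using hmoment
  · rw [Finset.mem_singleton] at ha
    rw [Function.update_of_ne (Ne.symm ha)]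
  · obtain rfl := Finset.mem_singleton.1 ha
    simp only [Function.update_self, H.integral_hoeffding₁ μ]
  · have hsq : BoundedMeasurable fun x => H.hoeffding₁ μ x ^ 2 := by fun_prop
    exact (integral_comp_eval (μ := fun _ => μ) hsq.measurable.aestronglyMeasurable).trans_le
      (H.integral_sq_hoeffding₁_le μ)

lemma integral_sq_uStatistic_sub_projection_le (hn : 1 ≤ n) :
    ∫ X, (H.uStatistic X - n * (n - 1) * (n - 2) * H.mean μ
        - 3 * ((n - 1) * (n - 2)) * ∑ i : Fin n, H.hoeffding₁ μ (X i)) ^ 2 ∂Measure.pi (fun _ => μ)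
      ≤ 5000 * ((n : ℝ) ^ 4 * H.energy μ + (n : ℝ) ^ 3) := by
  have hrest : ∀ X : Fin n → E, H.uStatistic X - n * (n - 1) * (n - 2) * H.mean μ
      - 3 * ((n - 1) * (n - 2)) * ∑ i, H.hoeffding₁ μ (X i)
      = distinctTripleSum (fun i j k => H.hoeffding₃ μ (X i) (X j) (X k))
        + 3 * (n - 2) * distinctPairSum (fun i j => H.hoeffding₂ μ (X i) (X j)) :=
    fun X => by rw [H.uStatistic_eq μ X]; ring
  have hn' : (1 : ℝ) ≤ n := by exact_mod_cast hn
  have hcoef : (3 * ((n : ℝ) - 2)) ^ 2 ≤ 9 * (n : ℝ) ^ 2 := by nlinarith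
  have hpair := mul_le_mul hcoef (H.integral_sq_distinctPairSum_hoeffding₂_le μ (n := n))
    (integral_nonneg fun X => sq_nonneg _) (by positivity)
  have henergy := H.energy_nonneg μ
  have hpos : 0 ≤ (n : ℝ) ^ 4 * H.energy μ := by positivity
  have hpos' : 0 ≤ (n : ℝ) ^ 3 := by positivity
  simp only [hrest]
  refine (BoundedMeasurable.integral_add_sq_le (by fun_prop) (by fun_prop) _).trans ?_
  simp only [mul_pow _ (distinctPairSum _), integral_const_mul]
  linarith [H.integral_sq_distinctTripleSum_hoeffding₃_le μ (n := n)]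

lemma integral_sq_uStatistic_sub_mean_le (hn : 1 ≤ n) :
    ∫ X : Fin n → E, (H.uStatistic X - n * (n - 1) * (n - 2) * H.mean μ) ^ 2
        ∂Measure.pi (fun _ => μ)
      ≤ 11000 * ((n : ℝ) ^ 5 * H.energy μ + (n : ℝ) ^ 3) := by
  have hn' : (1 : ℝ) ≤ n := by exact_mod_cast hn
  have hcoef : (3 * (((n : ℝ) - 1) * (n - 2))) ^ 2 ≤ 9 * (n : ℝ) ^ 4 := by
    have h₁ : ((n : ℝ) - 1) ^ 2 ≤ n ^ 2 := by nlinarith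
    have h₂ : ((n : ℝ) - 2) ^ 2 ≤ n ^ 2 := by nlinarith
    calc (3 * (((n : ℝ) - 1) * (n - 2))) ^ 2 = 9 * (((n : ℝ) - 1) ^ 2 * (n - 2) ^ 2) := by ring
      _ ≤ 9 * ((n : ℝ) ^ 2 * n ^ 2) := by gcongr
      _ = 9 * (n : ℝ) ^ 4 := by ring
  have hpoint := mul_le_mul hcoef (H.integral_sq_sum_hoeffding₁_le μ (n := n))
    (integral_nonneg fun X => sq_nonneg _) (by positivity)
  have henergy := H.energy_nonneg μ
  have hpow : (n : ℝ) ^ 4 * H.energy μ ≤ (n : ℝ) ^ 5 * H.energy μ := by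
    gcongr
    norm_num
  have hpos : 0 ≤ (n : ℝ) ^ 3 := by positivity
  have hpos' : 0 ≤ (n : ℝ) ^ 5 * H.energy μ := by positivity
  have hle := BoundedMeasurable.integral_add_sq_le
    (f := fun X : Fin n → E => H.uStatistic X - n * (n - 1) * (n - 2) * H.mean μ
      - 3 * ((n - 1) * (n - 2)) * ∑ i, H.hoeffding₁ μ (X i))
    (g := fun X => 3 * ((n - 1) * (n - 2)) * ∑ i, H.hoeffding₁ μ (X i))
    (by fun_prop) (by fun_prop) (Measure.pi fun _ => μ)
  simp only [sub_add_cancel, mul_pow _ (∑ i, H.hoeffding₁ μ _), integral_const_mul] at hle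
  linarith [H.integral_sq_uStatistic_sub_projection_le μ hn]

end SymmKernel

/-- The indicator of `P` centered at the edge probability `p`. -/
def centeredInd (p : ℝ) (P : Prop) : ℝ := (if P then 1 else 0) - p

lemma abs_centeredInd_le_one {p : ℝ} (hp : p ∈ Set.Icc (0 : ℝ) 1) (P : Prop) :
    |centeredInd p P| ≤ 1 := by
  obtain ⟨hp₀, hp₁⟩ := hp
  unfold centeredInd
  split_ifs <;> rw [abs_le] <;> constructor <;> linarith

lemma boundedMeasurable_centeredInd {A : Type*} [MeasurableSpace A] (p : ℝ) {P : A → Prop}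
    (hP : MeasurableSet {a | P a}) : BoundedMeasurable fun a => centeredInd p (P a) := by
  refine ⟨(Measurable.ite hP measurable_const measurable_const).sub_const p, 1 + |p|, fun a => ?_⟩
  refine (abs_sub _ _).trans (add_le_add_left ?_ _)
  split_ifs <;> simp

lemma integral_centeredInd {A : Type*} [MeasurableSpace A] (μ : Measure A)
    [IsProbabilityMeasure μ] (p : ℝ) {P : A → Prop} (hP : MeasurableSet {a | P a}) :
    ∫ a, centeredInd p (P a) ∂μ = μ.real {a | P a} - p := by
  have hind : (fun a => if P a then (1 : ℝ) else 0) = {a | P a}.indicator 1 := by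
    ext a; simp [Set.indicator_apply]
  have hint : Integrable (fun a => if P a then (1 : ℝ) else 0) μ :=
    hind ▸ (integrable_const 1).indicator hP
  simp only [centeredInd]
  rw [integral_sub hint (integrable_const p), hind, integral_indicator_one hP, integral_const,
    probReal_univ, one_smul]

lemma signedTriangles_fromRel (p : ℝ) {n : ℕ} {r : Fin n → Fin n → Prop}
    (hr : ∀ i j, r i j ↔ r j i) :
    signedTriangles p (SimpleGraph.fromRel r) = (1 / 6) * distinctTripleSum fun i j k =>
      centeredInd p (r i j) * centeredInd p (r i k) * centeredInd p (r j k) := by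
  have hadj : ∀ i j, i ≠ j → adjInd (SimpleGraph.fromRel r) i j - p = centeredInd p (r i j) := by
    intro i j hij
    simp only [adjInd, centeredInd, SimpleGraph.fromRel_adj, hij, ← hr i j, or_self, ne_eq,
      not_false_eq_true, true_and]
  unfold signedTriangles distinctTripleSum
  congr 1
  refine Finset.sum_congr rfl fun i _ => Finset.sum_congr rfl fun j _ =>
    Finset.sum_congr rfl fun k _ => ?_
  split_ifs with h
  · rw [hadj i j h.1, hadj i k h.2.1, hadj j k h.2.2]
  · rfl

lemma abs_mul_mul_le_one {a b c : ℝ} (ha : |a| ≤ 1) (hb : |b| ≤ 1) (hc : |c| ≤ 1) :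
    |a * b * c| ≤ 1 := by
  rw [abs_mul, abs_mul]
  exact mul_le_one₀ (mul_le_one₀ ha (abs_nonneg _) hb) (abs_nonneg _) hc

section InnerProductKernel

variable {d : ℕ}

lemma dotp_comm (x y : Fin d → ℝ) : dotp x y = dotp y x :=
  Finset.sum_congr rfl fun _ _ => mul_comm _ _

@[fun_prop]
lemma measurable_dotp {A : Type*} [MeasurableSpace A] {f g : A → Fin d → ℝ}
    (hf : Measurable f) (hg : Measurable g) : Measurable fun a => dotp (f a) (g a) := by
  unfold dotp
  fun_prop

/-- The centered edge variable of the geometric graph as a function of the two positions. -/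
def edgeKernel (p t : ℝ) (x y : Fin d → ℝ) : ℝ := centeredInd p (t ≤ dotp x y)

lemma edgeKernel_comm (p t : ℝ) (x y : Fin d → ℝ) : edgeKernel p t x y = edgeKernel p t y x := by
  rw [edgeKernel, edgeKernel, dotp_comm]

lemma abs_edgeKernel_le_one {p : ℝ} (hp : p ∈ Set.Icc (0 : ℝ) 1) (t : ℝ) (x y : Fin d → ℝ) :
    |edgeKernel p t x y| ≤ 1 :=
  abs_centeredInd_le_one hp _

@[fun_prop]
lemma boundedMeasurable_edgeKernel {A : Type*} [MeasurableSpace A] (p t : ℝ)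
    {f g : A → Fin d → ℝ} (hf : Measurable f) (hg : Measurable g) :
    BoundedMeasurable fun a => edgeKernel p t (f a) (g a) :=
  boundedMeasurable_centeredInd p (measurableSet_le measurable_const (measurable_dotp hf hg))

/-- The signed triangle kernel of the geometric graph: the product of the three centered edge
variables. -/
def triangleKernel {p : ℝ} (hp : p ∈ Set.Icc (0 : ℝ) 1) (t : ℝ) (d : ℕ) :
    SymmKernel (Fin d → ℝ) where
  toFun x y z := edgeKernel p t x y * edgeKernel p t x z * edgeKernel p t y z
  measurable_toFun := BoundedMeasurable.measurable (by fun_prop)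
  abs_le_one x y z := abs_mul_mul_le_one (abs_edgeKernel_le_one hp t x y)
    (abs_edgeKernel_le_one hp t x z) (abs_edgeKernel_le_one hp t y z)
  swap₁₂ x y z := by rw [edgeKernel_comm p t x y]; ring
  swap₂₃ x y z := by rw [edgeKernel_comm p t y z]; ring

end InnerProductKernel

section Measurability

variable {n : ℕ}

lemma measurable_fromRel {A : Type*} [MeasurableSpace A] (R : A → Fin n → Fin n → Prop)
    (hR : ∀ i j, MeasurableSet {a | R a i j}) :
    Measurable fun a => SimpleGraph.fromRel (R a) := by
  refine measurable_to_countable' fun G => ?_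
  have hpre : (fun a => SimpleGraph.fromRel (R a)) ⁻¹' {G}
      = ⋂ i, ⋂ j, {a | (i ≠ j ∧ (R a i j ∨ R a j i)) ↔ G.Adj i j} := by
    ext a
    simp only [Set.mem_preimage, Set.mem_singleton_iff, Set.mem_iInter, Set.mem_ofPred_eq,
      SimpleGraph.ext_iff, funext_iff, SimpleGraph.fromRel_adj, eq_iff_iff]
  rw [hpre]
  refine .iInter fun i => .iInter fun j => ?_
  have hadj : MeasurableSet {a | i ≠ j ∧ (R a i j ∨ R a j i)} :=
    (MeasurableSet.const _).inter ((hR i j).union (hR j i))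
  by_cases hG : G.Adj i j
  · simpa only [hG, iff_true] using hadj
  · simp only [hG, iff_false]
    exact hadj.compl

lemma measurable_erGraph_fromRel (p : ℝ) :
    Measurable fun x : Sym2 (Fin n) → ℝ => SimpleGraph.fromRel fun i j => x s(i, j) ≤ p :=
  measurable_fromRel _ fun _ _ => measurableSet_le (measurable_pi_apply _) measurable_const

lemma measurable_geomGraph_fromRel (d : ℕ) (t : ℝ) :
    Measurable fun X : Fin n → Fin d → ℝ => SimpleGraph.fromRel fun i j => t ≤ dotp (X i) (X j) :=
  measurable_fromRel _ fun _ _ => measurableSet_le measurable_const (by fun_prop)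

lemma measurable_signedTriangles (p : ℝ) : Measurable (signedTriangles (n := n) p) :=
  measurable_from_top

end Measurability

instance isProbabilityMeasure_volume_Icc :
    IsProbabilityMeasure (volume.restrict (Set.Icc (0 : ℝ) 1)) :=
  ⟨by simp⟩

instance isProbabilityMeasure_gaussPi (d : ℕ) (α : Fin d → ℝ) :
    IsProbabilityMeasure (gaussPi d α) :=
  inferInstanceAs (IsProbabilityMeasure (Measure.pi _))

instance isProbabilityMeasure_sampleMeasure (n d : ℕ) (α : Fin d → ℝ) :
    IsProbabilityMeasure (sampleMeasure n d α) :=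
  inferInstanceAs (IsProbabilityMeasure (Measure.pi _))

instance isProbabilityMeasure_geomGraph (n d : ℕ) (α : Fin d → ℝ) (t : ℝ) :
    IsProbabilityMeasure (geomGraph n d α t) :=
  Measure.isProbabilityMeasure_map (measurable_geomGraph_fromRel d t).aemeasurable

instance isProbabilityMeasure_erGraph (n : ℕ) (p : ℝ) : IsProbabilityMeasure (erGraph n p) :=
  Measure.isProbabilityMeasure_map (measurable_erGraph_fromRel p).aemeasurable

lemma geomGraph_real_preimage_signedTriangles {p : ℝ} (hp : p ∈ Set.Icc (0 : ℝ) 1) (n d : ℕ)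
    (α : Fin d → ℝ) (t : ℝ) (s : Set ℝ) :
    (geomGraph n d α t).real (signedTriangles p ⁻¹' s)
      = (sampleMeasure n d α).real {X | (1 / 6) * (triangleKernel hp t d).uStatistic X ∈ s} := by
  rw [geomGraph, map_measureReal_apply (measurable_geomGraph_fromRel d t) trivial]
  congr 1
  ext X
  rw [Set.mem_preimage, Set.mem_preimage, signedTriangles_fromRel p fun i j => by rw [dotp_comm]]
  rfl

section ErdosRenyi

/-- The signed triangle count of the Erdős–Rényi graph, up to the factor `1 / 6`, as a function of
the uniform variables attached to the edges. -/
def erTriangleSum {n : ℕ} (p : ℝ) (x : Sym2 (Fin n) → ℝ) : ℝ := distinctTripleSum fun i j k =>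
  centeredInd p (x s(i, j) ≤ p) * centeredInd p (x s(i, k) ≤ p) * centeredInd p (x s(j, k) ≤ p)

lemma erGraph_real_preimage_signedTriangles (n : ℕ) (p : ℝ) (s : Set ℝ) :
    (erGraph n p).real (signedTriangles p ⁻¹' s)
      = (Measure.pi fun _ : Sym2 (Fin n) => volume.restrict (Set.Icc (0 : ℝ) 1)).real
        {x | (1 / 6) * erTriangleSum p x ∈ s} := by
  rw [erGraph, map_measureReal_apply (measurable_erGraph_fromRel p) trivial]
  congr 1
  ext x
  rw [Set.mem_preimage, Set.mem_preimage,
    signedTriangles_fromRel p fun i j => by rw [Sym2.eq_swap]]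
  rfl

@[fun_prop]
lemma boundedMeasurable_centeredInd_eval_le {ι : Type*} (p : ℝ) (e : ι) :
    BoundedMeasurable fun x : ι → ℝ => centeredInd p (x e ≤ p) :=
  boundedMeasurable_centeredInd p (measurableSet_le (measurable_pi_apply e) measurable_const)

lemma boundedMeasurable_erTriangleSum (n : ℕ) (p : ℝ) :
    BoundedMeasurable (erTriangleSum (n := n) p) := by
  unfold erTriangleSum
  fun_prop

lemma integral_centeredInd_uniform {p : ℝ} (hp : p ∈ Set.Icc (0 : ℝ) 1) :
    ∫ u in Set.Icc (0 : ℝ) 1, centeredInd p (u ≤ p) = 0 := by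
  have hinter : {u : ℝ | u ≤ p} ∩ Set.Icc 0 1 = Set.Icc 0 p := by
    ext u
    simp only [Set.mem_inter_iff, Set.mem_ofPred_eq, Set.mem_Icc]
    exact ⟨fun h => ⟨h.2.1, h.1⟩, fun h => ⟨h.2, h.1, h.2.trans hp.2⟩⟩
  have hmeas : MeasurableSet {u : ℝ | u ≤ p} := measurableSet_Iic
  rw [integral_centeredInd _ p hmeas, measureReal_restrict_apply hmeas, hinter]
  simp [hp.1]

lemma integral_erTriangle_update_eq_zero {p : ℝ} (hp : p ∈ Set.Icc (0 : ℝ) 1) {n : ℕ}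
    {i j k : Fin n} (hij : i ≠ j) (hik : i ≠ k) (hjk : j ≠ k) {e : Sym2 (Fin n)}
    (he : e ∈ ({s(i, j), s(i, k), s(j, k)} : Finset (Sym2 (Fin n)))) (x : Sym2 (Fin n) → ℝ) :
    ∫ u in Set.Icc (0 : ℝ) 1, centeredInd p (Function.update x e u s(i, j) ≤ p)
      * centeredInd p (Function.update x e u s(i, k) ≤ p)
      * centeredInd p (Function.update x e u s(j, k) ≤ p) = 0 := by
  have h₁₂ : s(i, j) ≠ s(i, k) := by simp only [ne_eq, Sym2.eq_iff]; grind
  have h₁₃ : s(i, j) ≠ s(j, k) := by simp only [ne_eq, Sym2.eq_iff]; grind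
  have h₂₃ : s(i, k) ≠ s(j, k) := by simp only [ne_eq, Sym2.eq_iff]; grind
  simp only [Finset.mem_insert, Finset.mem_singleton] at he
  obtain rfl | rfl | rfl := he <;>
    simp only [Function.update_self, Function.update_of_ne, ne_eq, h₁₂, h₁₃, h₂₃, h₁₂.symm,
      h₁₃.symm, h₂₃.symm, not_false_eq_true, integral_mul_const, integral_const_mul,
      integral_centeredInd_uniform hp, zero_mul, mul_zero]

lemma card_filter_triangle_subset_le {n : ℕ} (i j k : Fin n) :
    (Finset.univ.filter fun T : Fin n × Fin n × Fin n =>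
      ({s(T.1, T.2.1), s(T.1, T.2.2), s(T.2.1, T.2.2)} : Finset (Sym2 (Fin n)))
        ⊆ {s(i, j), s(i, k), s(j, k)}).card ≤ 27 := by
  have hcard : ({i, j, k} : Finset (Fin n)).card ^ 3 ≤ 3 ^ 3 :=
    Nat.pow_le_pow_left Finset.card_le_three 3
  refine (Finset.card_le_card fun T hT => ?_).trans ((card_filter_triple_subset_le _).trans hcard)
  simp only [Finset.mem_filter, Finset.mem_univ, true_and, Finset.insert_subset_iff,
    Finset.singleton_subset_iff, Finset.mem_insert, Finset.mem_singleton, Sym2.eq_iff] at hT ⊢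
  grind

lemma integral_sq_erTriangleSum_le {p : ℝ} (hp : p ∈ Set.Icc (0 : ℝ) 1) (n : ℕ) :
    ∫ x, erTriangleSum p x ^ 2
        ∂(Measure.pi fun _ : Sym2 (Fin n) => volume.restrict (Set.Icc (0 : ℝ) 1))
      ≤ 27 * (n : ℝ) ^ 3 := by
  have hmoment := integral_sum_sq_le_of_degenerate
    (fun _ : Sym2 (Fin n) => volume.restrict (Set.Icc (0 : ℝ) 1))
    (fun (T : Fin n × Fin n × Fin n) x => if T.1 ≠ T.2.1 ∧ T.1 ≠ T.2.2 ∧ T.2.1 ≠ T.2.2 then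
      centeredInd p (x s(T.1, T.2.1) ≤ p) * centeredInd p (x s(T.1, T.2.2) ≤ p)
        * centeredInd p (x s(T.2.1, T.2.2) ≤ p) else 0)
    (fun T => {s(T.1, T.2.1), s(T.1, T.2.2), s(T.2.1, T.2.2)}) (V := 1) (c := 27)
    (fun T => by fun_prop) (fun T e he x u => ?_) (fun T e he x => ?_) (fun T => ?_)
    (fun T => by exact_mod_cast card_filter_triangle_subset_le T.1 T.2.1 T.2.2)
  · simp only [Fintype.sum_prod_type, Fintype.card_prod, Fintype.card_fin] at hmoment
    refine hmoment.trans_eq ?_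
    push_cast
    ring
  · simp only [Finset.mem_insert, Finset.mem_singleton, not_or] at he
    simp only [Function.update_of_ne (Ne.symm he.1), Function.update_of_ne (Ne.symm he.2.1),
      Function.update_of_ne (Ne.symm he.2.2)]
  · by_cases hT : T.1 ≠ T.2.1 ∧ T.1 ≠ T.2.2 ∧ T.2.1 ≠ T.2.2
    · simpa only [if_pos hT] using integral_erTriangle_update_eq_zero hp hT.1 hT.2.1 hT.2.2 he x
    · simp only [if_neg hT, integral_zero]
  · refine (le_abs_self _).trans (abs_integral_le_of_abs_le _ fun x => ?_)
    rw [abs_of_nonneg (sq_nonneg _), sq_le_one_iff_abs_le_one]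
    split_ifs
    · exact abs_mul_mul_le_one (abs_centeredInd_le_one hp _) (abs_centeredInd_le_one hp _)
        (abs_centeredInd_le_one hp _)
    · norm_num

lemma erGraph_real_abs_signedTriangles_le {p : ℝ} (hp : p ∈ Set.Icc (0 : ℝ) 1) (n : ℕ) {a : ℝ}
    (ha : 0 < a) : (erGraph n p).real {G | a < |signedTriangles p G|} ≤ (n : ℝ) ^ 3 / a ^ 2 := by
  have hsum := boundedMeasurable_erTriangleSum n p
  have hpre : (erGraph n p).real {G | a < |signedTriangles p G|} = _ :=
    erGraph_real_preimage_signedTriangles n p {u | a < |u|}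
  rw [hpre]
  refine (measureReal_mono fun x hx => ?_).trans
    ((measureReal_le_abs_le_integral_sq_div (a := 6 * a) _ ((hsum.pow 2).integrable _)
    (by positivity)).trans ?_)
  · rw [Set.mem_ofPred_eq, Set.mem_ofPred_eq, abs_mul, abs_of_pos (by norm_num)] at hx
    rw [Set.mem_ofPred_eq]
    linarith
  · rw [div_le_div_iff₀ (by positivity) (by positivity)]
    have hmoment := integral_sq_erTriangleSum_le hp n
    have hcube : 0 ≤ (n : ℝ) ^ 3 := by positivity
    nlinarith [sq_nonneg a]

end ErdosRenyi

section TotalVariation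

variable {Ω : Type*} [MeasurableSpace Ω] (μ ν : Measure Ω) [IsProbabilityMeasure μ]
  [IsProbabilityMeasure ν]

lemma abs_toReal_sub_toReal_le_one (s : Set Ω) : |(μ s).toReal - (ν s).toReal| ≤ 1 :=
  abs_sub_le_of_nonneg_of_le measureReal_nonneg measureReal_le_one measureReal_nonneg
    measureReal_le_one

lemma tvDist_le_one : tvDist μ ν ≤ 1 :=
  have : Nonempty {s : Set Ω // MeasurableSet s} := ⟨∅, .empty⟩
  ciSup_le fun s => abs_toReal_sub_toReal_le_one μ ν s

lemma one_sub_sub_le_tvDist {s : Set Ω} (hs : MeasurableSet s) {ε δ : ℝ} (hμ : μ.real sᶜ ≤ ε)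
    (hν : ν.real s ≤ δ) : 1 - ε - δ ≤ tvDist μ ν := by
  have hbdd : BddAbove (Set.range fun s : {s : Set Ω // MeasurableSet s} =>
      |(μ s.1).toReal - (ν s.1).toReal|) :=
    ⟨1, Set.forall_mem_range.2 fun s => abs_toReal_sub_toReal_le_one μ ν s⟩
  calc 1 - ε - δ ≤ μ.real s - ν.real s := by
        rw [probReal_compl_eq_one_sub hs] at hμ
        linarith
    _ ≤ |(μ s).toReal - (ν s).toReal| := le_abs_self _
    _ ≤ tvDist μ ν := le_ciSup hbdd ⟨s, hs⟩

end TotalVariation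

lemma one_sub_sub_le_tvDist_signedTriangles {p : ℝ} (hp : p ∈ Set.Icc (0 : ℝ) 1) (n d : ℕ)
    (α : Fin d → ℝ) (t : ℝ) {a δ : ℝ} (ha : 0 < a)
    (hδ : (sampleMeasure n d α).real {X | |(triangleKernel hp t d).uStatistic X| ≤ a} ≤ δ) :
    1 - 36 * (n : ℝ) ^ 3 / a ^ 2 - δ ≤
      tvDist (Measure.map (signedTriangles p) (erGraph n p))
        (Measure.map (signedTriangles p) (geomGraph n d α t)) := by
  have hτ := measurable_signedTriangles (n := n) p
  have := Measure.isProbabilityMeasure_map (μ := erGraph n p) hτ.aemeasurable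
  have := Measure.isProbabilityMeasure_map (μ := geomGraph n d α t) hτ.aemeasurable
  have hs : MeasurableSet {u : ℝ | |u| ≤ a / 6} :=
    measurableSet_le measurable_norm measurable_const
  refine one_sub_sub_le_tvDist _ _ hs ?_ ?_
  · rw [map_measureReal_apply hτ hs.compl]
    have her := erGraph_real_abs_signedTriangles_le hp n (a := a / 6) (by positivity)
    simp only [Set.preimage_compl, ← not_le] at her ⊢
    refine her.trans_eq ?_
    field_simp
    norm_num
  · rw [map_measureReal_apply hτ hs, geomGraph_real_preimage_signedTriangles hp]
    refine (measureReal_mono fun X hX => ?_).trans hδ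
    rw [Set.mem_ofPred_eq, Set.mem_ofPred_eq, abs_mul, abs_of_pos (by norm_num)] at hX
    rw [Set.mem_ofPred_eq]
    linarith

section Anticoncentration

lemma gaussianPDFReal_le (m : ℝ) (v : ℝ≥0) (x : ℝ) :
    gaussianPDFReal m v x ≤ (√(2 * π * v))⁻¹ := by
  refine mul_le_of_le_one_right (by positivity) (exp_le_one_iff.2 ?_)
  exact div_nonpos_of_nonpos_of_nonneg (neg_nonpos.2 (sq_nonneg _)) (by positivity)

lemma gaussianReal_real_Icc_le (m : ℝ) {v : ℝ≥0} (hv : v ≠ 0) {a b : ℝ} (hab : a ≤ b) :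
    (gaussianReal m v).real (Set.Icc a b) ≤ (b - a) * (√(2 * π * v))⁻¹ := by
  rw [Measure.real, gaussianReal_apply_eq_integral m hv,
    ENNReal.toReal_ofReal (integral_nonneg fun x => gaussianPDFReal_nonneg _ _ _)]
  calc ∫ x in Set.Icc a b, gaussianPDFReal m v x
      ≤ ∫ _ in Set.Icc a b, (√(2 * π * v))⁻¹ :=
        setIntegral_mono (integrable_gaussianPDFReal m v).integrableOn
          (integrableOn_const (by simp)) fun x => gaussianPDFReal_le m v x
    _ = (b - a) * (√(2 * π * v))⁻¹ := by simp [hab]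

lemma measureReal_closedBall_le_two_mul_integral_exp (ν : Measure ℝ) [IsProbabilityMeasure ν]
    (b : ℝ) {L : ℝ} (hL : 0 < L) :
    ν.real (Metric.closedBall b L) ≤ 2 * ∫ x, rexp (-((x - b) / L) ^ 2 / 2) ∂ν := by
  rw [← integral_const_mul, ← integral_indicator_one Metric.isClosed_closedBall.measurableSet]
  refine integral_mono_of_nonneg (.of_forall fun x => Set.indicator_nonneg (by simp) _)
    (BoundedMeasurable.integrable ⟨by fun_prop, 2, fun x => ?_⟩ ν) (.of_forall fun x => ?_)
  · rw [abs_of_pos (by positivity)]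
    linarith [exp_le_one_iff.2 (show -((x - b) / L) ^ 2 / 2 ≤ 0 by
      linarith [sq_nonneg ((x - b) / L)])]
  · refine Set.indicator_le' (s := Metric.closedBall b L) (f := (1 : ℝ → ℝ))
      (g := fun x => 2 * rexp (-((x - b) / L) ^ 2 / 2)) (fun x hx => ?_)
      (fun x _ => by positivity) x
    rw [Metric.mem_closedBall, dist_eq] at hx
    have hle : ((x - b) / L) ^ 2 ≤ 1 := by
      rwa [sq_le_one_iff_abs_le_one, abs_div, abs_of_pos hL, div_le_one hL]
    simp only [Pi.one_apply]
    linarith [add_one_le_exp (-((x - b) / L) ^ 2 / 2)]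

/-- The Gaussian bump is the average of the characters `x ↦ exp(i g (x - b) / L)` over a standard
Gaussian `g`. -/
lemma integral_exp_neg_sq_div_two_le_integral_norm_charFun (ν : Measure ℝ)
    [IsProbabilityMeasure ν] (b L : ℝ) :
    ∫ x, rexp (-((x - b) / L) ^ 2 / 2) ∂ν ≤ ∫ g, ‖charFun ν (g / L)‖ ∂(gaussianReal 0 1) := by
  have hchar (x : ℝ) : ((rexp (-((x - b) / L) ^ 2 / 2) : ℝ) : ℂ)
      = ∫ g, Complex.exp (((x - b) / L : ℝ) * g * Complex.I) ∂(gaussianReal 0 1) := by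
    rw [← charFun_apply_real, charFun_gaussianReal]
    push_cast
    congr 1
    simp only [mul_zero, zero_mul, one_mul, zero_sub]
    ring
  have hint : Integrable (fun z : ℝ × ℝ => Complex.exp (((z.1 - b) / L : ℝ) * z.2 * Complex.I))
      (ν.prod (gaussianReal 0 1)) := by
    refine .of_bound (by fun_prop) 1 (.of_forall fun z => ?_)
    rw [← Complex.ofReal_mul, Complex.norm_exp_ofReal_mul_I]
  have hshift (g : ℝ) : ∫ x, Complex.exp (((x - b) / L : ℝ) * g * Complex.I) ∂ν
      = Complex.exp ((-(b * g / L) : ℝ) * Complex.I) * charFun ν (g / L) := by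
    rw [charFun_apply_real, ← integral_const_mul]
    refine integral_congr_ae (.of_forall fun x => ?_)
    simp only [← Complex.exp_add]
    congr 1
    push_cast
    ring
  calc ∫ x, rexp (-((x - b) / L) ^ 2 / 2) ∂ν
      = ‖∫ x, ((rexp (-((x - b) / L) ^ 2 / 2) : ℝ) : ℂ) ∂ν‖ := by
        rw [integral_complex_ofReal, Complex.norm_of_nonneg
          (integral_nonneg fun x => (exp_pos _).le)]
    _ = ‖∫ g, Complex.exp ((-(b * g / L) : ℝ) * Complex.I) * charFun ν (g / L)
          ∂(gaussianReal 0 1)‖ := by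
        simp only [hchar, ← hshift]
        rw [integral_integral_swap hint]
    _ ≤ ∫ g, ‖charFun ν (g / L)‖ ∂(gaussianReal 0 1) := by
        refine (norm_integral_le_integral_norm _).trans_eq ?_
        simp only [norm_mul, Complex.norm_exp_ofReal_mul_I, one_mul]

@[fun_prop]
lemma boundedMeasurable_cos {A : Type*} [MeasurableSpace A] {f : A → ℝ} (hf : Measurable f) :
    BoundedMeasurable fun x => Real.cos (f x) :=
  ⟨Real.measurable_cos.comp hf, 1, fun _ => abs_cos_le_one _⟩

@[fun_prop]
lemma boundedMeasurable_sin {A : Type*} [MeasurableSpace A] {f : A → ℝ} (hf : Measurable f) :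
    BoundedMeasurable fun x => Real.sin (f x) :=
  ⟨Real.measurable_sin.comp hf, 1, fun _ => abs_sin_le_one _⟩

variable {E : Type*} [MeasurableSpace E] (μ : Measure E) [IsProbabilityMeasure μ] {f : E → ℝ}

lemma sq_norm_charFun_map (hf : Measurable f) (θ : ℝ) :
    ‖charFun (μ.map f) θ‖ ^ 2 = ∫ x, ∫ y, Real.cos (θ * f x - θ * f y) ∂μ ∂μ := by
  have hchar : charFun (μ.map f) θ
      = (∫ x, Real.cos (θ * f x) ∂μ : ℝ) + (∫ x, Real.sin (θ * f x) ∂μ : ℝ) * Complex.I := by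
    rw [charFun_apply_real, integral_map hf.aemeasurable (by fun_prop),
      ← integral_complex_ofReal, ← integral_complex_ofReal, ← integral_mul_const,
      ← integral_add ((boundedMeasurable_cos (by fun_prop)).integrable μ).ofReal
        (((boundedMeasurable_sin (by fun_prop)).integrable μ).ofReal.mul_const _)]
    simp only [← Complex.ofReal_mul, Complex.exp_mul_I, Complex.ofReal_cos, Complex.ofReal_sin]
  rw [hchar, ← Complex.normSq_eq_norm_sq, Complex.normSq_add_mul_I]
  simp (disch := exact BoundedMeasurable.integrable (by fun_prop) _) only [Real.cos_sub,
    integral_add, integral_const_mul, integral_mul_const]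
  ring

lemma integral_integral_sub_sq (hf : BoundedMeasurable f) :
    ∫ x, ∫ y, (f x - f y) ^ 2 ∂μ ∂μ = 2 * Var[f; μ] := by
  rw [variance_eq_sub (hf.memLp 2 μ)]
  simp (disch := exact BoundedMeasurable.integrable (by fun_prop) _) only [sub_sq, integral_add,
    integral_sub, integral_const_mul, integral_mul_const, integral_const, probReal_univ, one_smul,
    Pi.pow_apply]
  ring

lemma cos_le_one_sub_sq_div_five {u : ℝ} (hu : |u| ≤ π) : Real.cos u ≤ 1 - (1 / 5) * u ^ 2 := by
  have hπ : 1 / 5 ≤ 2 / π ^ 2 := by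
    rw [le_div_iff₀ (by positivity)]
    nlinarith [Real.pi_pos, Real.pi_lt_d2]
  nlinarith [Real.cos_le_one_sub_mul_cos_sq hu, sq_nonneg u]

lemma sq_norm_charFun_map_le (hf : Measurable f) (hf₁ : ∀ x, |f x| ≤ 1) {θ : ℝ} (hθ : |θ| ≤ 1) :
    ‖charFun (μ.map f) θ‖ ^ 2 ≤ 1 - (2 / 5) * θ ^ 2 * Var[f; μ] := by
  have hfb : BoundedMeasurable f := ⟨hf, 1, hf₁⟩
  have hfb₂ : BoundedMeasurable fun z : E × E => f z.1 - f z.2 :=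
    (hfb.comp measurable_fst).sub (hfb.comp measurable_snd)
  have hangle (x y : E) : |θ * f x - θ * f y| ≤ π := by
    have hsub : |f x - f y| ≤ 2 := (abs_sub _ _).trans (by linarith [hf₁ x, hf₁ y])
    rw [← mul_sub, abs_mul]
    nlinarith [abs_nonneg (f x - f y), Real.pi_gt_three]
  calc ‖charFun (μ.map f) θ‖ ^ 2 = ∫ x, ∫ y, Real.cos (θ * f x - θ * f y) ∂μ ∂μ :=
        sq_norm_charFun_map μ hf θ
    _ ≤ ∫ x, ∫ y, (1 - (1 / 5) * θ ^ 2 * (f x - f y) ^ 2) ∂μ ∂μ := by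
        refine integral_mono (BoundedMeasurable.integrable (by fun_prop) μ)
          (BoundedMeasurable.integrable (by fun_prop) μ) fun x => ?_
        refine integral_mono (BoundedMeasurable.integrable (by fun_prop) μ)
          (BoundedMeasurable.integrable (by fun_prop) μ) fun y => ?_
        exact (cos_le_one_sub_sq_div_five (hangle x y)).trans_eq (by ring)
    _ = 1 - (2 / 5) * θ ^ 2 * Var[f; μ] := by
        simp (disch := exact BoundedMeasurable.integrable (by fun_prop) _) only [integral_sub,
          integral_const_mul, integral_const, probReal_univ, one_smul,
          integral_integral_sub_sq μ hfb]
        ring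

lemma norm_charFun_map_pow_le (hf : Measurable f) (hf₁ : ∀ x, |f x| ≤ 1) {θ : ℝ} (hθ : |θ| ≤ 1)
    (n : ℕ) : ‖charFun (μ.map f) θ‖ ^ n ≤ rexp (-(n * Var[f; μ] * θ ^ 2 / 5)) := by
  have hexp : ‖charFun (μ.map f) θ‖ ≤ rexp (-(Var[f; μ] * θ ^ 2 / 5)) := by
    refine le_of_sq_le_sq ?_ (exp_pos _).le
    rw [← exp_nat_mul]
    refine (sq_norm_charFun_map_le μ hf hf₁ hθ).trans ((le_of_eq ?_).trans (add_one_le_exp _))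
    push_cast
    ring
  refine (pow_le_pow_left₀ (norm_nonneg _) hexp n).trans_eq ?_
  rw [← exp_nat_mul]
  ring_nf

lemma charFun_map_sum_pi (hf : Measurable f) (n : ℕ) (θ : ℝ) :
    charFun ((Measure.pi fun _ : Fin n => μ).map fun X => ∑ i, f (X i)) θ
      = charFun (μ.map f) θ ^ n := by
  have hsum : Measurable fun X : Fin n → E => ∑ i, f (X i) := by fun_prop
  rw [charFun_apply_real, charFun_apply_real, integral_map hsum.aemeasurable (by fun_prop),
    integral_map hf.aemeasurable (by fun_prop), ← Fintype.card_fin n,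
    ← integral_fintype_prod_eq_pow, Fintype.card_fin n]
  refine integral_congr_ae (.of_forall fun X => ?_)
  simp only [← Complex.exp_sum, ← Finset.sum_mul, ← Finset.mul_sum, Complex.ofReal_sum]

lemma norm_charFun_map_pow_le_add_indicator (hf : Measurable f) (hf₁ : ∀ x, |f x| ≤ 1) {L η : ℝ}
    (hL : 0 < L) (hη : 0 < η) (n : ℕ) (g : ℝ) :
    ‖charFun (μ.map f) (g / L)‖ ^ n ≤ rexp (-(n * Var[f; μ] * η ^ 2 / (5 * L ^ 2)))
      + (Set.Icc (-η) η).indicator 1 g + {g | L ≤ |g|}.indicator 1 g := by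
  have := Measure.isProbabilityMeasure_map (μ := μ) hf.aemeasurable
  have hnorm : ‖charFun (μ.map f) (g / L)‖ ^ n ≤ 1 :=
    pow_le_one₀ (norm_nonneg _) (norm_charFun_le_one _)
  have hexp := exp_pos (-(n * Var[f; μ] * η ^ 2 / (5 * L ^ 2)))
  by_cases hgη : g ∈ Set.Icc (-η) η
  · rw [Set.indicator_of_mem hgη, Pi.one_apply]
    linarith [Set.indicator_nonneg (f := (1 : ℝ → ℝ)) (s := {g | L ≤ |g|}) (by simp) g]
  by_cases hgL : g ∈ {g | L ≤ |g|}
  · rw [Set.indicator_of_mem hgL, Set.indicator_of_notMem hgη, Pi.one_apply]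
    linarith
  rw [Set.indicator_of_notMem hgη, Set.indicator_of_notMem hgL, add_zero, add_zero]
  rw [Set.mem_Icc, ← abs_le, not_le] at hgη
  rw [Set.mem_ofPred_eq, not_le] at hgL
  have hθ : |g / L| ≤ 1 := by rw [abs_div, abs_of_pos hL, div_le_one hL]; exact hgL.le
  refine (norm_charFun_map_pow_le μ hf hf₁ hθ n).trans (exp_le_exp.2 (neg_le_neg ?_))
  have hsq : η ^ 2 ≤ g ^ 2 := sq_le_sq.2 (by rw [abs_of_pos hη]; exact hgη.le)
  have hvar := variance_nonneg f μ
  calc n * Var[f; μ] * η ^ 2 / (5 * L ^ 2) ≤ n * Var[f; μ] * g ^ 2 / (5 * L ^ 2) := by gcongr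
    _ = n * Var[f; μ] * (g / L) ^ 2 / 5 := by field_simp

lemma gaussianReal_real_Icc_symm_le {η : ℝ} (hη : 0 ≤ η) :
    (gaussianReal 0 1).real (Set.Icc (-η) η) ≤ η := by
  have hsqrt : (√(2 * π * (1 : ℝ≥0)))⁻¹ ≤ 2⁻¹ := by
    gcongr
    refine le_sqrt_of_sq_le ?_
    push_cast
    linarith [Real.pi_gt_three]
  refine (gaussianReal_real_Icc_le 0 one_ne_zero (by linarith)).trans ?_
  nlinarith

lemma gaussianReal_real_le_abs_le {L : ℝ} (hL : 0 < L) :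
    (gaussianReal 0 1).real {g | L ≤ |g|} ≤ 1 / L ^ 2 := by
  refine (measureReal_le_abs_le_integral_sq_div _
    (memLp_id_gaussianReal (μ := 0) (v := 1) 2).integrable_sq hL).trans_eq ?_
  have hvar := variance_id_gaussianReal (μ := 0) (v := 1)
  rw [variance_of_integral_eq_zero measurable_id.aemeasurable (by simp)] at hvar
  simp only [id] at hvar ⊢
  rw [hvar, NNReal.coe_one]

lemma measureReal_abs_sum_sub_le_le (hf : Measurable f) (hf₁ : ∀ x, |f x| ≤ 1) (n : ℕ) (b : ℝ)
    {L η : ℝ} (hL : 0 < L) (hη : 0 < η) :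
    (Measure.pi fun _ : Fin n => μ).real {X | |∑ i, f (X i) - b| ≤ L}
      ≤ 2 * (rexp (-(n * Var[f; μ] * η ^ 2 / (5 * L ^ 2))) + η + 1 / L ^ 2) := by
  have hsum : Measurable fun X : Fin n → E => ∑ i, f (X i) := by fun_prop
  have := Measure.isProbabilityMeasure_map (μ := Measure.pi fun _ : Fin n => μ) hsum.aemeasurable
  have hfar : MeasurableSet {g : ℝ | L ≤ |g|} := measurableSet_le measurable_const measurable_norm
  have hind {s : Set ℝ} (hs : MeasurableSet s) :
      Integrable (s.indicator (1 : ℝ → ℝ)) (gaussianReal 0 1) :=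
    (integrable_const (1 : ℝ)).indicator hs
  have hball := measureReal_closedBall_le_two_mul_integral_exp
    ((Measure.pi fun _ : Fin n => μ).map fun X => ∑ i, f (X i)) b hL
  rw [map_measureReal_apply hsum Metric.isClosed_closedBall.measurableSet] at hball
  refine hball.trans (mul_le_mul_of_nonneg_left ?_ zero_le_two)
  refine (integral_exp_neg_sq_div_two_le_integral_norm_charFun _ b L).trans ?_
  simp only [charFun_map_sum_pi μ hf, norm_pow]
  refine (integral_mono_of_nonneg (.of_forall fun g => by positivity)
    (((integrable_const _).add (hind measurableSet_Icc)).add (hind hfar))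
    (.of_forall (norm_charFun_map_pow_le_add_indicator μ hf hf₁ hL hη n))).trans ?_
  rw [integral_add' ((integrable_const _).add (hind measurableSet_Icc)) (hind hfar),
    integral_add' (integrable_const _) (hind measurableSet_Icc),
    integral_indicator_one measurableSet_Icc, integral_indicator_one hfar, integral_const,
    probReal_univ, one_smul]
  gcongr
  · exact gaussianReal_real_Icc_symm_le hη.le
  · exact gaussianReal_real_le_abs_le hL

end Anticoncentration

section DiagonalForm

variable {d : ℕ}

/-- The diagonal bilinear form with coefficients `c`. For `c = α` it is the covariance of
`⟨x, Z⟩` and `⟨y, Z⟩`, where `Z` has law `gaussPi d α`. -/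
def wdotp (c x y : Fin d → ℝ) : ℝ := ∑ i, x i * y i * c i

/-- The diagonal quadratic form with coefficients `c`. For `c = α` it is the variance of
`⟨x, Z⟩`, where `Z` has law `gaussPi d α`. -/
def quad (c x : Fin d → ℝ) : ℝ := ∑ i, x i ^ 2 * c i

lemma wdotp_eq_dotp (c x y : Fin d → ℝ) : wdotp c x y = dotp (fun i => x i * c i) y :=
  Finset.sum_congr rfl fun _ _ => mul_right_comm _ _ _

@[fun_prop]
lemma measurable_wdotp {A : Type*} [MeasurableSpace A] (c : Fin d → ℝ) {f g : A → Fin d → ℝ}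
    (hf : Measurable f) (hg : Measurable g) : Measurable fun a => wdotp c (f a) (g a) := by
  unfold wdotp
  fun_prop

@[fun_prop]
lemma measurable_quad {A : Type*} [MeasurableSpace A] (c : Fin d → ℝ) {f : A → Fin d → ℝ}
    (hf : Measurable f) : Measurable fun a => quad c (f a) := by
  unfold quad
  fun_prop

lemma quad_nonneg {c : Fin d → ℝ} (hc : ∀ i, 0 ≤ c i) (x : Fin d → ℝ) : 0 ≤ quad c x :=
  Finset.sum_nonneg fun i _ => mul_nonneg (sq_nonneg _) (hc i)

end DiagonalForm

section GaussianVector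

variable {d : ℕ} (α : Fin d → ℝ)

lemma measurePreserving_eval_gaussPi (i : Fin d) :
    MeasurePreserving (fun z : Fin d → ℝ => z i) (gaussPi d α)
      (gaussianReal 0 (α i).toNNReal) :=
  measurePreserving_eval (fun i => gaussianReal 0 (α i).toNNReal) i

lemma hasGaussianLaw_eval_gaussPi (i : Fin d) :
    HasGaussianLaw (fun z : Fin d → ℝ => z i) (gaussPi d α) where
  isGaussian_map := by rw [(measurePreserving_eval_gaussPi α i).map_eq]; infer_instance

lemma memLp_eval_gaussPi (i : Fin d) {q : ℝ≥0∞} (hq : q ≠ ⊤) :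
    MemLp (fun z => z i) q (gaussPi d α) :=
  (hasGaussianLaw_eval_gaussPi α i).memLp hq

lemma iIndepFun_eval_gaussPi : iIndepFun (fun i (z : Fin d → ℝ) => z i) (gaussPi d α) :=
  iIndepFun_pi (X := fun _ => id) fun _ => aemeasurable_id

/-- The inner product `dotp c` with a fixed vector, as a continuous linear functional. -/
def dotpCLM (c : Fin d → ℝ) : (Fin d → ℝ) →L[ℝ] ℝ :=
  ∑ i, c i • ContinuousLinearMap.proj i

lemma dotpCLM_apply (c z : Fin d → ℝ) : dotpCLM c z = dotp c z := by
  simp [dotpCLM, dotp]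

lemma hasGaussianLaw_gaussPi : HasGaussianLaw (fun z : Fin d → ℝ => z) (gaussPi d α) :=
  (iIndepFun_eval_gaussPi α).hasGaussianLaw (hasGaussianLaw_eval_gaussPi α)

lemma hasGaussianLaw_dotp (c : Fin d → ℝ) : HasGaussianLaw (fun z => dotp c z) (gaussPi d α) := by
  simpa only [dotpCLM_apply] using (hasGaussianLaw_gaussPi α).map_fun (dotpCLM c)

lemma hasGaussianLaw_dotp_dotp (c e : Fin d → ℝ) :
    HasGaussianLaw (fun z => (dotp c z, dotp e z)) (gaussPi d α) := by
  simpa only [ContinuousLinearMap.prod_apply, dotpCLM_apply] using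
    (hasGaussianLaw_gaussPi α).map_fun ((dotpCLM c).prod (dotpCLM e))

lemma integrable_dotp_sq (c : Fin d → ℝ) : Integrable (fun z => dotp c z ^ 2) (gaussPi d α) :=
  (hasGaussianLaw_dotp α c).memLp_two.integrable_sq

lemma integral_eval_gaussPi (i : Fin d) : ∫ z, z i ∂gaussPi d α = 0 := by
  rw [← integral_map (φ := fun z : Fin d → ℝ => z i) (f := fun u : ℝ => u)
    (measurable_pi_apply i).aemeasurable (by fun_prop),
    (measurePreserving_eval_gaussPi α i).map_eq, integral_id_gaussianReal]

lemma integral_dotp (c : Fin d → ℝ) : ∫ z, dotp c z ∂gaussPi d α = 0 := by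
  unfold dotp
  rw [integral_finsetSum _ fun i _ => (hasGaussianLaw_eval_gaussPi α i).integrable.const_mul _]
  simp [integral_const_mul, integral_eval_gaussPi]

variable {α}

lemma variance_eval_gaussPi (hα : ∀ i, 0 ≤ α i) (i : Fin d) :
    Var[fun z => z i; gaussPi d α] = α i := by
  have h := variance_map (μ := gaussPi d α) (X := fun u : ℝ => u) (by fun_prop)
    (measurable_pi_apply i).aemeasurable
  rw [(measurePreserving_eval_gaussPi α i).map_eq, variance_fun_id_gaussianReal] at h
  rw [← Real.coe_toNNReal _ (hα i), h]
  rfl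

lemma integral_sq_eval_gaussPi (hα : ∀ i, 0 ≤ α i) (i : Fin d) :
    ∫ z, z i ^ 2 ∂gaussPi d α = α i := by
  rw [← variance_eval_gaussPi hα i,
    variance_of_integral_eq_zero (measurable_pi_apply i).aemeasurable (integral_eval_gaussPi α i)]

lemma covariance_dotp_dotp (hα : ∀ i, 0 ≤ α i) (c e : Fin d → ℝ) :
    cov[fun z => dotp c z, fun z => dotp e z; gaussPi d α] = wdotp α c e := by
  have hL (i : Fin d) : MemLp (fun z => z i) 2 (gaussPi d α) := memLp_eval_gaussPi α i (by simp)
  unfold dotp wdotp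
  rw [covariance_fun_sum_fun_sum (fun i => (hL i).const_mul _) fun i => (hL i).const_mul _]
  refine Finset.sum_congr rfl fun i _ => ?_
  simp only [covariance_const_mul_left, covariance_const_mul_right]
  rw [Finset.sum_eq_single i _ (by simp), covariance_self (measurable_pi_apply i).aemeasurable,
    variance_eval_gaussPi hα]
  · ring
  · intro j _ hj
    rw [((iIndepFun_eval_gaussPi α).indepFun hj.symm).covariance_eq_zero (hL i) (hL j), mul_zero,
      mul_zero]

lemma integral_dotp_sq (hα : ∀ i, 0 ≤ α i) (c : Fin d → ℝ) :
    ∫ z, dotp c z ^ 2 ∂gaussPi d α = quad α c := by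
  have h := covariance_dotp_dotp hα c c
  simpa only [covariance, integral_dotp, sub_zero, ← pow_two, wdotp, quad] using h

lemma map_dotp_gaussPi (hα : ∀ i, 0 ≤ α i) (c : Fin d → ℝ) :
    (gaussPi d α).map (fun z => dotp c z) = gaussianReal 0 (quad α c).toNNReal := by
  have hL := hasGaussianLaw_dotp α c
  rw [hL.map_eq_gaussianReal, integral_dotp,
    variance_of_integral_eq_zero hL.aemeasurable (integral_dotp α c), integral_dotp_sq hα]

/-- Linear functionals of a Gaussian vector that are uncorrelated are independent. -/
lemma map_dotp_dotp_gaussPi (hα : ∀ i, 0 ≤ α i) {c e : Fin d → ℝ}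
    (h : wdotp α c e = 0) :
    (gaussPi d α).map (fun z => (dotp c z, dotp e z)) =
      (gaussianReal 0 (quad α c).toNNReal).prod
        (gaussianReal 0 (quad α e).toNNReal) := by
  have hi := (hasGaussianLaw_dotp_dotp α c e).indepFun_of_covariance_eq_zero
    (by rw [covariance_dotp_dotp hα, h])
  rw [indepFun_iff_map_prod_eq_prod_map_map (hasGaussianLaw_dotp α c).aemeasurable
    (hasGaussianLaw_dotp α e).aemeasurable] at hi
  rw [hi, map_dotp_gaussPi hα, map_dotp_gaussPi hα]

end GaussianVector

section GaussianQuadraticForm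

variable {d : ℕ}

/-- The variance of the square of a standard Gaussian variable. -/
def gaussianSqVar : ℝ := Var[fun u : ℝ => u ^ 2; gaussianReal 0 1]

lemma gaussianSqVar_nonneg : 0 ≤ gaussianSqVar := variance_nonneg _ _

lemma memLp_sq_gaussianReal (v : ℝ≥0) : MemLp (fun u : ℝ => u ^ 2) 2 (gaussianReal 0 v) := by
  have hfour : MemLp (fun u : ℝ => u) 4 (gaussianReal 0 v) := memLp_id_gaussianReal 4
  have hholder : ENNReal.HolderTriple 4 4 2 := ⟨by
    rw [show (4 : ℝ≥0∞) = 2 * 2 by norm_num, ENNReal.mul_inv (by simp) (by simp), ← mul_add,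
      ENNReal.inv_two_add_inv_two, mul_one]⟩
  exact (hfour.mul hfour).congr_norm (by fun_prop) (.of_forall fun u => by simp [pow_two])

lemma map_sqrt_mul_gaussianReal {v : ℝ} (hv : 0 ≤ v) :
    (gaussianReal 0 1).map (fun u => √v * u) = gaussianReal 0 v.toNNReal := by
  rw [gaussianReal_map_const_mul, mul_zero, mul_one]
  congr 1
  ext
  simp [Real.sq_sqrt hv, hv]

lemma integral_sq_gaussianReal {v : ℝ} (hv : 0 ≤ v) :
    ∫ u, u ^ 2 ∂gaussianReal 0 v.toNNReal = v := by
  have hvar := variance_id_gaussianReal (μ := 0) (v := v.toNNReal)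
  rw [variance_of_integral_eq_zero aemeasurable_id (by simp [integral_id_gaussianReal])] at hvar
  simpa [hv] using hvar

lemma variance_sq_gaussianReal {v : ℝ} (hv : 0 ≤ v) :
    Var[fun u : ℝ => u ^ 2; gaussianReal 0 v.toNNReal] = v ^ 2 * gaussianSqVar := by
  have hcomp : (fun u : ℝ => u ^ 2) ∘ (fun u => √v * u) = fun u => v * u ^ 2 := by
    ext u
    rw [Function.comp_apply, mul_pow, Real.sq_sqrt hv]
  rw [← map_sqrt_mul_gaussianReal hv, variance_map (by fun_prop) (by fun_prop), hcomp,
    variance_const_mul, gaussianSqVar]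

lemma memLp_quad (α c : Fin d → ℝ) : MemLp (fun x => quad c x) 2 (gaussPi d α) :=
  memLp_finsetSum _ fun i _ => MemLp.mul_const
    ((memLp_sq_gaussianReal _).comp_measurePreserving (measurePreserving_eval_gaussPi α i)) _

lemma integrable_quad (α c : Fin d → ℝ) : Integrable (fun x => quad c x) (gaussPi d α) :=
  (memLp_quad α c).integrable one_le_two

lemma integral_quad {α : Fin d → ℝ} (hα : ∀ i, 0 ≤ α i) (c : Fin d → ℝ) :
    ∫ x, quad c x ∂gaussPi d α = ∑ i, c i * α i := by
  unfold quad
  rw [integral_finsetSum _ fun i _ =>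
    ((memLp_eval_gaussPi α i (by simp)).integrable_sq).mul_const _]
  exact Finset.sum_congr rfl fun i _ => by
    rw [integral_mul_const, integral_sq_eval_gaussPi hα, mul_comm]

lemma integral_sq_quad_sub {α : Fin d → ℝ} (hα : ∀ i, 0 ≤ α i) (c : Fin d → ℝ) :
    ∫ x, (quad c x - ∑ i, c i * α i) ^ 2 ∂gaussPi d α =
      gaussianSqVar * ∑ i, c i ^ 2 * α i ^ 2 := by
  have hvar : Var[fun x => quad c x; gaussPi d α] =
      ∑ i, Var[fun u => u ^ 2 * c i; gaussianReal 0 (α i).toNNReal] := by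
    rw [← variance_sum_pi fun i => (memLp_sq_gaussianReal _).mul_const _]
    congr
    ext x
    simp [quad]
  rw [variance_eq_integral (by fun_prop), integral_quad hα] at hvar
  rw [hvar, Finset.mul_sum]
  refine Finset.sum_congr rfl fun i _ => ?_
  rw [variance_mul_const, variance_sq_gaussianReal (hα i)]
  ring

end GaussianQuadraticForm

section GaussianDensity

variable {v : ℝ}

/-- The density at `x` of the centered Gaussian distribution of variance `v`, with `v` a real
number so that it can be differentiated in `v`. -/
def gaussDensity (v x : ℝ) : ℝ := (√(2 * π * v))⁻¹ * rexp (-x ^ 2 / (2 * v))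

lemma gaussianPDFReal_toNNReal (hv : 0 ≤ v) : gaussianPDFReal 0 v.toNNReal = gaussDensity v := by
  ext x
  simp [gaussianPDFReal, gaussDensity, hv]

lemma gaussDensity_nonneg (v x : ℝ) : 0 ≤ gaussDensity v x := by
  unfold gaussDensity
  positivity

lemma gaussDensity_pos (hv : 0 < v) (x : ℝ) : 0 < gaussDensity v x := by
  unfold gaussDensity
  positivity

lemma one_add_mul_gaussDensity_le_one (hv : 1 / 4 ≤ v) (x : ℝ) :
    (1 + x ^ 2 / (2 * v)) * gaussDensity v x ≤ 1 := by
  have hprefactor : (√(2 * π * v))⁻¹ ≤ 1 :=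
    inv_le_one_of_one_le₀ (Real.le_sqrt_of_sq_le (by nlinarith [Real.pi_gt_three]))
  have hexp : (1 + x ^ 2 / (2 * v)) * rexp (-x ^ 2 / (2 * v)) ≤ 1 := by
    rw [neg_div, Real.exp_neg, ← div_eq_mul_inv, div_le_one (Real.exp_pos _), add_comm]
    exact Real.add_one_le_exp _
  rw [gaussDensity, mul_left_comm]
  exact mul_le_one₀ hprefactor (by positivity) hexp

lemma gaussDensity_le_one (hv : 1 / 4 ≤ v) (x : ℝ) : gaussDensity v x ≤ 1 := by
  refine le_trans ?_ (one_add_mul_gaussDensity_le_one hv x)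
  exact le_mul_of_one_le_left (gaussDensity_nonneg v x) (le_add_of_nonneg_right (by positivity))

lemma hasDerivAt_gaussDensity (hv : 0 < v) (x : ℝ) :
    HasDerivAt (gaussDensity v) (-(x / v) * gaussDensity v x) x := by
  have hexponent : HasDerivAt (fun x : ℝ => -x ^ 2 / (2 * v)) (-(2 * x) / (2 * v)) x := by
    simpa using ((hasDerivAt_pow 2 x).neg).div_const (2 * v)
  refine (hexponent.exp.const_mul (√(2 * π * v))⁻¹).congr_deriv ?_
  unfold gaussDensity
  field_simp

lemma hasDerivAt_gaussDensity_variance (hv : 0 < v) (x : ℝ) :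
    HasDerivAt (fun v => gaussDensity v x)
      ((x ^ 2 / (2 * v) - 1 / 2) / v * gaussDensity v x) v := by
  have hexponent : HasDerivAt (fun v : ℝ => -x ^ 2 / (2 * v)) (x ^ 2 / (2 * v ^ 2)) v := by
    have h := (hasDerivAt_const v (-x ^ 2)).div ((hasDerivAt_id v).const_mul 2) (by positivity)
    refine h.congr_deriv ?_
    simp only [id]
    field_simp
    ring
  have hprefactor : HasDerivAt (fun v : ℝ => (√(2 * π * v))⁻¹) (-(√(2 * π * v))⁻¹ / (2 * v)) v := by
    have h := (((hasDerivAt_id v).const_mul (2 * π)).sqrt (by simp only [id]; positivity)).inv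
      (by simp only [id]; positivity)
    refine h.congr_deriv ?_
    have hsq : √(2 * π * v) ^ 2 = 2 * π * v := Real.sq_sqrt (by positivity)
    simp only [id, hsq]
    field_simp
  refine (hprefactor.mul hexponent.exp).congr_deriv ?_
  unfold gaussDensity
  field_simp
  ring

@[fun_prop]
lemma continuous_gaussDensity (hv : 0 < v) : Continuous (gaussDensity v) :=
  continuous_iff_continuousAt.2 fun x => (hasDerivAt_gaussDensity hv x).continuousAt

lemma abs_div_mul_gaussDensity_le (hv : 1 / 4 ≤ v) (x : ℝ) : |x| / v * gaussDensity v x ≤ 2 := by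
  have hv₀ : 0 < v := by linarith
  have hcoeff : |x| / v ≤ 2 * (1 + x ^ 2 / (2 * v)) := by
    rw [div_le_iff₀ hv₀, ← sq_abs x]
    field_simp
    nlinarith [sq_nonneg (|x| - 1 / 2)]
  calc |x| / v * gaussDensity v x
      ≤ 2 * (1 + x ^ 2 / (2 * v)) * gaussDensity v x := by
        gcongr
        exact gaussDensity_nonneg v x
    _ ≤ 2 := by linarith [one_add_mul_gaussDensity_le_one hv x]

lemma abs_gaussDensity_sub_le (hv : 1 / 4 ≤ v) (x y : ℝ) :
    |gaussDensity v y - gaussDensity v x| ≤ 2 * |y - x| := by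
  have hv₀ : 0 < v := by linarith
  refine Convex.norm_image_sub_le_of_norm_hasDerivWithin_le (s := Set.univ)
    (fun u _ => (hasDerivAt_gaussDensity hv₀ u).hasDerivWithinAt) (fun u _ => ?_)
    convex_univ trivial trivial
  rw [Real.norm_eq_abs, abs_mul, abs_neg, abs_of_nonneg (gaussDensity_nonneg _ _), abs_div,
    abs_of_pos hv₀]
  exact abs_div_mul_gaussDensity_le hv u

lemma abs_gaussDensity_sub_le_variance {w : ℝ} (hv : 1 / 4 ≤ v) (hw : 1 / 4 ≤ w) (x : ℝ) :
    |gaussDensity w x - gaussDensity v x| ≤ 4 * |w - v| := by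
  refine Convex.norm_image_sub_le_of_norm_hasDerivWithin_le (f := fun v => gaussDensity v x)
    (s := Set.Ici (1 / 4)) (fun u hu => (hasDerivAt_gaussDensity_variance
      (lt_of_lt_of_le (by norm_num) hu) x).hasDerivWithinAt) (fun u hu => ?_)
    (convex_Ici _) hv hw
  have hu₄ : 1 / 4 ≤ u := hu
  have hu₀ : 0 < u := by linarith
  have hcoeff : |(x ^ 2 / (2 * u) - 1 / 2) / u| ≤ 4 * (1 + x ^ 2 / (2 * u)) := by
    have hs : 0 ≤ x ^ 2 / (2 * u) := by positivity
    rw [abs_div, abs_of_pos hu₀, div_le_iff₀ hu₀, abs_le]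
    constructor <;> nlinarith
  rw [Real.norm_eq_abs, abs_mul, abs_of_nonneg (gaussDensity_nonneg _ _)]
  calc |(x ^ 2 / (2 * u) - 1 / 2) / u| * gaussDensity u x
      ≤ 4 * (1 + x ^ 2 / (2 * u)) * gaussDensity u x := by
        gcongr
        exact gaussDensity_nonneg u x
    _ ≤ 4 := by linarith [one_add_mul_gaussDensity_le_one hu₄ x]

lemma abs_gaussDensity_mul_sub_sq_le {w : ℝ} (hv : 1 / 4 ≤ v) (hw : 1 / 4 ≤ w) (x : ℝ) :
    |gaussDensity v x * gaussDensity w x - gaussDensity 1 x ^ 2| ≤ 4 * (|v - 1| + |w - 1|) := by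
  have hone : (1 : ℝ) / 4 ≤ 1 := by norm_num
  calc |gaussDensity v x * gaussDensity w x - gaussDensity 1 x ^ 2|
      = |(gaussDensity v x - gaussDensity 1 x) * gaussDensity w x
          + gaussDensity 1 x * (gaussDensity w x - gaussDensity 1 x)| := by ring_nf
    _ ≤ |gaussDensity v x - gaussDensity 1 x| * gaussDensity w x
          + gaussDensity 1 x * |gaussDensity w x - gaussDensity 1 x| := by
        refine (abs_add_le _ _).trans_eq ?_
        rw [abs_mul, abs_mul, abs_of_nonneg (gaussDensity_nonneg w x),
          abs_of_nonneg (gaussDensity_nonneg 1 x)]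
    _ ≤ |gaussDensity v x - gaussDensity 1 x| + |gaussDensity w x - gaussDensity 1 x| :=
        add_le_add (mul_le_of_le_one_right (abs_nonneg _) (gaussDensity_le_one hw x))
          (mul_le_of_le_one_left (abs_nonneg _) (gaussDensity_le_one hone x))
    _ ≤ 4 * (|v - 1| + |w - 1|) := by
        linarith [abs_gaussDensity_sub_le_variance hone hv x,
          abs_gaussDensity_sub_le_variance hone hw x]

lemma integrable_gaussDensity (hv : 0 ≤ v) : Integrable (gaussDensity v) :=
  gaussianPDFReal_toNNReal hv ▸ integrable_gaussianPDFReal 0 v.toNNReal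

end GaussianDensity

section GaussianTail

variable {v : ℝ}

/-- The upper tail `P(Z ≥ u)` of a centered Gaussian variable `Z` of variance `v`. -/
def gaussTail (v u : ℝ) : ℝ := (gaussianReal 0 v.toNNReal).real (Set.Ici u)

lemma gaussTail_mem_Icc (v u : ℝ) : gaussTail v u ∈ Set.Icc (0 : ℝ) 1 :=
  ⟨measureReal_nonneg, measureReal_le_one⟩

@[fun_prop]
lemma boundedMeasurable_gaussTail {A : Type*} [MeasurableSpace A] (v : ℝ) {f : A → ℝ}
    (hf : Measurable f) : BoundedMeasurable fun a => gaussTail v (f a) := by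
  have hanti : Antitone (gaussTail v) := fun _ _ h => measureReal_mono (Set.Ici_subset_Ici.2 h)
  refine ⟨hanti.measurable.comp hf, 1, fun a => ?_⟩
  obtain ⟨h₀, h₁⟩ := gaussTail_mem_Icc v (f a)
  rwa [abs_of_nonneg h₀]

lemma gaussTail_eq_integral (hv : 0 < v) (u : ℝ) :
    gaussTail v u = ∫ x in Set.Ioi u, gaussDensity v x := by
  rw [gaussTail, Measure.real, gaussianReal_apply_eq_integral 0 (by simpa using hv),
    ENNReal.toReal_ofReal (integral_nonneg fun x => gaussianPDFReal_nonneg _ _ _),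
    integral_Ici_eq_integral_Ioi, gaussianPDFReal_toNNReal hv.le]

lemma integral_gaussDensity_eq_sub (hv : 0 < v) (a b : ℝ) :
    ∫ x in a..b, gaussDensity v x = gaussTail v a - gaussTail v b := by
  have hint := integrable_gaussDensity hv.le
  rw [gaussTail_eq_integral hv, gaussTail_eq_integral hv,
    intervalIntegral.integral_Ioi_sub_Ioi' hint.integrableOn hint.integrableOn]

lemma hasDerivAt_gaussTail (hv : 0 < v) (u : ℝ) :
    HasDerivAt (gaussTail v) (-gaussDensity v u) u := by
  have heq : gaussTail v = fun u => gaussTail v 0 - ∫ x in (0 : ℝ)..u, gaussDensity v x := by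
    ext u
    rw [integral_gaussDensity_eq_sub hv, sub_sub_cancel]
  rw [heq]
  exact ((continuous_gaussDensity hv).integral_hasStrictDerivAt 0 u).hasDerivAt.const_sub _

/-- The density is the derivative of the tail, with a quadratic Taylor remainder because the
density is Lipschitz. -/
lemma abs_gaussTail_sub_sub_le (hv : 1 / 4 ≤ v) (t h : ℝ) :
    |gaussTail v (t - h) - gaussTail v t - h * gaussDensity v t| ≤ 2 * h ^ 2 := by
  have hv₀ : 0 < v := by linarith
  have hdiff : gaussTail v (t - h) - gaussTail v t - h * gaussDensity v t =
      ∫ x in (t - h)..t, (gaussDensity v x - gaussDensity v t) := by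
    rw [intervalIntegral.integral_sub (integrable_gaussDensity hv₀.le).intervalIntegrable (by simp),
      integral_gaussDensity_eq_sub hv₀]
    simp
  have hbound : ∀ x ∈ Set.uIoc (t - h) t, ‖gaussDensity v x - gaussDensity v t‖ ≤ 2 * |h| := by
    intro x hx
    have hxt : |x - t| ≤ |h| := by
      have hdist := Set.abs_sub_right_of_mem_uIcc (Set.uIoc_subset_uIcc hx)
      rwa [sub_sub_cancel, abs_sub_comm] at hdist
    exact (abs_gaussDensity_sub_le hv t x).trans (by gcongr)
  rw [hdiff]
  refine (intervalIntegral.norm_integral_le_of_norm_le_const hbound).trans_eq ?_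
  rw [sub_sub_cancel, mul_assoc, ← sq, sq_abs]

lemma gaussTail_eq_gaussTail_one (hv : 0 < v) (u : ℝ) : gaussTail v u = gaussTail 1 (u / √v) := by
  have hpre : (fun x => √v * x) ⁻¹' Set.Ici u = Set.Ici (u / √v) := by
    ext x
    simp only [Set.mem_preimage, Set.mem_Ici, div_le_iff₀' (Real.sqrt_pos.2 hv)]
  rw [gaussTail, gaussTail, ← map_sqrt_mul_gaussianReal hv.le,
    map_measureReal_apply (by fun_prop) measurableSet_Ici, hpre, Real.toNNReal_one]

lemma abs_gaussTail_sub_le_variance {w : ℝ} (hv : 1 / 4 ≤ v) (hw : 1 / 4 ≤ w) (u : ℝ) :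
    |gaussTail w u - gaussTail v u| ≤ 4 * |w - v| := by
  rw [gaussTail_eq_gaussTail_one (by linarith), gaussTail_eq_gaussTail_one (v := v) (by linarith)]
  have hderiv : ∀ s ∈ Set.Ici (1 / 4 : ℝ), HasDerivAt (fun s => gaussTail 1 (u / √s))
      (u / √s / 1 * gaussDensity 1 (u / √s) / (2 * s)) s := by
    intro s hs
    have hs₀ : 0 < s := lt_of_lt_of_le (by norm_num) hs
    have hsq : √s ^ 2 = s := Real.sq_sqrt hs₀.le
    have harg : HasDerivAt (fun s => u / √s) (-(u / √s) / (2 * s)) s := by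
      refine ((hasDerivAt_const s u).div ((hasDerivAt_id s).sqrt hs₀.ne')
        (Real.sqrt_pos.2 hs₀).ne').congr_deriv ?_
      simp only [id, hsq]
      field_simp
      ring
    refine ((hasDerivAt_gaussTail one_pos _).comp s harg).congr_deriv ?_
    ring
  refine Convex.norm_image_sub_le_of_norm_hasDerivWithin_le
    (fun s hs => (hderiv s hs).hasDerivWithinAt) (fun s hs => ?_) (convex_Ici _) hv hw
  have hs₄ : 1 / 4 ≤ s := hs
  have : 0 < s := by linarith
  rw [Real.norm_eq_abs, abs_div, abs_mul, abs_div _ 1, abs_one,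
    abs_of_nonneg (gaussDensity_nonneg _ _), abs_of_pos (by positivity : 0 < 2 * s),
    div_le_iff₀ (by positivity)]
  linarith [abs_div_mul_gaussDensity_le (v := 1) (by norm_num) (u / √s)]

lemma abs_gaussTail_sub_gaussTail_one_le (v u : ℝ) :
    |gaussTail v u - gaussTail 1 u| ≤ 4 * |v - 1| := by
  rcases le_or_gt (1 / 4) v with hv | hv
  · exact abs_gaussTail_sub_le_variance (by norm_num) hv u
  · have hgap : 1 - v ≤ |v - 1| := by rw [abs_sub_comm]; exact le_abs_self _
    obtain ⟨hv₀, hv₁⟩ := gaussTail_mem_Icc v u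
    obtain ⟨h₀, h₁⟩ := gaussTail_mem_Icc 1 u
    exact abs_le.2 ⟨by linarith, by linarith⟩

/-- `x ↦ -a · gaussDensity a x` is a primitive of `x ↦ x · gaussDensity a x`. -/
lemma setIntegral_Ici_id_gaussianReal {a : ℝ} (ha : 0 < a) (t : ℝ) :
    ∫ x in Set.Ici t, x ∂gaussianReal 0 a.toNNReal = a * gaussDensity a t := by
  have hint : Integrable (fun x => x * gaussDensity a x) := by
    refine ((integrable_mul_exp_neg_mul_sq (b := 1 / (2 * a)) (by positivity)).mul_const
      (√(2 * π * a))⁻¹).congr (.of_forall fun x => ?_)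
    simp only [gaussDensity]
    rw [show -(1 / (2 * a)) * x ^ 2 = -x ^ 2 / (2 * a) by ring]
    ring
  have hderiv : ∀ x ∈ Set.Ici t,
      HasDerivAt (fun x => -a * gaussDensity a x) (x * gaussDensity a x) x := fun x _ =>
    ((hasDerivAt_gaussDensity ha x).const_mul (-a)).congr_deriv (by field_simp)
  have htendsto : Tendsto (fun x => -a * gaussDensity a x) atTop (nhds 0) := by
    have hexponent : Tendsto (fun x : ℝ => -x ^ 2 / (2 * a)) atTop atBot := by
      simp only [neg_div]
      exact tendsto_neg_atTop_atBot.comp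
        ((tendsto_pow_atTop two_ne_zero).atTop_div_const (by positivity))
    simpa [gaussDensity, Function.comp_def] using
      ((Real.tendsto_exp_atBot.comp hexponent).const_mul (√(2 * π * a))⁻¹).const_mul (-a)
  rw [← integral_indicator measurableSet_Ici,
    integral_gaussianReal_eq_integral_smul (by simpa using ha), gaussianPDFReal_toNNReal ha.le]
  simp only [smul_eq_mul, ← Set.indicator_mul_right]
  rw [integral_indicator measurableSet_Ici, integral_Ici_eq_integral_Ioi]
  simp only [mul_comm (gaussDensity a _)]
  rw [integral_Ioi_of_hasDerivAt_of_tendsto' hderiv hint.integrableOn htendsto]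
  ring

lemma integral_centeredInd_mul_id_gaussianReal {a : ℝ} (ha : 0 < a) (q t : ℝ) :
    ∫ x, centeredInd q (t ≤ x) * x ∂gaussianReal 0 a.toNNReal = a * gaussDensity a t := by
  have hid : Integrable (fun x : ℝ => x) (gaussianReal 0 a.toNNReal) :=
    (memLp_id_gaussianReal 1).integrable le_rfl
  have hsplit (x : ℝ) :
      centeredInd q (t ≤ x) * x = (Set.Ici t).indicator (fun y => y) x - q * x := by
    by_cases hx : t ≤ x <;> simp [centeredInd, hx]
    ring
  simp only [hsplit]
  rw [integral_sub (hid.indicator measurableSet_Ici) (hid.const_mul _),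
    integral_indicator measurableSet_Ici, integral_const_mul, integral_id_gaussianReal, mul_zero,
    sub_zero]
  exact setIntegral_Ici_id_gaussianReal ha t

/-- In the integrand, `gaussTail v (t - l * x)` is expanded to first order in `l`; the centered
indicator kills the constant term. -/
lemma abs_integral_centeredInd_mul_gaussTail_sub_le {a : ℝ} (ha : 0 < a) (hv : 1 / 4 ≤ v)
    (p l t : ℝ) :
    |∫ x, centeredInd (gaussTail a t) (t ≤ x) * (gaussTail v (t - l * x) - p)
        ∂gaussianReal 0 a.toNNReal - l * a * gaussDensity v t * gaussDensity a t|
      ≤ 2 * (l ^ 2 * a) := by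
  set γ := gaussianReal 0 a.toNNReal
  set w : ℝ → ℝ := fun x => centeredInd (gaussTail a t) (t ≤ x)
  have hw : BoundedMeasurable w := boundedMeasurable_centeredInd _ measurableSet_Ici
  have hwbound (x : ℝ) : |w x| ≤ 1 := abs_centeredInd_le_one (gaussTail_mem_Icc a t) _
  have hwid : Integrable (fun x => w x * x) γ :=
    hw.integrable_mul ((memLp_id_gaussianReal 1).integrable le_rfl)
  have hwmean : ∫ x, w x ∂γ = 0 := by
    rw [integral_centeredInd γ _ measurableSet_Ici, sub_eq_zero]
    rfl
  have hremainder : ∫ x, w x * (gaussTail v (t - l * x) - p) ∂γ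
        - l * a * gaussDensity v t * gaussDensity a t =
      ∫ x, w x * (gaussTail v (t - l * x) - gaussTail v t - l * x * gaussDensity v t) ∂γ := by
    have hexpand (x : ℝ) :
        w x * (gaussTail v (t - l * x) - gaussTail v t - l * x * gaussDensity v t) =
        w x * (gaussTail v (t - l * x) - p) - (gaussTail v t - p) * w x
          - l * gaussDensity v t * (w x * x) := by ring
    simp only [hexpand]
    have hbounded : BoundedMeasurable fun x =>
      w x * (gaussTail v (t - l * x) - p) - (gaussTail v t - p) * w x := by fun_prop
    rw [integral_sub (hbounded.integrable γ) (hwid.const_mul _), integral_sub, integral_const_mul,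
      integral_const_mul, hwmean, integral_centeredInd_mul_id_gaussianReal ha]
    · ring
    all_goals exact BoundedMeasurable.integrable (by fun_prop) γ
  rw [hremainder, ← Real.norm_eq_abs]
  refine (norm_integral_le_of_norm_le (g := fun x => 2 * l ^ 2 * x ^ 2)
    ((memLp_id_gaussianReal 2).integrable_sq.const_mul _) (.of_forall fun x => ?_)).trans_eq ?_
  · rw [norm_mul]
    refine (mul_le_of_le_one_left (norm_nonneg _) (hwbound x)).trans ?_
    exact (abs_gaussTail_sub_sub_le hv t (l * x)).trans_eq (by ring)
  · rw [integral_const_mul, integral_sq_gaussianReal ha.le]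
    ring

end GaussianTail

section GaussianMoments

variable {d : ℕ} {α : Fin d → ℝ}

lemma integral_wdotp_sq (hα : ∀ i, 0 ≤ α i) (c x : Fin d → ℝ) :
    ∫ y, wdotp c x y ^ 2 ∂gaussPi d α = quad (fun i => c i ^ 2 * α i) x := by
  simp only [wdotp_eq_dotp, integral_dotp_sq hα]
  exact Finset.sum_congr rfl fun i _ => by ring

lemma integrable_wdotp_sq_prod (hα : ∀ i, 0 ≤ α i) (c : Fin d → ℝ) :
    Integrable (fun q => wdotp c q.1 q.2 ^ 2) ((gaussPi d α).prod (gaussPi d α)) := by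
  rw [integrable_prod_iff (by fun_prop)]
  refine ⟨.of_forall fun x => by simpa only [wdotp_eq_dotp] using integrable_dotp_sq α _, ?_⟩
  simpa only [norm_pow, Real.norm_eq_abs, sq_abs, integral_wdotp_sq hα] using integrable_quad α _

lemma integral_wdotp_sq_prod (hα : ∀ i, 0 ≤ α i) (c : Fin d → ℝ) :
    ∫ q, wdotp c q.1 q.2 ^ 2 ∂(gaussPi d α).prod (gaussPi d α) = ∑ i, c i ^ 2 * α i ^ 2 := by
  rw [integral_prod _ (integrable_wdotp_sq_prod hα c)]
  simp only [integral_wdotp_sq hα, integral_quad hα]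
  exact Finset.sum_congr rfl fun i _ => by ring

lemma integrable_quad_sub_sq (α c : Fin d → ℝ) (b : ℝ) :
    Integrable (fun x => (quad c x - b) ^ 2) (gaussPi d α) :=
  ((memLp_quad α c).sub (memLp_const b)).integrable_sq

/-- The squared distance of the covariance matrix of `(⟨x, Z⟩, ⟨y, Z⟩)` from the identity. -/
def isotropyDefect (α x y : Fin d → ℝ) : ℝ :=
  wdotp α x y ^ 2 + (quad α x - 1) ^ 2 + (quad α y - 1) ^ 2

lemma integrable_isotropyDefect (hα : ∀ i, 0 ≤ α i) :
    Integrable (fun q => isotropyDefect α q.1 q.2) ((gaussPi d α).prod (gaussPi d α)) :=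
  ((integrable_wdotp_sq_prod hα α).add ((integrable_quad_sub_sq α α 1).comp_fst _)).add
    ((integrable_quad_sub_sq α α 1).comp_snd _)

lemma integral_quad_sub_one_sq (hα : ∀ i, 0 ≤ α i) (hα₂ : ∑ i, α i ^ 2 = 1) :
    ∫ x, (quad α x - 1) ^ 2 ∂gaussPi d α = gaussianSqVar * ∑ i, α i ^ 4 := by
  have h := integral_sq_quad_sub hα α
  simp only [← pow_two, hα₂, ← pow_mul] at h
  exact h

lemma integral_isotropyDefect (hα : ∀ i, 0 ≤ α i) (hα₂ : ∑ i, α i ^ 2 = 1) :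
    ∫ q, isotropyDefect α q.1 q.2 ∂(gaussPi d α).prod (gaussPi d α) =
      (1 + 2 * gaussianSqVar) * ∑ i, α i ^ 4 := by
  have hquad := integrable_quad_sub_sq α α 1
  have hsum : Integrable (fun q => wdotp α q.1 q.2 ^ 2 + (quad α q.1 - 1) ^ 2)
      ((gaussPi d α).prod (gaussPi d α)) :=
    (integrable_wdotp_sq_prod hα α).add (hquad.comp_fst _)
  unfold isotropyDefect
  rw [integral_add hsum (hquad.comp_snd _),
    integral_add (integrable_wdotp_sq_prod hα α) (hquad.comp_fst _), integral_wdotp_sq_prod hα,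
    integral_fun_fst (fun x => (quad α x - 1) ^ 2), integral_fun_snd (fun x => (quad α x - 1) ^ 2),
    integral_quad_sub_one_sq hα hα₂]
  simp only [← pow_add, probReal_univ, one_smul]
  ring

end GaussianMoments

section Regression

variable {d : ℕ} {α : Fin d → ℝ}

/-- Gaussian regression: `⟨y, z⟩` is the sum of its projection on `⟨x, z⟩` and of an independent
centered Gaussian variable. -/
lemma integral_dotp_dotp_eq_integral_integral (hα : ∀ i, 0 ≤ α i) {x y : Fin d → ℝ}
    (hx : quad α x ≠ 0) (F : ℝ → ℝ → ℝ) (hF : Measurable fun q : ℝ × ℝ => F q.1 q.2)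
    (hint : Integrable (fun z => F (dotp x z) (dotp y z)) (gaussPi d α)) :
    ∫ z, F (dotp x z) (dotp y z) ∂gaussPi d α =
      ∫ u, ∫ w, F u (wdotp α x y / quad α x * u + w)
        ∂gaussianReal 0 (quad α y - wdotp α x y ^ 2 / quad α x).toNNReal
        ∂gaussianReal 0 (quad α x).toNNReal := by
  set l := wdotp α x y / quad α x with hl
  set e : Fin d → ℝ := fun i => y i - l * x i
  have hdotp (z : Fin d → ℝ) : dotp y z = l * dotp x z + dotp e z := by
    simp only [e, dotp, Finset.mul_sum, ← Finset.sum_add_distrib]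
    exact Finset.sum_congr rfl fun i _ => by ring
  have hortho : wdotp α x e = 0 := by
    have hexpand : wdotp α x e = wdotp α x y - l * quad α x := by
      simp only [e, wdotp, quad, Finset.mul_sum, ← Finset.sum_sub_distrib]
      exact Finset.sum_congr rfl fun i _ => by ring
    rw [hexpand, hl, div_mul_cancel₀ _ hx, sub_self]
  have hresidual : quad α e = quad α y - wdotp α x y ^ 2 / quad α x := by
    have hexpand : quad α e = quad α y - 2 * l * wdotp α x y + l ^ 2 * quad α x := by
      simp only [e, wdotp, quad, Finset.mul_sum, ← Finset.sum_sub_distrib, ← Finset.sum_add_distrib]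
      exact Finset.sum_congr rfl fun i _ => by ring
    rw [hexpand, hl]
    field_simp
    ring
  have hlaw := map_dotp_dotp_gaussPi hα hortho
  have hmeas : Measurable fun z => (dotp x z, dotp e z) := by fun_prop
  have hG : Measurable fun q : ℝ × ℝ => F q.1 (l * q.1 + q.2) :=
    hF.comp (f := fun q : ℝ × ℝ => (q.1, l * q.1 + q.2)) (by fun_prop)
  simp only [hdotp] at hint ⊢
  rw [← integral_map (φ := fun z => (dotp x z, dotp e z)) (f := fun q => F q.1 (l * q.1 + q.2))
    hmeas.aemeasurable hG.aestronglyMeasurable, hlaw, hresidual, integral_prod]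
  rw [← hresidual, ← hlaw, integrable_map_measure hG.aestronglyMeasurable hmeas.aemeasurable]
  exact hint

end Regression

section EdgeCovariance

variable {d : ℕ} {α : Fin d → ℝ} {p t : ℝ}

/-- The conditional mean of the centered edge indicator of `{x, Z}` given `x`. -/
def edgeMean (p t : ℝ) (α x : Fin d → ℝ) : ℝ := ∫ z, edgeKernel p t x z ∂gaussPi d α

/-- The conditional covariance of the edge indicators of `{x, Z}` and `{y, Z}` given `x`, `y`. -/
def edgeCov (p t : ℝ) (α x y : Fin d → ℝ) : ℝ :=
  ∫ z, edgeKernel p t x z * edgeKernel p t y z ∂gaussPi d α - edgeMean p t α x * edgeMean p t α y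

@[fun_prop]
lemma boundedMeasurable_edgeMean {A : Type*} [MeasurableSpace A] (p t : ℝ) (α : Fin d → ℝ)
    {f : A → Fin d → ℝ} (hf : Measurable f) : BoundedMeasurable fun a => edgeMean p t α (f a) := by
  unfold edgeMean
  fun_prop

lemma abs_edgeMean_le_one (hp : p ∈ Set.Icc (0 : ℝ) 1) (t : ℝ) (α x : Fin d → ℝ) :
    |edgeMean p t α x| ≤ 1 :=
  abs_integral_le_of_abs_le _ fun z => abs_edgeKernel_le_one hp t x z

lemma edgeMean_eq (hα : ∀ i, 0 ≤ α i) (p t : ℝ) (x : Fin d → ℝ) :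
    edgeMean p t α x = gaussTail (quad α x) t - p := by
  unfold edgeMean edgeKernel
  rw [integral_centeredInd _ p (measurableSet_le (by fun_prop) (by fun_prop)), gaussTail,
    ← map_dotp_gaussPi hα, map_measureReal_apply (by fun_prop) measurableSet_Ici]
  rfl

lemma edgeCov_eq_integral (hα : ∀ i, 0 ≤ α i) (p t : ℝ) (x y : Fin d → ℝ) :
    edgeCov p t α x y = ∫ z, centeredInd (gaussTail (quad α x) t) (t ≤ dotp x z) *
      edgeKernel p t y z ∂gaussPi d α := by
  have hcenter (z : Fin d → ℝ) : centeredInd (gaussTail (quad α x) t) (t ≤ dotp x z) =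
      edgeKernel p t x z - edgeMean p t α x := by
    rw [edgeMean_eq hα, edgeKernel, centeredInd, centeredInd]
    ring
  simp only [hcenter, sub_mul]
  rw [integral_sub, integral_const_mul, edgeCov, edgeMean, edgeMean]
  all_goals exact BoundedMeasurable.integrable (by fun_prop) _

lemma abs_edgeCov_le_one (hα : ∀ i, 0 ≤ α i) (hp : p ∈ Set.Icc (0 : ℝ) 1) (t : ℝ)
    (x y : Fin d → ℝ) : |edgeCov p t α x y| ≤ 1 := by
  rw [edgeCov_eq_integral hα]
  refine abs_integral_le_of_abs_le _ fun z => ?_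
  rw [abs_mul]
  exact mul_le_one₀ (abs_centeredInd_le_one (gaussTail_mem_Icc _ _) _) (abs_nonneg _)
    (abs_edgeKernel_le_one hp t y z)

lemma edgeCov_eq_integral_gaussianReal (hα : ∀ i, 0 ≤ α i) (p t : ℝ) {x : Fin d → ℝ}
    (hx : quad α x ≠ 0) (y : Fin d → ℝ) :
    edgeCov p t α x y = ∫ u, centeredInd (gaussTail (quad α x) t) (t ≤ u) *
      (gaussTail (quad α y - wdotp α x y ^ 2 / quad α x)
        (t - wdotp α x y / quad α x * u) - p) ∂gaussianReal 0 (quad α x).toNNReal := by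
  have hset (q : ℝ) {A : Type} [MeasurableSpace A] {f : A → ℝ} (hf : Measurable f) :
      BoundedMeasurable fun a => centeredInd q (t ≤ f a) :=
    boundedMeasurable_centeredInd _ (measurableSet_le measurable_const hf)
  have hF : BoundedMeasurable fun q : ℝ × ℝ =>
      centeredInd (gaussTail (quad α x) t) (t ≤ q.1) * centeredInd p (t ≤ q.2) :=
    (hset _ measurable_fst).mul (hset _ measurable_snd)
  have hpair : Measurable fun z => (dotp x z, dotp y z) := by fun_prop
  rw [edgeCov_eq_integral hα]
  unfold edgeKernel
  rw [integral_dotp_dotp_eq_integral_integral hα hx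
    (fun u w => centeredInd (gaussTail (quad α x) t) (t ≤ u) * centeredInd p (t ≤ w))
    hF.measurable ((hF.comp hpair).integrable _)]
  refine integral_congr_ae (.of_forall fun u => ?_)
  simp only []
  rw [integral_const_mul, integral_centeredInd _ p (measurableSet_le (by fun_prop) (by fun_prop)),
    gaussTail]
  congr 4
  ext w
  exact sub_le_iff_le_add'.symm

lemma abs_edgeCov_sub_le_of_isotropyDefect_le (hα : ∀ i, 0 ≤ α i) (p t : ℝ) {x y : Fin d → ℝ}
    (hxy : isotropyDefect α x y ≤ 4 / 25) :
    |edgeCov p t α x y - gaussDensity 1 t ^ 2 * wdotp α x y| ≤ 12 * isotropyDefect α x y := by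
  unfold isotropyDefect at hxy ⊢
  set a := quad α x
  set b := quad α y
  set S := wdotp α x y
  have ha₁ : |a - 1| ≤ 2 / 5 := abs_le_of_sq_le_sq (by nlinarith) (by norm_num)
  have hb₁ : |b - 1| ≤ 2 / 5 := abs_le_of_sq_le_sq (by nlinarith) (by norm_num)
  have hS₁ : |S| ≤ 2 / 5 := abs_le_of_sq_le_sq (by nlinarith) (by norm_num)
  have ha : 3 / 5 ≤ a := by linarith [(abs_le.1 ha₁).1]
  have hSa₀ : 0 ≤ S ^ 2 / a := by positivity
  have hSa : S ^ 2 / a ≤ 5 / 3 * S ^ 2 := by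
    rw [div_le_iff₀ (by positivity)]
    nlinarith [sq_nonneg S]
  set v := b - S ^ 2 / a with hv_def
  have hv : 1 / 4 ≤ v := by nlinarith [(abs_le.1 hb₁).1, sq_abs S, abs_nonneg S]
  have hv₁ : |v - 1| ≤ |b - 1| + 5 / 3 * S ^ 2 := by
    rw [hv_def, sub_right_comm]
    exact (abs_sub _ _).trans (by rw [abs_of_nonneg hSa₀]; linarith)
  have hexpand :
      |edgeCov p t α x y - S * gaussDensity v t * gaussDensity a t| ≤ 10 / 3 * S ^ 2 := by
    have h := abs_integral_centeredInd_mul_gaussTail_sub_le (by positivity : 0 < a) hv p (S / a) t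
    rw [← edgeCov_eq_integral_gaussianReal hα p t (by positivity) y,
      div_mul_cancel₀ S (by positivity)] at h
    have hcancel : (S / a) ^ 2 * a = S ^ 2 / a := by field_simp
    linarith
  have hdensity : |S * gaussDensity v t * gaussDensity a t - gaussDensity 1 t ^ 2 * S| ≤
      |S| * (4 * (|b - 1| + 5 / 3 * S ^ 2 + |a - 1|)) := by
    rw [mul_assoc, mul_comm _ S, ← mul_sub, abs_mul]
    gcongr
    exact (abs_gaussDensity_mul_sub_sq_le hv (by linarith) t).trans (by gcongr)
  have hcubic : |S| * S ^ 2 ≤ 2 / 5 * S ^ 2 := by gcongr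
  refine (abs_sub_le _ _ _).trans ((add_le_add hexpand hdensity).trans ?_)
  nlinarith [two_mul_le_add_sq |S| |a - 1|, two_mul_le_add_sq |S| |b - 1|, sq_abs S,
    sq_abs (a - 1), sq_abs (b - 1)]

lemma abs_edgeCov_sub_le (hα : ∀ i, 0 ≤ α i) (hp : p ∈ Set.Icc (0 : ℝ) 1) (t : ℝ)
    (x y : Fin d → ℝ) :
    |edgeCov p t α x y - gaussDensity 1 t ^ 2 * wdotp α x y| ≤ 12 * isotropyDefect α x y := by
  rcases le_or_gt (isotropyDefect α x y) (4 / 25) with hsmall | hlarge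
  · exact abs_edgeCov_sub_le_of_isotropyDefect_le hα p t hsmall
  · have hdensity : |gaussDensity 1 t ^ 2| ≤ 1 := by
      rw [abs_sq]
      exact pow_le_one₀ (gaussDensity_nonneg 1 t) (gaussDensity_le_one (by norm_num) t)
    have hdefect : |wdotp α x y| ^ 2 ≤ isotropyDefect α x y := by
      rw [sq_abs, isotropyDefect]
      linarith [sq_nonneg (quad α x - 1), sq_nonneg (quad α y - 1)]
    refine (abs_sub _ _).trans ((add_le_add (abs_edgeCov_le_one hα hp t x y) ?_).trans
      (?_ : 1 + |wdotp α x y| ≤ _))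
    · rw [abs_mul]
      exact mul_le_of_le_one_left (abs_nonneg _) hdensity
    · nlinarith [sq_nonneg (|wdotp α x y| - 2 / 5)]

lemma edgeCov_sq_le (hα : ∀ i, 0 ≤ α i) (hp : p ∈ Set.Icc (0 : ℝ) 1) (t : ℝ)
    (x y : Fin d → ℝ) : edgeCov p t α x y ^ 2 ≤ 25 * isotropyDefect α x y := by
  have hdensity : gaussDensity 1 t ^ 2 ≤ 1 :=
    pow_le_one₀ (gaussDensity_nonneg 1 t) (gaussDensity_le_one (by norm_num) t)
  have hexpand := abs_edgeCov_sub_le hα hp t x y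
  have hbound := abs_edgeCov_le_one hα hp t x y
  set ψ := edgeCov p t α x y
  set s := gaussDensity 1 t ^ 2 * wdotp α x y with hs
  have hs_sq : s ^ 2 ≤ isotropyDefect α x y := by
    have : s ^ 2 ≤ wdotp α x y ^ 2 := by
      rw [hs, mul_pow]
      exact mul_le_of_le_one_left (sq_nonneg _) (pow_le_one₀ (sq_nonneg _) hdensity)
    rw [isotropyDefect]
    linarith [sq_nonneg (quad α x - 1), sq_nonneg (quad α y - 1)]
  rcases le_or_gt |s| 1 with hs₁ | hs₁
  · have hsum : |ψ + s| ≤ 2 := (abs_add_le _ _).trans (by linarith)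
    have hdiff : (ψ - s) * (ψ + s) ≤ 12 * isotropyDefect α x y * 2 := by
      refine (le_abs_self _).trans ?_
      rw [abs_mul]
      gcongr
      exact (abs_nonneg _).trans hexpand
    linarith [sq_sub_sq ψ s, mul_comm (ψ - s) (ψ + s)]
  · have hψ : ψ ^ 2 ≤ 1 := (sq_le_one_iff_abs_le_one ψ).2 hbound
    have hs₂ : 1 ≤ s ^ 2 := (one_le_sq_iff_one_le_abs s).2 hs₁.le
    linarith

end EdgeCovariance

section Threshold

variable {d : ℕ} {α : Fin d → ℝ} {p t : ℝ}

lemma IsThreshold.measureReal_eq (ht : IsThreshold d α p t) (hp : 0 ≤ p) :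
    ((gaussPi d α).prod (gaussPi d α)).real {q | t ≤ dotp q.1 q.2} = p := by
  rw [Measure.real, ht, ENNReal.toReal_ofReal hp]

/-- Chebyshev's inequality for `⟨x, y⟩`, which has variance `‖α‖₂² = 1`. -/
lemma IsThreshold.sq_le (ht : IsThreshold d α p t) (hα : ∀ i, 0 ≤ α i) (hα₂ : ∑ i, α i ^ 2 = 1)
    (hp : p ∈ Set.Ioo (0 : ℝ) 1) : t ^ 2 ≤ 1 / (p * (1 - p)) := by
  obtain ⟨hp₀, hp₁⟩ := hp
  rcases eq_or_ne t 0 with rfl | ht₀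
  · rw [zero_pow two_ne_zero]
    exact (one_div_pos.2 (mul_pos hp₀ (sub_pos.2 hp₁))).le
  set ν := (gaussPi d α).prod (gaussPi d α)
  have hdotp (x y : Fin d → ℝ) : wdotp 1 x y = dotp x y := by simp [wdotp, dotp]
  have hint : Integrable (fun q => dotp q.1 q.2 ^ 2) ν := by
    simpa only [hdotp] using integrable_wdotp_sq_prod hα 1
  have hvar : ∫ q, dotp q.1 q.2 ^ 2 ∂ν = 1 := by
    have h := integral_wdotp_sq_prod hα 1
    simpa only [hdotp, Pi.one_apply, one_pow, one_mul, hα₂] using h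
  have hchebyshev : ν.real {q | |t| ≤ |dotp q.1 q.2|} ≤ 1 / t ^ 2 := by
    have h := measureReal_le_abs_le_integral_sq_div ν hint (abs_pos.2 ht₀)
    rwa [hvar, sq_abs] at h
  have hmin : p * (1 - p) ≤ ν.real {q | |t| ≤ |dotp q.1 q.2|} := by
    have hprob := ht.measureReal_eq hp₀.le
    rcases le_total 0 t with htn | htn
    · have hle : p ≤ ν.real {q | |t| ≤ |dotp q.1 q.2|} :=
        hprob.symm.trans_le (measureReal_mono fun q hq =>
          (abs_of_nonneg htn).trans_le (le_trans hq (le_abs_self _)))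
      nlinarith
    · have hle : 1 - p ≤ ν.real {q | |t| ≤ |dotp q.1 q.2|} := by
        have hcompl := probReal_compl_eq_one_sub (μ := ν) (s := {q | t ≤ dotp q.1 q.2})
          (measurableSet_le (by fun_prop) (by fun_prop))
        rw [hprob] at hcompl
        refine hcompl.symm.trans_le (measureReal_mono fun q hq => ?_)
        exact (abs_of_nonpos htn).trans_le
          ((neg_le_neg (lt_of_not_ge (a := dotp q.1 q.2) hq).le).trans (neg_le_abs _))
      nlinarith
  rw [le_div_iff₀ (mul_pos hp₀ (sub_pos.2 hp₁)), mul_comm, ← le_div_iff₀ (by positivity)]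
  exact hmin.trans hchebyshev

lemma gaussDensity_anti {v s : ℝ} (hv : 0 ≤ v) (h : t ^ 2 ≤ s ^ 2) :
    gaussDensity v s ≤ gaussDensity v t := by
  unfold gaussDensity
  gcongr

lemma IsThreshold.gaussDensity_one_le (ht : IsThreshold d α p t) (hα : ∀ i, 0 ≤ α i)
    (hα₂ : ∑ i, α i ^ 2 = 1) (hp : p ∈ Set.Ioo (0 : ℝ) 1) :
    gaussDensity 1 √(1 / (p * (1 - p))) ≤ gaussDensity 1 t := by
  refine gaussDensity_anti zero_le_one ?_
  rw [Real.sq_sqrt (one_div_nonneg.2 (mul_pos hp.1 (sub_pos.2 hp.2)).le)]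
  exact ht.sq_le hα hα₂ hp

lemma IsThreshold.integral_edgeMean (ht : IsThreshold d α p t) (hp : 0 ≤ p) :
    ∫ x, edgeMean p t α x ∂gaussPi d α = 0 := by
  unfold edgeMean
  rw [← integral_prod (fun q => edgeKernel p t q.1 q.2)
    (BoundedMeasurable.integrable (by fun_prop) _)]
  unfold edgeKernel
  rw [integral_centeredInd _ p (measurableSet_le (by fun_prop) (by fun_prop)),
    ht.measureReal_eq hp, sub_self]

lemma IsThreshold.integral_edgeMean_sq_le (ht : IsThreshold d α p t) (hα : ∀ i, 0 ≤ α i)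
    (hα₂ : ∑ i, α i ^ 2 = 1) (hp : 0 ≤ p) :
    ∫ x, edgeMean p t α x ^ 2 ∂gaussPi d α ≤ 16 * gaussianSqVar * ∑ i, α i ^ 4 := by
  set m := gaussTail 1 t - p
  have hpoint (x : Fin d → ℝ) :
      edgeMean p t α x ^ 2 ≤ 16 * (quad α x - 1) ^ 2 + 2 * m * edgeMean p t α x := by
    have hsq : (edgeMean p t α x - m) ^ 2 ≤ 16 * (quad α x - 1) ^ 2 := by
      have h := abs_gaussTail_sub_gaussTail_one_le (quad α x) t
      rw [edgeMean_eq hα, sub_sub_sub_cancel_right, ← sq_abs, ← sq_abs (quad α x - 1)]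
      exact (pow_le_pow_left₀ (abs_nonneg _) h 2).trans_eq (by ring)
    nlinarith [sq_nonneg m]
  have hquad := (integrable_quad_sub_sq α α 1).const_mul 16
  have hmean : Integrable (fun x => 2 * m * edgeMean p t α x) (gaussPi d α) :=
    BoundedMeasurable.integrable (by fun_prop) _
  calc ∫ x, edgeMean p t α x ^ 2 ∂gaussPi d α
      ≤ ∫ x, (16 * (quad α x - 1) ^ 2 + 2 * m * edgeMean p t α x) ∂gaussPi d α :=
        integral_mono (BoundedMeasurable.integrable (by fun_prop) _) (hquad.add hmean) hpoint
    _ = 16 * gaussianSqVar * ∑ i, α i ^ 4 := by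
        rw [integral_add hquad hmean, integral_const_mul, integral_const_mul,
          integral_quad_sub_one_sq hα hα₂, ht.integral_edgeMean hp]
        ring

end Threshold

section TriangleEnergy

variable {d : ℕ} {α : Fin d → ℝ} {p t : ℝ}

lemma marginal₂_triangleKernel (hp : p ∈ Set.Icc (0 : ℝ) 1) (t : ℝ) (α x y : Fin d → ℝ) :
    (triangleKernel hp t d).marginal₂ (gaussPi d α) x y =
      edgeKernel p t x y * (edgeCov p t α x y + edgeMean p t α x * edgeMean p t α y) := by
  rw [edgeCov, sub_add_cancel, ← integral_const_mul, SymmKernel.marginal₂]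
  exact integral_congr_ae (.of_forall fun z => mul_assoc _ _ _)

lemma marginal₂_triangleKernel_sq_le (hα : ∀ i, 0 ≤ α i) (hp : p ∈ Set.Icc (0 : ℝ) 1) (t : ℝ)
    (x y : Fin d → ℝ) :
    (triangleKernel hp t d).marginal₂ (gaussPi d α) x y ^ 2 ≤
      50 * isotropyDefect α x y + 2 * edgeMean p t α x ^ 2 := by
  have hedge : edgeKernel p t x y ^ 2 ≤ 1 :=
    (sq_le_one_iff_abs_le_one _).2 (abs_edgeKernel_le_one hp t x y)
  have hmean : edgeMean p t α y ^ 2 ≤ 1 :=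
    (sq_le_one_iff_abs_le_one _).2 (abs_edgeMean_le_one hp t α y)
  rw [marginal₂_triangleKernel, mul_pow]
  refine (mul_le_of_le_one_left (sq_nonneg _) hedge).trans ?_
  nlinarith [add_sq_le (a := edgeCov p t α x y) (b := edgeMean p t α x * edgeMean p t α y),
    edgeCov_sq_le hα hp t x y, sq_nonneg (edgeMean p t α x)]

lemma IsThreshold.energy_triangleKernel_le (ht : IsThreshold d α p t) (hα : ∀ i, 0 ≤ α i)
    (hα₂ : ∑ i, α i ^ 2 = 1) (hp : p ∈ Set.Icc (0 : ℝ) 1) :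
    (triangleKernel hp t d).energy (gaussPi d α) ≤
      (50 + 132 * gaussianSqVar) * ∑ i, α i ^ 4 := by
  have hdefect := (integrable_isotropyDefect hα).const_mul 50
  have hmean : Integrable (fun q : (Fin d → ℝ) × (Fin d → ℝ) => 2 * edgeMean p t α q.1 ^ 2)
      ((gaussPi d α).prod (gaussPi d α)) := BoundedMeasurable.integrable (by fun_prop) _
  have hmarginal : Integrable (fun q : (Fin d → ℝ) × (Fin d → ℝ) =>
      (triangleKernel hp t d).marginal₂ (gaussPi d α) q.1 q.2 ^ 2)
      ((gaussPi d α).prod (gaussPi d α)) := BoundedMeasurable.integrable (by fun_prop) _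
  rw [SymmKernel.energy, ← integral_prod _ hmarginal]
  calc ∫ q, (triangleKernel hp t d).marginal₂ (gaussPi d α) q.1 q.2 ^ 2
        ∂(gaussPi d α).prod (gaussPi d α)
      ≤ ∫ q, (50 * isotropyDefect α q.1 q.2 + 2 * edgeMean p t α q.1 ^ 2)
        ∂(gaussPi d α).prod (gaussPi d α) :=
        integral_mono hmarginal (hdefect.add hmean) fun q =>
          marginal₂_triangleKernel_sq_le hα hp t q.1 q.2
    _ ≤ (50 + 132 * gaussianSqVar) * ∑ i, α i ^ 4 := by
        rw [integral_add hdefect hmean, integral_const_mul, integral_const_mul,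
          integral_isotropyDefect hα hα₂, integral_fun_fst (fun x => edgeMean p t α x ^ 2),
          probReal_univ, one_smul]
        linarith [ht.integral_edgeMean_sq_le hα hα₂ hp.1]

end TriangleEnergy

section TriangleMean

variable {d : ℕ} {α : Fin d → ℝ} {p t : ℝ}

lemma integral_edgeKernel_mul_wdotp (hα : ∀ i, 0 ≤ α i) (p t : ℝ) (x : Fin d → ℝ) :
    ∫ y, edgeKernel p t x y * wdotp α x y ∂gaussPi d α =
      quad (fun i => α i ^ 2) x * gaussDensity (quad α x) t := by
  obtain ⟨e, he⟩ : ∃ e, e = fun i => x i * α i := ⟨_, rfl⟩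
  have hdotp (y : Fin d → ℝ) : wdotp α x y = dotp e y := by rw [wdotp_eq_dotp, he]
  have hcov : wdotp α x e = quad (fun i => α i ^ 2) x :=
    Finset.sum_congr rfl fun i _ => by rw [he]; ring
  simp only [hdotp]
  rcases eq_or_ne (quad α x) 0 with hx | hx
  · have hzero : e = 0 := by
      ext i
      have h := (Finset.sum_eq_zero_iff_of_nonneg
        fun i _ => mul_nonneg (sq_nonneg (x i)) (hα i)).1 hx i (Finset.mem_univ i)
      simpa [he] using h
    rw [← hcov, hzero]
    simp [dotp, wdotp]
  · have : Measurable fun u : ℝ => centeredInd p (t ≤ u) :=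
      (boundedMeasurable_centeredInd p measurableSet_Ici).measurable
    have hint : Integrable (fun y => edgeKernel p t x y * dotp e y) (gaussPi d α) :=
      BoundedMeasurable.integrable_mul (by fun_prop) (hasGaussianLaw_dotp α e).integrable
    have hinner (u l : ℝ) (v : ℝ≥0) :
        ∫ w, centeredInd p (t ≤ u) * (l * u + w) ∂gaussianReal 0 v =
          l * (centeredInd p (t ≤ u) * u) := by
      have hid : Integrable (fun w : ℝ => w) (gaussianReal 0 v) :=
        (memLp_id_gaussianReal 1).integrable le_rfl
      rw [integral_const_mul, integral_add (integrable_const _) hid, integral_id_gaussianReal,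
        integral_const, probReal_univ, one_smul, add_zero]
      ring
    refine (integral_dotp_dotp_eq_integral_integral hα hx
      (fun u w => centeredInd p (t ≤ u) * w) (by fun_prop) hint).trans ?_
    simp only [hinner]
    rw [integral_const_mul, integral_centeredInd_mul_id_gaussianReal
      (lt_of_le_of_ne (quad_nonneg hα x) hx.symm), ← mul_assoc, div_mul_cancel₀ _ hx, hcov]

lemma gaussDensity_one_sub_le (v x : ℝ) : gaussDensity 1 x - 4 * |v - 1| ≤ gaussDensity v x := by
  rcases le_or_gt (1 / 4) v with hv | hv
  · linarith [(abs_le.1 (abs_gaussDensity_sub_le_variance (by norm_num : (1 : ℝ) / 4 ≤ 1) hv x)).1]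
  · linarith [gaussDensity_le_one (v := 1) (by norm_num) x, gaussDensity_nonneg v x,
      neg_le_abs (v - 1)]

lemma sum_pow_three_sq_le (hα₂ : ∑ i, α i ^ 2 = 1) : (∑ i, α i ^ 3) ^ 2 ≤ ∑ i, α i ^ 4 := by
  have h := Finset.sum_mul_sq_le_sq_mul_sq Finset.univ α fun i => α i ^ 2
  simpa only [← pow_succ', ← pow_mul, hα₂, one_mul] using h

lemma sum_pow_six_le (hα₂ : ∑ i, α i ^ 2 = 1) : ∑ i, α i ^ 6 ≤ ∑ i, α i ^ 4 := by
  refine Finset.sum_le_sum fun i _ => ?_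
  have hle : α i ^ 2 ≤ 1 :=
    hα₂ ▸ Finset.single_le_sum (fun j _ => sq_nonneg (α j)) (Finset.mem_univ i)
  nlinarith [sq_nonneg (α i ^ 2)]

lemma integral_quad_sq_sq_le (hα : ∀ i, 0 ≤ α i) (hα₂ : ∑ i, α i ^ 2 = 1) :
    ∫ x, quad (fun i => α i ^ 2) x ^ 2 ∂gaussPi d α ≤ (1 + gaussianSqVar) * ∑ i, α i ^ 4 := by
  obtain ⟨c, hc⟩ : ∃ c, c = fun i => α i ^ 2 := ⟨_, rfl⟩
  rw [← hc]
  set r := ∑ i, c i * α i with hr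
  have hr_eq : r = ∑ i, α i ^ 3 :=
    Finset.sum_congr rfl fun i _ => by rw [hc, ← pow_succ]
  have hsum : ∑ i, c i ^ 2 * α i ^ 2 = ∑ i, α i ^ 6 :=
    Finset.sum_congr rfl fun i _ => by rw [hc]; ring
  have hsplit (x : Fin d → ℝ) : quad c x ^ 2 = (quad c x - r) ^ 2 + (2 * r * quad c x - r ^ 2) := by
    ring
  have hlinear : Integrable (fun x => 2 * r * quad c x) (gaussPi d α) :=
    (integrable_quad α c).const_mul _
  have hrest : Integrable (fun x => 2 * r * quad c x - r ^ 2) (gaussPi d α) :=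
    hlinear.sub (integrable_const _)
  simp only [hsplit]
  rw [integral_add (integrable_quad_sub_sq α c r) hrest, integral_sub hlinear (integrable_const _),
    integral_const_mul, integral_const, hr, integral_sq_quad_sub hα, integral_quad hα, ← hr, hsum,
    hr_eq, probReal_univ, one_smul]
  nlinarith [sum_pow_three_sq_le hα₂, sum_pow_six_le hα₂, gaussianSqVar_nonneg]

lemma integral_quad_mul_gaussDensity_ge (hα : ∀ i, 0 ≤ α i) (hα₂ : ∑ i, α i ^ 2 = 1) (t : ℝ)
    (hint : Integrable (fun x => quad (fun i => α i ^ 2) x * gaussDensity (quad α x) t)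
      (gaussPi d α)) :
    gaussDensity 1 t * ∑ i, α i ^ 3 - (2 + 4 * gaussianSqVar) * ∑ i, α i ^ 4 ≤
      ∫ x, quad (fun i => α i ^ 2) x * gaussDensity (quad α x) t ∂gaussPi d α := by
  have hmoment := integral_quad_sq_sq_le hα hα₂
  have hcube : ∑ i, α i ^ 2 * α i = ∑ i, α i ^ 3 :=
    Finset.sum_congr rfl fun i _ => (pow_succ _ _).symm
  have hnonneg (x : Fin d → ℝ) : 0 ≤ quad (fun i => α i ^ 2) x :=
    quad_nonneg (fun i => sq_nonneg (α i)) x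
  have hmean := integral_quad hα fun i => α i ^ 2
  obtain ⟨c, hc⟩ : ∃ c, c = fun i => α i ^ 2 := ⟨_, rfl⟩
  rw [← hc] at hint hmoment hmean ⊢
  simp only [← hc] at hnonneg
  have hpoint (x : Fin d → ℝ) :
      gaussDensity 1 t * quad c x - 2 * (quad c x ^ 2 + (quad α x - 1) ^ 2) ≤
        quad c x * gaussDensity (quad α x) t := by
    nlinarith [mul_le_mul_of_nonneg_left (gaussDensity_one_sub_le (quad α x) t) (hnonneg x),
      two_mul_le_add_sq (quad c x) |quad α x - 1|, sq_abs (quad α x - 1)]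
  have hlinear : Integrable (fun x => gaussDensity 1 t * quad c x) (gaussPi d α) :=
    (integrable_quad α c).const_mul _
  have hsquare : Integrable (fun x => quad c x ^ 2) (gaussPi d α) := (memLp_quad α c).integrable_sq
  have hdefect := integrable_quad_sub_sq α α 1
  have herror : Integrable (fun x => 2 * (quad c x ^ 2 + (quad α x - 1) ^ 2)) (gaussPi d α) :=
    (hsquare.add hdefect).const_mul 2
  have hdiff : Integrable (fun x => gaussDensity 1 t * quad c x -
      2 * (quad c x ^ 2 + (quad α x - 1) ^ 2)) (gaussPi d α) := hlinear.sub herror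
  refine le_trans ?_ (integral_mono hdiff hint hpoint)
  rw [integral_sub hlinear herror, integral_const_mul, integral_const_mul,
    integral_add hsquare hdefect, hmean, hcube, integral_quad_sub_one_sq hα hα₂]
  linarith

lemma marginal₂_triangleKernel_ge (hα : ∀ i, 0 ≤ α i) (hp : p ∈ Set.Icc (0 : ℝ) 1) (t : ℝ)
    (x y : Fin d → ℝ) :
    gaussDensity 1 t ^ 2 * (edgeKernel p t x y * wdotp α x y) - (12 * isotropyDefect α x y +
        (1 / 2 * edgeMean p t α x ^ 2 + 1 / 2 * edgeMean p t α y ^ 2)) ≤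
      (triangleKernel hp t d).marginal₂ (gaussPi d α) x y := by
  have hedge := abs_edgeKernel_le_one hp t x y
  have hcov : |edgeKernel p t x y * (edgeCov p t α x y - gaussDensity 1 t ^ 2 * wdotp α x y)| ≤
      12 * isotropyDefect α x y := by
    rw [abs_mul]
    exact (mul_le_of_le_one_left (abs_nonneg _) hedge).trans (abs_edgeCov_sub_le hα hp t x y)
  have hmean : |edgeKernel p t x y * (edgeMean p t α x * edgeMean p t α y)| ≤
      1 / 2 * edgeMean p t α x ^ 2 + 1 / 2 * edgeMean p t α y ^ 2 := by
    rw [abs_mul]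
    refine (mul_le_of_le_one_left (abs_nonneg _) hedge).trans ?_
    rw [abs_mul]
    nlinarith [two_mul_le_add_sq |edgeMean p t α x| |edgeMean p t α y|,
      sq_abs (edgeMean p t α x), sq_abs (edgeMean p t α y)]
  rw [marginal₂_triangleKernel]
  linarith [neg_le_of_abs_le hcov, neg_le_of_abs_le hmean]

lemma integrable_edgeKernel_mul_wdotp (hα : ∀ i, 0 ≤ α i) (p t : ℝ) :
    Integrable (fun q => edgeKernel p t q.1 q.2 * wdotp α q.1 q.2)
      ((gaussPi d α).prod (gaussPi d α)) :=
  BoundedMeasurable.integrable_mul (by fun_prop)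
    (((memLp_two_iff_integrable_sq (by fun_prop)).2 (integrable_wdotp_sq_prod hα α)).integrable
      one_le_two)

lemma integral_edgeKernel_mul_wdotp_prod_ge (hα : ∀ i, 0 ≤ α i) (hα₂ : ∑ i, α i ^ 2 = 1) (p t : ℝ) :
    gaussDensity 1 t * ∑ i, α i ^ 3 - (2 + 4 * gaussianSqVar) * ∑ i, α i ^ 4 ≤
      ∫ q, edgeKernel p t q.1 q.2 * wdotp α q.1 q.2 ∂(gaussPi d α).prod (gaussPi d α) := by
  have hint := integrable_edgeKernel_mul_wdotp hα p t
  have hfst := hint.integral_prod_left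
  rw [integral_prod _ hint]
  simp only [integral_edgeKernel_mul_wdotp hα] at hfst ⊢
  exact integral_quad_mul_gaussDensity_ge hα hα₂ t hfst

/-- The main term comes from the linear part `gaussDensity 1 t ^ 2 * wdotp α x y` of the edge
covariance, and all other contributions are of order `∑ i, α i ^ 4`. -/
lemma IsThreshold.mean_triangleKernel_ge (ht : IsThreshold d α p t) (hα : ∀ i, 0 ≤ α i)
    (hα₂ : ∑ i, α i ^ 2 = 1) (hp : p ∈ Set.Icc (0 : ℝ) 1) :
    gaussDensity 1 t ^ 3 * ∑ i, α i ^ 3 - (14 + 44 * gaussianSqVar) * ∑ i, α i ^ 4 ≤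
      (triangleKernel hp t d).mean (gaussPi d α) := by
  set ν := (gaussPi d α).prod (gaussPi d α)
  have hmain : Integrable
      (fun q => gaussDensity 1 t ^ 2 * (edgeKernel p t q.1 q.2 * wdotp α q.1 q.2)) ν :=
    (integrable_edgeKernel_mul_wdotp hα p t).const_mul _
  have hdefect : Integrable (fun q => 12 * isotropyDefect α q.1 q.2) ν :=
    (integrable_isotropyDefect hα).const_mul 12
  have hfst : Integrable (fun q : (Fin d → ℝ) × (Fin d → ℝ) => 1 / 2 * edgeMean p t α q.1 ^ 2) ν :=
    BoundedMeasurable.integrable (by fun_prop) _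
  have hsnd : Integrable (fun q : (Fin d → ℝ) × (Fin d → ℝ) => 1 / 2 * edgeMean p t α q.2 ^ 2) ν :=
    BoundedMeasurable.integrable (by fun_prop) _
  have hmeans : Integrable (fun q : (Fin d → ℝ) × (Fin d → ℝ) =>
      1 / 2 * edgeMean p t α q.1 ^ 2 + 1 / 2 * edgeMean p t α q.2 ^ 2) ν := hfst.add hsnd
  have herror : Integrable (fun q => 12 * isotropyDefect α q.1 q.2 +
      (1 / 2 * edgeMean p t α q.1 ^ 2 + 1 / 2 * edgeMean p t α q.2 ^ 2)) ν := hdefect.add hmeans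
  have hmarginal : Integrable (fun q : (Fin d → ℝ) × (Fin d → ℝ) =>
      (triangleKernel hp t d).marginal₂ (gaussPi d α) q.1 q.2) ν :=
    BoundedMeasurable.integrable (by fun_prop) _
  have hmono := (integral_mono (hmain.sub herror) hmarginal fun q =>
    marginal₂_triangleKernel_ge hα hp t q.1 q.2).trans_eq (integral_prod _ hmarginal)
  refine le_trans ?_ hmono
  have hdensity : gaussDensity 1 t ^ 2 ≤ 1 :=
    pow_le_one₀ (gaussDensity_nonneg 1 t) (gaussDensity_le_one (by norm_num) t)
  have hremainder : 0 ≤ (2 + 4 * gaussianSqVar) * ∑ i, α i ^ 4 :=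
    mul_nonneg (by linarith [gaussianSqVar_nonneg]) (Finset.sum_nonneg fun i _ => by positivity)
  rw [integral_sub' hmain herror, integral_add hdefect hmeans, integral_add hfst hsnd,
    integral_const_mul, integral_const_mul,
    integral_isotropyDefect hα hα₂, integral_fun_fst (fun x => 1 / 2 * edgeMean p t α x ^ 2),
    integral_fun_snd (fun x => 1 / 2 * edgeMean p t α x ^ 2), probReal_univ, one_smul,
    integral_const_mul]
  nlinarith [ht.integral_edgeMean_sq_le hα hα₂ hp.1,
    mul_le_mul_of_nonneg_left (integral_edgeKernel_mul_wdotp_prod_ge hα hα₂ p t)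
      (sq_nonneg (gaussDensity 1 t)), mul_le_of_le_one_left hremainder hdensity]

end TriangleMean

section Reflection

@[fun_prop]
lemma boundedMeasurable_sign {A : Type*} [MeasurableSpace A] {f : A → ℝ} (hf : Measurable f) :
    BoundedMeasurable fun a => Real.sign (f a) := by
  refine ⟨Measurable.ite (measurableSet_lt hf measurable_const) measurable_const
    (Measurable.ite (measurableSet_lt measurable_const hf) measurable_const measurable_const),
    1, fun a => ?_⟩
  rcases Real.sign_apply_eq (f a) with h | h | h <;> simp [h]

variable {d : ℕ}

/-- The reflection of `ℝ^d` changing the sign of the `m`-th coordinate. -/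
def reflect (m : Fin d) (y : Fin d → ℝ) : Fin d → ℝ := Function.update y m (-y m)

lemma measurePreserving_reflect (α : Fin d → ℝ) (m : Fin d) :
    MeasurePreserving (reflect m) (gaussPi d α) (gaussPi d α) := by
  have hpi : reflect m = fun y i => if i = m then -y i else y i := by
    ext y i
    obtain rfl | hi := eq_or_ne i m <;> simp_all [reflect]
  rw [hpi]
  refine measurePreserving_pi (f := fun i u => if i = m then -u else u) _ _ fun i => ?_
  obtain rfl | hi := eq_or_ne i m
  · simpa only [if_true, neg_zero] using
      (⟨measurable_neg, gaussianReal_map_neg⟩ : MeasurePreserving (fun u : ℝ => -u)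
        (gaussianReal 0 (α i).toNNReal) (gaussianReal (-0) (α i).toNNReal))
  · simpa only [hi, if_false] using
      (⟨measurable_id, Measure.map_id⟩ : MeasurePreserving (fun u : ℝ => u)
        (gaussianReal 0 (α i).toNNReal) (gaussianReal 0 (α i).toNNReal))

lemma integral_reflect (α : Fin d → ℝ) (m : Fin d) {F : (Fin d → ℝ) → ℝ} (hF : Measurable F) :
    ∫ y, F (reflect m y) ∂gaussPi d α = ∫ y, F y ∂gaussPi d α := by
  have h := measurePreserving_reflect α m
  rw [← integral_map h.aemeasurable hF.aestronglyMeasurable, h.map_eq]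

lemma reflect_self (m : Fin d) (y : Fin d → ℝ) : reflect m y m = -y m := Function.update_self ..

lemma quad_reflect (c : Fin d → ℝ) (m : Fin d) (y : Fin d → ℝ) :
    quad c (reflect m y) = quad c y := by
  refine Finset.sum_congr rfl fun i _ => ?_
  obtain rfl | hi := eq_or_ne i m <;> simp_all [reflect]

lemma dotp_eq_mul_add_dotp_update (m : Fin d) (x y : Fin d → ℝ) :
    dotp x y = x m * y m + dotp (Function.update x m 0) y := by
  unfold dotp
  rw [← Finset.add_sum_erase _ _ (Finset.mem_univ m),
    ← Finset.add_sum_erase _ (fun i => Function.update x m 0 i * y i) (Finset.mem_univ m),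
    Function.update_self, zero_mul, zero_add]
  exact congrArg _ <| Finset.sum_congr rfl fun i hi => by
    rw [Function.update_of_ne (Finset.ne_of_mem_erase hi)]

lemma dotp_update_zero_update_zero (m : Fin d) (x y : Fin d → ℝ) :
    dotp (Function.update x m 0) (Function.update y m 0) = dotp (Function.update x m 0) y := by
  refine Finset.sum_congr rfl fun i _ => ?_
  obtain rfl | hi := eq_or_ne i m <;> simp_all

lemma dotp_reflect (m : Fin d) (y z : Fin d → ℝ) :
    dotp (reflect m y) z = -(y m * z m) + dotp (Function.update y m 0) z := by
  rw [dotp_eq_mul_add_dotp_update m, reflect_self, neg_mul, reflect, Function.update_idem]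

lemma quad_update_zero_le {c : Fin d → ℝ} (hc : ∀ i, 0 ≤ c i) (m : Fin d) (x : Fin d → ℝ) :
    quad c (Function.update x m 0) ≤ quad c x := by
  refine Finset.sum_le_sum fun i _ => ?_
  obtain rfl | hi := eq_or_ne i m
  · simpa using mul_nonneg (sq_nonneg (x i)) (hc i)
  · simp [hi]

end Reflection

section LargeCoordinate

lemma measureReal_pi_eval_mem_and_update_mem {ι : Type*} [Fintype ι] [DecidableEq ι]
    {E : ι → Type*} [∀ i, MeasurableSpace (E i)] (μ : ∀ i, Measure (E i))
    [∀ i, IsProbabilityMeasure (μ i)] (i : ι) (b : E i) {A : Set (E i)} {S : Set (∀ i, E i)}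
    (hA : MeasurableSet A) (hS : MeasurableSet S) :
    (Measure.pi μ).real {x | x i ∈ A ∧ Function.update x i b ∈ S} =
      (μ i).real A * (Measure.pi μ).real {x | Function.update x i b ∈ S} := by
  have hmp := measurePreserving_update μ i
  have hmeas : MeasurableSet {x | x i ∈ A ∧ Function.update x i b ∈ S} :=
    (measurable_pi_apply i hA).inter ((by fun_prop : Measurable fun x => Function.update x i b) hS)
  have hpre : (fun z : (∀ i, E i) × E i => Function.update z.1 i z.2) ⁻¹'
      {x | x i ∈ A ∧ Function.update x i b ∈ S} = {x | Function.update x i b ∈ S} ×ˢ A := by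
    ext z
    simp [and_comm]
  rw [← hmp.measureReal_preimage hmeas.nullMeasurableSet, hpre, measureReal_prod_prod, mul_comm]

lemma half_le_measureReal_le {A : Type*} [MeasurableSpace A] {μ : Measure A}
    [IsProbabilityMeasure μ] {f : A → ℝ} (hf : Measurable f) (hf₀ : ∀ x, 0 ≤ f x)
    (hint : Integrable f μ) {a : ℝ} (ha : 0 < a) (hle : ∫ x, f x ∂μ ≤ a / 2) :
    1 / 2 ≤ μ.real {x | f x ≤ a} := by
  have hmarkov := mul_meas_ge_le_integral_of_nonneg (.of_forall hf₀) hint a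
  have hcompl := probReal_compl_eq_one_sub (μ := μ)
    (measurableSet_le hf (measurable_const (a := a)))
  have hsub : μ.real {x | f x ≤ a}ᶜ ≤ μ.real {x | a ≤ f x} :=
    measureReal_mono fun x hx => (lt_of_not_ge (b := f x) hx).le
  have hhalf : μ.real {x | a ≤ f x} ≤ 1 / 2 := by
    refine le_of_mul_le_mul_left ?_ ha
    linarith
  linarith

variable {v A : ℝ}

lemma gaussTail_pos (hv : 0 < v) (A : ℝ) : 0 < gaussTail v A := by
  refine ENNReal.toReal_pos (fun h => ?_) (measure_ne_top _ _)
  have hnull := gaussianReal_absolutelyContinuous' 0 (by simpa using hv) h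
  simp at hnull

lemma gaussTail_mono_variance {w : ℝ} (hv : 0 < v) (hvw : v ≤ w) (hA : 0 ≤ A) :
    gaussTail v A ≤ gaussTail w A := by
  rw [gaussTail_eq_gaussTail_one hv, gaussTail_eq_gaussTail_one (hv.trans_le hvw)]
  refine measureReal_mono (Set.Ici_subset_Ici.2 ?_)
  gcongr

variable {d : ℕ} {α : Fin d → ℝ} {ε a : ℝ}

/-- The coordinates other than the `m`-th are independent of the `m`-th one, and Markov's
inequality controls `F` with probability one half. -/
lemma half_gaussTail_le_measureReal {m : Fin d} (hε : 0 < ε) (hm : ε ≤ α m) (hA : 0 ≤ A)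
    {F : (Fin d → ℝ) → ℝ} (hF : Measurable F) (hF₀ : ∀ x, 0 ≤ F x)
    (hint : Integrable (fun x => F (Function.update x m 0)) (gaussPi d α)) (ha : 0 < a)
    (hle : ∫ x, F (Function.update x m 0) ∂gaussPi d α ≤ a / 2) :
    gaussTail ε A / 2 ≤ (gaussPi d α).real {x | A ≤ x m ∧ F (Function.update x m 0) ≤ a} := by
  have hind := measureReal_pi_eval_mem_and_update_mem (fun i => gaussianReal 0 (α i).toNNReal) m 0
    (measurableSet_Ici (a := A)) (measurableSet_le hF (measurable_const (a := a)))
  simp only [Set.mem_Ici, Set.mem_ofPred_eq] at hind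
  have hmarkov := half_le_measureReal_le (by fun_prop) (fun x => hF₀ _) hint ha hle
  calc gaussTail ε A / 2
      ≤ gaussTail (α m) A * (gaussPi d α).real {x | F (Function.update x m 0) ≤ a} := by
        rw [div_eq_mul_one_div]
        exact mul_le_mul (gaussTail_mono_variance hε hm hA) hmarkov (by norm_num)
          (gaussTail_mem_Icc _ _).1
    _ = (gaussPi d α).real {x | A ≤ x m ∧ F (Function.update x m 0) ≤ a} := hind.symm

lemma half_gaussTail_le_measureReal_quad (hα : ∀ i, 0 ≤ α i) (hα₂ : ∑ i, α i ^ 2 = 1)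
    {m : Fin d} (hε : 0 < ε) (hm : ε ≤ α m) (hA : 0 ≤ A) :
    gaussTail ε A / 2 ≤
      (gaussPi d α).real {x | A ≤ x m ∧ quad α (Function.update x m 0) ≤ 2} := by
  have hle (x : Fin d → ℝ) := quad_update_zero_le hα m x
  have hint : Integrable (fun x => quad α (Function.update x m 0)) (gaussPi d α) :=
    (integrable_quad α α).mono' (Measurable.aestronglyMeasurable (by fun_prop))
      (.of_forall fun x => by
        rw [Real.norm_of_nonneg (quad_nonneg hα _)]
        exact hle x)
  refine half_gaussTail_le_measureReal hε hm hA (by fun_prop) (quad_nonneg hα) hint two_pos ?_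
  refine (integral_mono hint (integrable_quad α α) hle).trans_eq ?_
  simp only [integral_quad hα, ← pow_two, hα₂]
  norm_num

lemma half_gaussTail_le_measureReal_dotp (hα : ∀ i, 0 ≤ α i) {m : Fin d} (hε : 0 < ε)
    (hm : ε ≤ α m) (hA : 0 ≤ A) {y : Fin d → ℝ} (hy : quad α (Function.update y m 0) ≤ 2) :
    gaussTail ε A / 2 ≤
      (gaussPi d α).real {z | A ≤ z m ∧ |dotp (Function.update y m 0) z| ≤ 2} := by
  have hint := integrable_dotp_sq α (Function.update y m 0)
  have h := half_gaussTail_le_measureReal (a := 2 ^ 2) hε hm hA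
    (F := fun z => dotp (Function.update y m 0) z ^ 2) (by fun_prop) (fun _ => sq_nonneg _)
    (by simpa only [dotp_update_zero_update_zero] using hint) (by norm_num)
    (by simpa only [dotp_update_zero_update_zero, integral_dotp_sq hα] using
      hy.trans (by norm_num))
  simpa only [dotp_update_zero_update_zero, sq_le_sq, Nat.abs_ofNat] using h

end LargeCoordinate

section SignCorrelation

variable {d : ℕ} {α : Fin d → ℝ} {p t ε A : ℝ}

/-- The correlation, given `y`, of the edge from `y` to `z` with agreement of the signs of the
`m`-th coordinates of `y` and `z`. -/
def edgeSignCorr (p t : ℝ) (α : Fin d → ℝ) (m : Fin d) (y : Fin d → ℝ) : ℝ :=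
  ∫ z, Real.sign (y m) * Real.sign (z m) * edgeKernel p t y z ∂gaussPi d α

@[fun_prop]
lemma boundedMeasurable_edgeSignCorr (p t : ℝ) (α : Fin d → ℝ) (m : Fin d)
    {B : Type*} [MeasurableSpace B] {f : B → Fin d → ℝ} (hf : Measurable f) :
    BoundedMeasurable fun b => edgeSignCorr p t α m (f b) := by
  unfold edgeSignCorr
  fun_prop

lemma edgeKernel_sub_edgeKernel_reflect (p t : ℝ) (m : Fin d) (y z : Fin d → ℝ) :
    edgeKernel p t y z - edgeKernel p t (reflect m y) z =
      (if t ≤ y m * z m + dotp (Function.update y m 0) z then 1 else 0) -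
        if t ≤ -(y m * z m) + dotp (Function.update y m 0) z then 1 else 0 := by
  rw [edgeKernel, edgeKernel, centeredInd, centeredInd, sub_sub_sub_cancel_right,
    dotp_eq_mul_add_dotp_update m, dotp_reflect]

lemma sign_mul_sign_mul_edgeKernel_sub_nonneg (p t : ℝ) (m : Fin d) (y z : Fin d → ℝ) :
    0 ≤ Real.sign (y m) * Real.sign (z m) *
      (edgeKernel p t y z - edgeKernel p t (reflect m y) z) := by
  rw [edgeKernel_sub_edgeKernel_reflect]
  rcases lt_trichotomy (y m) 0 with hy | hy | hy <;> rcases lt_trichotomy (z m) 0 with hz | hz | hz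
  case inl.inl =>
    have hyz := mul_pos_of_neg_of_neg hy hz
    rw [Real.sign_of_neg hy, Real.sign_of_neg hz]
    split_ifs <;> linarith
  case inl.inr.inr =>
    have hyz := mul_neg_of_neg_of_pos hy hz
    rw [Real.sign_of_neg hy, Real.sign_of_pos hz]
    split_ifs <;> linarith
  case inr.inr.inl =>
    have hyz := mul_neg_of_pos_of_neg hy hz
    rw [Real.sign_of_pos hy, Real.sign_of_neg hz]
    split_ifs <;> linarith
  case inr.inr.inr.inr =>
    have hyz := mul_pos hy hz
    rw [Real.sign_of_pos hy, Real.sign_of_pos hz]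
    split_ifs <;> linarith
  all_goals simp [*]

lemma sign_mul_sign_mul_edgeKernel_sub_eq_one (p : ℝ) (hA : 0 < A) (ht : 2 + |t| < A ^ 2)
    {m : Fin d} {y z : Fin d → ℝ} (hy : A ≤ y m) (hz : A ≤ z m)
    (hrest : |dotp (Function.update y m 0) z| ≤ 2) :
    Real.sign (y m) * Real.sign (z m) *
      (edgeKernel p t y z - edgeKernel p t (reflect m y) z) = 1 := by
  have hprod : A ^ 2 ≤ y m * z m := by nlinarith
  obtain ⟨hlower, hupper⟩ := abs_le.1 hrest
  have htle := le_abs_self t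
  have hleneg := neg_abs_le t
  rw [edgeKernel_sub_edgeKernel_reflect, Real.sign_of_pos (hA.trans_le hy),
    Real.sign_of_pos (hA.trans_le hz), if_pos (by linarith), if_neg (by linarith)]
  norm_num

lemma edgeSignCorr_add_edgeSignCorr_reflect (p t : ℝ) (α : Fin d → ℝ) (m : Fin d)
    (y : Fin d → ℝ) :
    edgeSignCorr p t α m y + edgeSignCorr p t α m (reflect m y) =
      ∫ z, Real.sign (y m) * Real.sign (z m) *
        (edgeKernel p t y z - edgeKernel p t (reflect m y) z) ∂gaussPi d α := by
  unfold edgeSignCorr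
  rw [← integral_add (BoundedMeasurable.integrable (by fun_prop) _)
    (BoundedMeasurable.integrable (by fun_prop) _)]
  refine integral_congr_ae (.of_forall fun z => ?_)
  simp only [reflect_self, Real.sign_neg]
  ring

lemma half_gaussTail_le_integral_sign_mul_sign_mul_edgeKernel_sub (hα : ∀ i, 0 ≤ α i) {m : Fin d}
    (hε : 0 < ε) (hm : ε ≤ α m) (p : ℝ) (hA : 0 < A) (ht : 2 + |t| < A ^ 2) {y : Fin d → ℝ}
    (hy : A ≤ y m) (hquad : quad α (Function.update y m 0) ≤ 2) :
    gaussTail ε A / 2 ≤ ∫ z, Real.sign (y m) * Real.sign (z m) *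
      (edgeKernel p t y z - edgeKernel p t (reflect m y) z) ∂gaussPi d α := by
  have hmarkov := mul_meas_ge_le_integral_of_nonneg (μ := gaussPi d α)
    (.of_forall fun z => sign_mul_sign_mul_edgeKernel_sub_nonneg p t m y z)
    (BoundedMeasurable.integrable (by fun_prop) _) 1
  rw [one_mul] at hmarkov
  refine (half_gaussTail_le_measureReal_dotp hα hε hm hA.le hquad).trans
    (le_trans (measureReal_mono fun z hz => ?_) hmarkov)
  exact (sign_mul_sign_mul_edgeKernel_sub_eq_one p hA ht hy hz.1 hz.2).ge

/-- Averaging over the reflection of the `m`-th coordinate turns the sign correlation into the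
integral of a nonnegative function, which equals `1` when `y m` and `z m` are large. -/
lemma gaussTail_sq_le_integral_edgeSignCorr (hα : ∀ i, 0 ≤ α i) (hα₂ : ∑ i, α i ^ 2 = 1)
    {m : Fin d} (hε : 0 < ε) (hm : ε ≤ α m) (p : ℝ) (hA : 0 < A) (ht : 2 + |t| < A ^ 2) :
    gaussTail ε A ^ 2 / 8 ≤ ∫ y, edgeSignCorr p t α m y ∂gaussPi d α := by
  have htail := (gaussTail_pos hε A).le
  have hreflect := (measurePreserving_reflect α m).measurable
  obtain ⟨S, hS⟩ : ∃ S : (Fin d → ℝ) → ℝ, S = fun y =>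
    edgeSignCorr p t α m y + edgeSignCorr p t α m (reflect m y) := ⟨_, rfl⟩
  have hSint : ∫ y, S y ∂gaussPi d α = 2 * ∫ y, edgeSignCorr p t α m y ∂gaussPi d α := by
    rw [hS, integral_add (BoundedMeasurable.integrable (by fun_prop) _)
      (BoundedMeasurable.integrable (by fun_prop) _),
      integral_reflect α m (F := edgeSignCorr p t α m)
        (boundedMeasurable_edgeSignCorr p t α m measurable_id).measurable, two_mul]
  have hSnonneg (y : Fin d → ℝ) : 0 ≤ S y := by
    simp only [hS, edgeSignCorr_add_edgeSignCorr_reflect]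
    exact integral_nonneg fun z => sign_mul_sign_mul_edgeKernel_sub_nonneg p t m y z
  have hmarkov := mul_meas_ge_le_integral_of_nonneg (μ := gaussPi d α) (.of_forall hSnonneg)
    (BoundedMeasurable.integrable (by rw [hS]; fun_prop) _) (gaussTail ε A / 2)
  have hevent : gaussTail ε A / 2 ≤ (gaussPi d α).real {y | gaussTail ε A / 2 ≤ S y} := by
    refine (half_gaussTail_le_measureReal_quad hα hα₂ hε hm hA.le).trans
      (measureReal_mono fun y hy => ?_)
    rw [Set.mem_ofPred_eq, hS]
    exact (half_gaussTail_le_integral_sign_mul_sign_mul_edgeKernel_sub hα hε hm p hA ht hy.1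
      hy.2).trans_eq (edgeSignCorr_add_edgeSignCorr_reflect p t α m y).symm
  nlinarith

end SignCorrelation

section Spike

variable {d : ℕ} {α : Fin d → ℝ} {p t ε : ℝ}

/-- The limit of `edgeKernel p t x y` as `x m` tends to infinity, for almost every `y`. -/
def spikeKernel (p : ℝ) (m : Fin d) (y : Fin d → ℝ) : ℝ := Real.sign (y m) / 2 + (1 / 2 - p)

@[fun_prop]
lemma boundedMeasurable_spikeKernel (p : ℝ) (m : Fin d) {B : Type*} [MeasurableSpace B]
    {f : B → Fin d → ℝ} (hf : Measurable f) :
    BoundedMeasurable fun b => spikeKernel p m (f b) := by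
  simp only [spikeKernel, div_eq_mul_inv]
  fun_prop

lemma abs_spikeKernel_le_one (hp : p ∈ Set.Icc (0 : ℝ) 1) (m : Fin d) (y : Fin d → ℝ) :
    |spikeKernel p m y| ≤ 1 := by
  obtain ⟨hp₀, hp₁⟩ := hp
  rw [spikeKernel, abs_le]
  rcases Real.sign_apply_eq (y m) with h | h | h <;> rw [h] <;> constructor <;> linarith

/-- The limit of the one-point marginal of `triangleKernel` at `x` as `x m` tends to infinity. -/
def spikeMarginal (p t : ℝ) (α : Fin d → ℝ) (m : Fin d) : ℝ :=
  ∫ q, spikeKernel p m q.1 * spikeKernel p m q.2 * edgeKernel p t q.1 q.2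
    ∂(gaussPi d α).prod (gaussPi d α)

lemma edgeMean_reflect (hα : ∀ i, 0 ≤ α i) (p t : ℝ) (m : Fin d) (y : Fin d → ℝ) :
    edgeMean p t α (reflect m y) = edgeMean p t α y := by
  rw [edgeMean_eq hα, edgeMean_eq hα, quad_reflect]

lemma integral_sign_mul_edgeMean (hα : ∀ i, 0 ≤ α i) (p t : ℝ) (m : Fin d) :
    ∫ y, Real.sign (y m) * edgeMean p t α y ∂gaussPi d α = 0 := by
  have h := integral_reflect α m (F := fun y => Real.sign (y m) * edgeMean p t α y)
    (BoundedMeasurable.measurable (by fun_prop))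
  simp only [edgeMean_reflect hα, reflect_self, Real.sign_neg, neg_mul, integral_neg] at h
  linarith

lemma IsThreshold.spikeMarginal_eq (ht : IsThreshold d α p t) (hα : ∀ i, 0 ≤ α i) (hp : 0 ≤ p)
    (m : Fin d) :
    spikeMarginal p t α m = 1 / 4 * ∫ y, edgeSignCorr p t α m y ∂gaussPi d α := by
  set ν := (gaussPi d α).prod (gaussPi d α)
  have hcorr : ∫ q, Real.sign (q.1 m) * Real.sign (q.2 m) * edgeKernel p t q.1 q.2 ∂ν =
      ∫ y, edgeSignCorr p t α m y ∂gaussPi d α :=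
    integral_prod _ (BoundedMeasurable.integrable (by fun_prop) _)
  have hfst : ∫ q, Real.sign (q.1 m) * edgeKernel p t q.1 q.2 ∂ν = 0 := by
    rw [integral_prod _ (BoundedMeasurable.integrable (by fun_prop) _)]
    simp only [integral_const_mul]
    exact integral_sign_mul_edgeMean hα p t m
  have hsnd : ∫ q, Real.sign (q.2 m) * edgeKernel p t q.1 q.2 ∂ν = 0 := by
    rw [← hfst, ← integral_prod_swap]
    simp only [Prod.fst_swap, Prod.snd_swap, edgeKernel_comm, ν]
  have hedge : ∫ q, edgeKernel p t q.1 q.2 ∂ν = 0 := by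
    rw [integral_prod _ (BoundedMeasurable.integrable (by fun_prop) _)]
    exact ht.integral_edgeMean hp
  have hexpand (q : (Fin d → ℝ) × (Fin d → ℝ)) :
      spikeKernel p m q.1 * spikeKernel p m q.2 * edgeKernel p t q.1 q.2 =
        1 / 4 * (Real.sign (q.1 m) * Real.sign (q.2 m) * edgeKernel p t q.1 q.2) +
        (1 / 2 - p) / 2 * (Real.sign (q.1 m) * edgeKernel p t q.1 q.2) +
        (1 / 2 - p) / 2 * (Real.sign (q.2 m) * edgeKernel p t q.1 q.2) +
        (1 / 2 - p) ^ 2 * edgeKernel p t q.1 q.2 := by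
    simp only [spikeKernel]
    ring
  simp only [spikeMarginal, hexpand]
  simp (disch := exact BoundedMeasurable.integrable (by fun_prop) _) only [integral_add,
    integral_const_mul]
  rw [hcorr, hfst, hsnd, hedge]
  ring

lemma edgeKernel_eq_spikeKernel {B L b : ℝ} (hL : 0 < L) (hB : |t| + b ≤ B) (p : ℝ) {m : Fin d}
    {x y : Fin d → ℝ} (hx : L ≤ x m) (hy : B / L < |y m|)
    (hrest : |dotp (Function.update x m 0) y| < b) : edgeKernel p t x y = spikeKernel p m y := by
  rw [div_lt_iff₀ hL] at hy
  obtain ⟨hlower, hupper⟩ := abs_lt.1 hrest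
  have htle := le_abs_self t
  have hleneg := neg_abs_le t
  rw [edgeKernel, centeredInd, spikeKernel, dotp_eq_mul_add_dotp_update m]
  rcases lt_trichotomy (y m) 0 with h | h | h
  · rw [abs_of_neg h] at hy
    rw [Real.sign_of_neg h, if_neg (by nlinarith)]
    ring
  · rw [h, abs_zero, zero_mul] at hy
    linarith [abs_nonneg t, (abs_nonneg _).trans_lt hrest]
  · rw [abs_of_pos h] at hy
    rw [Real.sign_of_pos h, if_pos (by nlinarith)]
    ring

lemma abs_edgeKernel_sub_spikeKernel_le_one (p t : ℝ) (m : Fin d)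
    (x y : Fin d → ℝ) : |edgeKernel p t x y - spikeKernel p m y| ≤ 1 := by
  rw [edgeKernel, centeredInd, spikeKernel, abs_le]
  rcases Real.sign_apply_eq (y m) with h | h | h <;> rw [h] <;> split_ifs <;> constructor <;>
    linarith

lemma integral_abs_edgeKernel_sub_spikeKernel_le (hα : ∀ i, 0 ≤ α i)
    (p : ℝ) {B L b : ℝ} (hL : 0 < L) (hb : 0 < b) (hB : |t| + b ≤ B)
    {m : Fin d} (hε : 0 < ε) (hm : ε ≤ α m) {x : Fin d → ℝ} (hx : L ≤ x m)
    (hquad : quad α (Function.update x m 0) ≤ 2) :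
    ∫ y, |edgeKernel p t x y - spikeKernel p m y| ∂gaussPi d α ≤
      2 * (B / L) * (√(2 * π * ε))⁻¹ + 2 / b ^ 2 := by
  have hαm : 0 < α m := hε.trans_le hm
  have hBL : 0 ≤ B / L := div_nonneg (by linarith [abs_nonneg t]) hL.le
  have hsmall : (gaussPi d α).real {y | |y m| ≤ B / L} ≤ 2 * (B / L) * (√(2 * π * ε))⁻¹ := by
    have hmap := (measurePreserving_eval_gaussPi α m).measureReal_preimage
      (measurableSet_Icc (a := -(B / L)) (b := B / L)).nullMeasurableSet
    have hIcc : {y : Fin d → ℝ | |y m| ≤ B / L} =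
        (fun z : Fin d → ℝ => z m) ⁻¹' Set.Icc (-(B / L)) (B / L) := by
      ext y
      simp [abs_le]
    rw [hIcc, hmap]
    refine (gaussianReal_real_Icc_le 0 (by simpa using hαm) (by linarith)).trans ?_
    rw [Real.coe_toNNReal _ hαm.le, sub_neg_eq_add, ← two_mul]
    gcongr
  have hlarge : (gaussPi d α).real {y | b ≤ |dotp (Function.update x m 0) y|} ≤ 2 / b ^ 2 := by
    refine (measureReal_le_abs_le_integral_sq_div _ (integrable_dotp_sq α _) hb).trans ?_
    rw [integral_dotp_sq hα]
    gcongr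
  refine le_trans ?_ ((measureReal_union_le _ _).trans (add_le_add hsmall hlarge))
  rw [Measure.real, ← ENNReal.ofReal_le_iff_le_toReal (measure_ne_top _ _)]
  refine integral_le_measure (fun y _ => abs_edgeKernel_sub_spikeKernel_le_one p t m x y)
    fun y hy => ?_
  obtain ⟨hy₁, hy₂⟩ := not_or.1 hy
  rw [edgeKernel_eq_spikeKernel hL hB p hx (lt_of_not_ge hy₁) (lt_of_not_ge hy₂), sub_self,
    abs_zero]

/-- Replacing `edgeKernel p t x` by `spikeKernel p m` one factor at a time. -/
lemma spikeKernel_mul_sub_le_triangleKernel (hp : p ∈ Set.Icc (0 : ℝ) 1) (t : ℝ) (m : Fin d)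
    (x y z : Fin d → ℝ) :
    spikeKernel p m y * spikeKernel p m z * edgeKernel p t y z -
        (|edgeKernel p t x y - spikeKernel p m y| + |edgeKernel p t x z - spikeKernel p m z|) ≤
      triangleKernel hp t d x y z := by
  have hyz := abs_edgeKernel_le_one hp t y z
  have hfirst : |(edgeKernel p t x y - spikeKernel p m y) * edgeKernel p t x z *
      edgeKernel p t y z| ≤ |edgeKernel p t x y - spikeKernel p m y| := by
    rw [mul_assoc, abs_mul, abs_mul]
    exact mul_le_of_le_one_right (abs_nonneg _)
      (mul_le_one₀ (abs_edgeKernel_le_one hp t x z) (abs_nonneg _) hyz)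
  have hsecond : |(edgeKernel p t x z - spikeKernel p m z) * spikeKernel p m y *
      edgeKernel p t y z| ≤ |edgeKernel p t x z - spikeKernel p m z| := by
    rw [mul_assoc, abs_mul, abs_mul]
    exact mul_le_of_le_one_right (abs_nonneg _)
      (mul_le_one₀ (abs_spikeKernel_le_one hp m y) (abs_nonneg _) hyz)
  have htriangle : triangleKernel hp t d x y z =
      edgeKernel p t x y * edgeKernel p t x z * edgeKernel p t y z := rfl
  rw [htriangle]
  linarith [(abs_le.1 hfirst).1, (abs_le.1 hsecond).1]

lemma spikeMarginal_sub_le_marginal₁ (hp : p ∈ Set.Icc (0 : ℝ) 1) (t : ℝ) (α : Fin d → ℝ)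
    (m : Fin d) (x : Fin d → ℝ) :
    spikeMarginal p t α m - 2 * ∫ y, |edgeKernel p t x y - spikeKernel p m y| ∂gaussPi d α ≤
      (triangleKernel hp t d).marginal₁ (gaussPi d α) x := by
  have hmarginal : (triangleKernel hp t d).marginal₁ (gaussPi d α) x =
      ∫ q, triangleKernel hp t d x q.1 q.2 ∂(gaussPi d α).prod (gaussPi d α) :=
    (integral_prod (fun q => triangleKernel hp t d x q.1 q.2)
      (BoundedMeasurable.integrable (by fun_prop) _)).symm
  have hmono := integral_mono
    (BoundedMeasurable.integrable (by fun_prop) ((gaussPi d α).prod (gaussPi d α)))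
    (BoundedMeasurable.integrable (by fun_prop) _)
    fun q : (Fin d → ℝ) × (Fin d → ℝ) => spikeKernel_mul_sub_le_triangleKernel hp t m x q.1 q.2
  simp (disch := exact BoundedMeasurable.integrable (by fun_prop) _) only [integral_sub,
    integral_add] at hmono
  rw [integral_fun_fst fun y => |edgeKernel p t x y - spikeKernel p m y|,
    integral_fun_snd fun y => |edgeKernel p t x y - spikeKernel p m y|] at hmono
  simp only [probReal_univ, one_smul] at hmono
  rw [hmarginal, spikeMarginal]
  linarith

lemma exists_le_measureReal_marginal₁_triangleKernel (hp : p ∈ Set.Icc (0 : ℝ) 1) {T : ℝ}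
    (hT : 0 ≤ T) (hε : 0 < ε) :
    ∃ c > 0, ∃ δ > 0, ∀ (d : ℕ) (α : Fin d → ℝ) (t : ℝ) (m : Fin d), (∀ i, 0 ≤ α i) →
      ∑ i, α i ^ 2 = 1 → IsThreshold d α p t → |t| ≤ T → ε ≤ α m →
      δ ≤ (gaussPi d α).real {x | 2 * c ≤ (triangleKernel hp t d).marginal₁ (gaussPi d α) x} := by
  obtain ⟨w, hw⟩ : ∃ w, w = gaussTail ε (2 + T) := ⟨_, rfl⟩
  have hw₀ : 0 < w := hw ▸ gaussTail_pos hε _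
  have hw₁ : w ≤ 1 := hw ▸ (gaussTail_mem_Icc _ _).2
  obtain ⟨c, hc⟩ : ∃ c, c = w ^ 2 / 128 := ⟨_, rfl⟩
  have hc₀ : 0 < c := hc ▸ by positivity
  have hc₁ : c ≤ 1 := by nlinarith
  obtain ⟨b, hb⟩ : ∃ b, b = 2 / c := ⟨_, rfl⟩
  have hb₀ : 0 < b := hb ▸ by positivity
  obtain ⟨L, hL⟩ : ∃ L, L = 4 * (T + b) / (√(2 * π * ε) * c) := ⟨_, rfl⟩
  have hL₀ : 0 < L := hL ▸ by positivity
  refine ⟨c, hc₀, gaussTail ε L / 2, half_pos (gaussTail_pos hε L), ?_⟩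
  intro d α t m hα hα₂ ht htT hm
  refine (half_gaussTail_le_measureReal_quad hα hα₂ hε hm hL₀.le).trans
    (measureReal_mono fun x hx => ?_)
  have hspike : 4 * c ≤ spikeMarginal p t α m := by
    rw [ht.spikeMarginal_eq hα hp.1, hc, hw]
    have hsign := gaussTail_sq_le_integral_edgeSignCorr (t := t) (A := 2 + T) hα hα₂ hε hm p
      (by linarith) (by nlinarith)
    linarith
  have herror := integral_abs_edgeKernel_sub_spikeKernel_le (B := T + b) hα p hL₀ hb₀
    (add_le_add_left htT b) hε hm hx.1 hx.2
  have hnear : 2 * ((T + b) / L) * (√(2 * π * ε))⁻¹ = c / 2 := by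
    rw [hL]
    field_simp
    norm_num
  have hfar : 2 / b ^ 2 ≤ c / 2 := by
    rw [hb, div_pow, div_div_eq_mul_div, div_le_div_iff₀ (by norm_num) (by norm_num)]
    nlinarith
  have hmarginal := spikeMarginal_sub_le_marginal₁ hp t α m x
  rw [Set.mem_ofPred_eq]
  linarith

end Spike

section PowerSums

variable {d : ℕ} {α : Fin d → ℝ}

lemma sum_pow_three_pos (hα : ∀ i, 0 ≤ α i) (hα₂ : ∑ i, α i ^ 2 = 1) : 0 < ∑ i, α i ^ 3 := by
  obtain ⟨i, hi, hne⟩ := Finset.exists_ne_zero_of_sum_ne_zero (hα₂.trans_ne one_ne_zero)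
  exact Finset.sum_pos' (fun j _ => pow_nonneg (hα j) 3)
    ⟨i, hi, pow_pos ((hα i).lt_of_ne' (pow_ne_zero_iff two_ne_zero |>.1 hne)) 3⟩

lemma sum_pow_three_le_one (hα : ∀ i, 0 ≤ α i) (hα₂ : ∑ i, α i ^ 2 = 1) :
    ∑ i, α i ^ 3 ≤ 1 := by
  rw [← hα₂]
  refine Finset.sum_le_sum fun i _ => pow_le_pow_of_le_one (hα i) ?_ (by norm_num)
  refine (sq_le_one_iff₀ (hα i)).1 ?_
  exact hα₂ ▸ Finset.single_le_sum (fun j _ => sq_nonneg (α j)) (Finset.mem_univ i)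

lemma exists_sum_pow_three_le (hα₂ : ∑ i, α i ^ 2 = 1) : ∃ m, ∑ i, α i ^ 3 ≤ α m := by
  obtain ⟨i, -, -⟩ := Finset.exists_ne_zero_of_sum_ne_zero (hα₂.trans_ne one_ne_zero)
  have : Nonempty (Fin d) := ⟨i⟩
  obtain ⟨m, hm⟩ := Finite.exists_max α
  refine ⟨m, ?_⟩
  calc ∑ i, α i ^ 3 ≤ ∑ i, α m * α i ^ 2 := Finset.sum_le_sum fun i _ => by
        rw [pow_succ']
        exact mul_le_mul_of_nonneg_right (hm i) (sq_nonneg _)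
    _ = α m := by rw [← Finset.mul_sum, hα₂, mul_one]

lemma sum_pow_four_pow_three_le (hα : ∀ i, 0 ≤ α i) :
    (∑ i, α i ^ 4) ^ 3 ≤ (∑ i, α i ^ 3) ^ 4 := by
  have hsum_nonneg : 0 ≤ ∑ i, α i ^ 3 := Finset.sum_nonneg fun i _ => pow_nonneg (hα i) 3
  rcases isEmpty_or_nonempty (Fin d) with _ | _
  · simp
  obtain ⟨m, hm⟩ := Finite.exists_max α
  have hfour : ∑ i, α i ^ 4 ≤ α m * ∑ i, α i ^ 3 := by
    rw [Finset.mul_sum]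
    refine Finset.sum_le_sum fun i _ => ?_
    rw [pow_succ']
    exact mul_le_mul_of_nonneg_right (hm i) (pow_nonneg (hα i) 3)
  have hmax : α m ^ 3 ≤ ∑ i, α i ^ 3 :=
    Finset.single_le_sum (f := fun i => α i ^ 3) (fun i _ => pow_nonneg (hα i) 3)
      (Finset.mem_univ m)
  calc (∑ i, α i ^ 4) ^ 3 ≤ (α m * ∑ i, α i ^ 3) ^ 3 :=
        pow_le_pow_left₀ (Finset.sum_nonneg fun i _ => pow_nonneg (hα i) 4) hfour 3
    _ = α m ^ 3 * (∑ i, α i ^ 3) ^ 3 := mul_pow _ _ _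
    _ ≤ (∑ i, α i ^ 3) * (∑ i, α i ^ 3) ^ 3 := by gcongr
    _ = (∑ i, α i ^ 3) ^ 4 := (pow_succ' _ 3).symm

lemma nrm_nonneg (hα : ∀ i, 0 ≤ α i) (q : ℕ) : 0 ≤ nrm q α :=
  Real.rpow_nonneg (Finset.sum_nonneg fun i _ => pow_nonneg (hα i) q) _

lemma nrm_pow (hα : ∀ i, 0 ≤ α i) {q : ℕ} (hq : q ≠ 0) : nrm q α ^ q = ∑ i, α i ^ q := by
  rw [nrm, one_div]
  exact Real.rpow_inv_natCast_pow (Finset.sum_nonneg fun i _ => pow_nonneg (hα i) q) hq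

end PowerSums

section Scaling

variable {d : ℕ} {α : Fin d → ℝ} {b : ℝ}

lemma measurePreserving_sqrt_mul_gaussPi (α : Fin d → ℝ) (hb : 0 ≤ b) :
    MeasurePreserving (fun x i => √b * x i) (gaussPi d α) (gaussPi d fun i => b * α i) := by
  refine measurePreserving_pi (f := fun _ u => √b * u) _ _ fun i => ⟨by fun_prop, ?_⟩
  rw [gaussianReal_map_const_mul, mul_zero]
  congr 1
  ext
  simp [Real.sq_sqrt hb, hb, mul_max_of_nonneg]

lemma dotp_sqrt_mul (hb : 0 ≤ b) (x y : Fin d → ℝ) :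
    dotp (fun i => √b * x i) (fun i => √b * y i) = b * dotp x y := by
  rw [dotp, dotp, Finset.mul_sum]
  exact Finset.sum_congr rfl fun i _ => by rw [mul_mul_mul_comm, Real.mul_self_sqrt hb]

lemma geomGraph_mul (n : ℕ) (α : Fin d → ℝ) (hb : 0 < b) (t : ℝ) :
    geomGraph n d (fun i => b * α i) (b * t) = geomGraph n d α t := by
  have hscale : MeasurePreserving (fun (X : Fin n → Fin d → ℝ) j i => √b * X j i)
      (sampleMeasure n d α) (sampleMeasure n d fun i => b * α i) :=
    measurePreserving_pi (f := fun _ (x : Fin d → ℝ) i => √b * x i) _ _ fun _ =>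
      measurePreserving_sqrt_mul_gaussPi α hb.le
  rw [geomGraph, ← hscale.map_eq,
    Measure.map_map (measurable_geomGraph_fromRel d _) hscale.measurable, geomGraph]
  simp only [Function.comp_def, dotp_sqrt_mul hb.le, mul_le_mul_iff_right₀ hb]

lemma IsThreshold.mul {p t : ℝ} (ht : IsThreshold d α p t) (hb : 0 < b) :
    IsThreshold d (fun i => b * α i) p (b * t) := by
  have hscale := (measurePreserving_sqrt_mul_gaussPi α hb.le).prod
    (measurePreserving_sqrt_mul_gaussPi α hb.le)
  rw [IsThreshold, ← hscale.measure_preimage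
    (measurableSet_le (by fun_prop) (by fun_prop)).nullMeasurableSet, ← ht]
  congr 1
  ext q
  simp only [Set.mem_preimage, Set.mem_ofPred_eq, Prod.map, dotp_sqrt_mul hb.le,
    mul_le_mul_iff_right₀ hb]

lemma gaussTail_zero (t : ℝ) : gaussTail 0 t = if t ≤ 0 then 1 else 0 := by
  rw [gaussTail, Real.toNNReal_zero, gaussianReal_zero_var]
  simp [Measure.real, Set.indicator_apply, apply_ite]

lemma IsThreshold.nrm_two_pos {p t : ℝ} (ht : IsThreshold d α p t) (hα : ∀ i, 0 ≤ α i)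
    (hp : p ∈ Set.Ioo (0 : ℝ) 1) : 0 < nrm 2 α := by
  refine (nrm_nonneg hα 2).lt_of_ne' fun hzero => ?_
  have hsum : ∑ i, α i ^ 2 = 0 := by rw [← nrm_pow hα two_ne_zero, hzero, zero_pow two_ne_zero]
  have hα₀ (i : Fin d) : α i = 0 := by
    simpa using (Finset.sum_eq_zero_iff_of_nonneg fun i _ => sq_nonneg (α i)).1 hsum i
  have hmean := ht.integral_edgeMean hp.1.le
  simp only [edgeMean_eq hα, quad, hα₀, mul_zero, Finset.sum_const_zero, integral_const,
    probReal_univ, one_smul, gaussTail_zero] at hmean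
  obtain ⟨hp₀, hp₁⟩ := hp
  split_ifs at hmean <;> linarith

lemma sum_nrm_inv_mul_pow (hα : ∀ i, 0 ≤ α i) (k : ℕ) {q : ℕ} (hq : q ≠ 0) :
    ∑ i, ((nrm k α)⁻¹ * α i) ^ q = (nrm q α / nrm k α) ^ q := by
  simp only [mul_pow, ← Finset.mul_sum, ← nrm_pow hα hq]
  rw [← mul_pow, inv_mul_eq_div]

end Scaling

section Separation

lemma two_ninths_mul_sq_le {n : ℕ} (hn : 3 ≤ n) :
    2 / 9 * (n : ℝ) ^ 2 ≤ ((n : ℝ) - 1) * (n - 2) := by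
  have hn' : (3 : ℝ) ≤ n := by exact_mod_cast hn
  nlinarith

namespace SymmKernel

variable {E : Type*} [MeasurableSpace E] (H : SymmKernel E) (μ : Measure E)
  [IsProbabilityMeasure μ] {n : ℕ}

lemma measureReal_abs_uStatistic_le_le_of_mean (hn : 3 ≤ n) (hmean : H.mean μ ≠ 0) :
    (Measure.pi fun _ : Fin n => μ).real {X | |H.uStatistic X| ≤ n ^ 3 * |H.mean μ| / 9} ≤
      891000 * (H.energy μ / (n * H.mean μ ^ 2) + 1 / (n ^ 3 * H.mean μ ^ 2)) := by
  obtain ⟨N, hN⟩ : ∃ N : ℝ, N = n * (n - 1) * (n - 2) := ⟨_, rfl⟩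
  have hn₀ : (0 : ℝ) < n := by exact_mod_cast (by omega : 0 < n)
  have hNge : 2 / 9 * (n : ℝ) ^ 3 ≤ N := by
    have := mul_le_mul_of_nonneg_left (two_ninths_mul_sq_le hn) hn₀.le
    linarith
  have hm₀ : 0 < |H.mean μ| := abs_pos.2 hmean
  have hcheb := measureReal_le_abs_le_integral_sq_div (Measure.pi fun _ : Fin n => μ)
    (f := fun X => H.uStatistic X - N * H.mean μ) (BoundedMeasurable.integrable (by fun_prop) _)
    (a := n ^ 3 * |H.mean μ| / 9) (by positivity)
  have hsub : {X : Fin n → E | |H.uStatistic X| ≤ n ^ 3 * |H.mean μ| / 9} ⊆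
      {X | n ^ 3 * |H.mean μ| / 9 ≤ |H.uStatistic X - N * H.mean μ|} := by
    intro X (hX : |H.uStatistic X| ≤ _)
    have htriangle := abs_sub_abs_le_abs_sub (N * H.mean μ) (H.uStatistic X)
    rw [abs_sub_comm, abs_mul, abs_of_pos (lt_of_lt_of_le (by positivity) hNge)] at htriangle
    have hNm := mul_le_mul_of_nonneg_right hNge hm₀.le
    rw [Set.mem_ofPred_eq]
    linarith
  calc _ ≤ 11000 * (n ^ 5 * H.energy μ + n ^ 3) / (n ^ 3 * |H.mean μ| / 9) ^ 2 := by
        refine (measureReal_mono hsub).trans (hcheb.trans ?_)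
        rw [hN]
        gcongr
        exact H.integral_sq_uStatistic_sub_mean_le μ (by omega)
    _ = 891000 * (H.energy μ / (n * H.mean μ ^ 2) + 1 / (n ^ 3 * H.mean μ ^ 2)) := by
        rw [div_pow, mul_pow, sq_abs]
        field_simp
        ring

lemma measureReal_le_abs_uStatistic_sub_projection_le (hn : 1 ≤ n) {K : ℝ} (hK : 0 < K) :
    (Measure.pi fun _ : Fin n => μ).real {X | K * n ^ 2 ≤
        |H.uStatistic X - n * (n - 1) * (n - 2) * H.mean μ
          - 3 * (((n : ℝ) - 1) * (n - 2)) * ∑ i, H.hoeffding₁ μ (X i)|} ≤ 10000 / K ^ 2 := by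
  have hn₁ : (1 : ℝ) ≤ n := by exact_mod_cast hn
  refine (measureReal_le_abs_le_integral_sq_div _
    (BoundedMeasurable.integrable (by fun_prop) _) (by positivity)).trans ?_
  calc _ ≤ 5000 * (n ^ 4 * H.energy μ + n ^ 3) / (K * n ^ 2) ^ 2 := by
        gcongr
        exact H.integral_sq_uStatistic_sub_projection_le μ hn
    _ ≤ 5000 * (n ^ 4 * 1 + n ^ 4) / (K * n ^ 2) ^ 2 := by
        gcongr
        · exact H.energy_le_one μ
        · norm_num
    _ = 10000 / K ^ 2 := by
        field_simp
        norm_num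

/-- Anticoncentration of the Hájek projection of the U-statistic: outside an event controlled by
Chebyshev's inequality, a small value of the U-statistic forces the sum of the one-point marginals
into an interval of bounded length. -/
lemma measureReal_abs_uStatistic_le_le_of_variance (hn : 3 ≤ n) {K η : ℝ} (hK : 0 < K)
    (hη : 0 < η) :
    (Measure.pi fun _ : Fin n => μ).real {X | |H.uStatistic X| ≤ K * n ^ 2} ≤
      10000 / K ^ 2 + 2 * (rexp (-(n * Var[H.marginal₁ μ; μ] * η ^ 2 / (5 * (3 * K) ^ 2))) + η +
        1 / (3 * K) ^ 2) := by
  obtain ⟨R, hR⟩ : ∃ R : (Fin n → E) → ℝ, R = fun X => H.uStatistic X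
    - n * (n - 1) * (n - 2) * H.mean μ
    - 3 * (((n : ℝ) - 1) * (n - 2)) * ∑ i, H.hoeffding₁ μ (X i) := ⟨_, rfl⟩
  have hrest : (Measure.pi fun _ : Fin n => μ).real {X | K * n ^ 2 ≤ |R X|} ≤ 10000 / K ^ 2 :=
    hR ▸ H.measureReal_le_abs_uStatistic_sub_projection_le μ (by omega) hK
  have hsum := measureReal_abs_sum_sub_le_le μ (f := H.marginal₁ μ)
    (H.boundedMeasurable_marginal₁ μ measurable_id).measurable (H.abs_marginal₁_le_one μ) n
    (2 / 3 * n * H.mean μ) (L := 3 * K) (by positivity) hη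
  refine (measureReal_mono fun X hX => ?_).trans
    ((measureReal_union_le _ _).trans (add_le_add hrest hsum))
  rw [Set.mem_union, Set.mem_ofPred_eq, Set.mem_ofPred_eq, or_iff_not_imp_left, not_le]
  intro hRX
  have hprojection : 3 * (((n : ℝ) - 1) * (n - 2)) *
      (∑ i, H.marginal₁ μ (X i) - 2 / 3 * n * H.mean μ) = H.uStatistic X - R X := by
    simp only [hR, hoeffding₁, Finset.sum_sub_distrib, Finset.sum_const, Finset.card_univ,
      Fintype.card_fin, nsmul_eq_mul]
    ring
  have hbound := (congrArg abs hprojection).le.trans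
    ((abs_sub _ _).trans (add_le_add hX hRX.le))
  have hcoeff := two_ninths_mul_sq_le hn
  rw [abs_mul, abs_of_nonneg (by linarith [sq_nonneg (n : ℝ)])] at hbound
  have hscaled := mul_le_mul_of_nonneg_right hcoeff
    (abs_nonneg (∑ i, H.marginal₁ μ (X i) - 2 / 3 * n * H.mean μ))
  have : (0 : ℝ) < n := by exact_mod_cast (by omega : 0 < n)
  refine le_of_mul_le_mul_left (a := 2 / 3 * (n : ℝ) ^ 2) ?_ (by positivity)
  linarith

end SymmKernel

variable {p : ℝ} {n d : ℕ}

lemma one_sub_le_tvDist_of_mean_ne_zero (hp : p ∈ Set.Icc (0 : ℝ) 1) (hn : 3 ≤ n)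
    (α : Fin d → ℝ) (t : ℝ) (hmean : (triangleKernel hp t d).mean (gaussPi d α) ≠ 0) :
    1 - 900000 * ((triangleKernel hp t d).energy (gaussPi d α) /
          (n * (triangleKernel hp t d).mean (gaussPi d α) ^ 2) +
        1 / (n ^ 3 * (triangleKernel hp t d).mean (gaussPi d α) ^ 2)) ≤
      tvDist (Measure.map (signedTriangles p) (erGraph n p))
        (Measure.map (signedTriangles p) (geomGraph n d α t)) := by
  have hsmall := (triangleKernel hp t d).measureReal_abs_uStatistic_le_le_of_mean
    (gaussPi d α) hn hmean
  have henergy := (triangleKernel hp t d).energy_nonneg (gaussPi d α)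
  obtain ⟨m, hm⟩ : ∃ m, m = (triangleKernel hp t d).mean (gaussPi d α) := ⟨_, rfl⟩
  rw [← hm] at hmean hsmall ⊢
  have : (0 : ℝ) < n := by exact_mod_cast (by omega : 0 < n)
  refine le_trans ?_ (one_sub_sub_le_tvDist_signedTriangles hp n d α t (by positivity) hsmall)
  have hnull : 36 * (n : ℝ) ^ 3 / (n ^ 3 * |m| / 9) ^ 2 = 2916 * (1 / (n ^ 3 * m ^ 2)) := by
    rw [div_pow, mul_pow, sq_abs]
    field_simp
    norm_num
  have h₁ : 0 ≤ (triangleKernel hp t d).energy (gaussPi d α) / (n * m ^ 2) := by positivity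
  have h₂ : 0 ≤ 1 / (n ^ 3 * m ^ 2) := by positivity
  linarith

lemma one_sub_le_tvDist_of_variance (hp : p ∈ Set.Icc (0 : ℝ) 1) (hn : 3 ≤ n)
    (α : Fin d → ℝ) (t : ℝ) {K η : ℝ} (hK : 0 < K) (hη : 0 < η) :
    1 - 36 / (K ^ 2 * n) - (10000 / K ^ 2 + 2 *
        (rexp (-(n * Var[(triangleKernel hp t d).marginal₁ (gaussPi d α); gaussPi d α] * η ^ 2 /
          (5 * (3 * K) ^ 2))) + η + 1 / (3 * K) ^ 2)) ≤
      tvDist (Measure.map (signedTriangles p) (erGraph n p))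
        (Measure.map (signedTriangles p) (geomGraph n d α t)) := by
  have : (0 : ℝ) < n := by exact_mod_cast (by omega : 0 < n)
  have hnull : 36 * (n : ℝ) ^ 3 / (K * n ^ 2) ^ 2 = 36 / (K ^ 2 * n) := by
    field_simp
  rw [← hnull]
  exact one_sub_sub_le_tvDist_signedTriangles hp n d α t (by positivity)
    ((triangleKernel hp t d).measureReal_abs_uStatistic_le_le_of_variance (gaussPi d α) hn hK hη)

end Separation

section Quantitative

variable {p : ℝ}

lemma SymmKernel.sq_mul_le_variance_marginal₁ {E : Type*} [MeasurableSpace E] (H : SymmKernel E)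
    (μ : Measure E) [IsProbabilityMeasure μ] {c δ : ℝ} (hc : 0 < c) (hmean : |H.mean μ| ≤ c)
    (hδ : δ ≤ μ.real {x | 2 * c ≤ H.marginal₁ μ x}) : c ^ 2 * δ ≤ Var[H.marginal₁ μ; μ] := by
  have hmeas : BoundedMeasurable (H.marginal₁ μ) := H.boundedMeasurable_marginal₁ μ measurable_id
  have hcheb := measureReal_le_abs_le_integral_sq_div μ
    (f := fun x => H.marginal₁ μ x - H.mean μ) (BoundedMeasurable.integrable (by fun_prop) _) hc
  rw [le_div_iff₀ (by positivity), mul_comm] at hcheb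
  refine (mul_le_mul_of_nonneg_left (hδ.trans (measureReal_mono fun x hx => ?_))
    (sq_nonneg c)).trans (hcheb.trans_eq ?_)
  · rw [Set.mem_ofPred_eq] at hx ⊢
    linarith [le_abs_self (H.marginal₁ μ x - H.mean μ), le_abs_self (H.mean μ)]
  · exact (variance_eq_integral hmeas.measurable.aemeasurable).symm

lemma sum_pow_four_le_mul_sum_pow_three {d : ℕ} {α : Fin d → ℝ} (hα : ∀ i, 0 ≤ α i) {κ : ℝ}
    (hκ : 0 ≤ κ) (h : ∑ i, α i ^ 3 ≤ κ ^ 3) : ∑ i, α i ^ 4 ≤ κ * ∑ i, α i ^ 3 := by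
  have hcube : 0 ≤ ∑ i, α i ^ 3 := Finset.sum_nonneg fun i _ => pow_nonneg (hα i) 3
  refine le_of_pow_le_pow_left₀ three_ne_zero (by positivity) ?_
  calc (∑ i, α i ^ 4) ^ 3 ≤ (∑ i, α i ^ 3) * (∑ i, α i ^ 3) ^ 3 :=
        (sum_pow_four_pow_three_le hα).trans_eq (pow_succ' _ 3)
    _ ≤ κ ^ 3 * (∑ i, α i ^ 3) ^ 3 := by gcongr
    _ = (κ * ∑ i, α i ^ 3) ^ 3 := (mul_pow _ _ _).symm

lemma sum_pow_four_le_mul_sq_sum_pow_three {d : ℕ} {α : Fin d → ℝ} (hα : ∀ i, 0 ≤ α i) {s z : ℝ}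
    (hs : 0 ≤ s) (h : 1 ≤ z ^ 24 * (s ^ 3 * (∑ i, α i ^ 3) ^ 2)) :
    ∑ i, α i ^ 4 ≤ z ^ 8 * (s * (∑ i, α i ^ 3) ^ 2) := by
  refine le_of_pow_le_pow_left₀ three_ne_zero (by positivity) ?_
  calc (∑ i, α i ^ 4) ^ 3 ≤ (∑ i, α i ^ 3) ^ 4 * 1 := by
        rw [mul_one]
        exact sum_pow_four_pow_three_le hα
    _ ≤ (∑ i, α i ^ 3) ^ 4 * (z ^ 24 * (s ^ 3 * (∑ i, α i ^ 3) ^ 2)) := by gcongr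
    _ = (z ^ 8 * (s * (∑ i, α i ^ 3) ^ 2)) ^ 3 := by ring

/-- Either `‖α‖₃` is small and the Gaussian expansion of the mean applies, or some coordinate of
`α` is large and the one-point marginal is not small. -/
lemma exists_mul_le_abs_mean_or_le_variance (hp : p ∈ Set.Ioo (0 : ℝ) 1) :
    ∃ c > 0, ∃ v > 0, ∀ (d : ℕ) (α : Fin d → ℝ) (t : ℝ), (∀ i, 0 ≤ α i) →
      ∑ i, α i ^ 2 = 1 → IsThreshold d α p t →
      c * ∑ i, α i ^ 3 ≤
          |(triangleKernel (Set.Ioo_subset_Icc_self hp) t d).mean (gaussPi d α)| ∨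
        v ≤ Var[(triangleKernel (Set.Ioo_subset_Icc_self hp) t d).marginal₁ (gaussPi d α);
          gaussPi d α] := by
  obtain ⟨T, hT⟩ : ∃ T, T = √(1 / (p * (1 - p))) := ⟨_, rfl⟩
  obtain ⟨e, he⟩ : ∃ e, e = gaussDensity 1 T ^ 3 := ⟨_, rfl⟩
  have he₀ : 0 < e := he ▸ pow_pos (gaussDensity_pos one_pos T) 3
  obtain ⟨κ, hκ⟩ : ∃ κ, κ = e / (2 * (14 + 44 * gaussianSqVar)) := ⟨_, rfl⟩
  have hvar := gaussianSqVar_nonneg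
  have hκ₀ : 0 < κ := hκ ▸ by positivity
  obtain ⟨c, hc, δ, hδ, hmarginal⟩ := exists_le_measureReal_marginal₁_triangleKernel
    (Set.Ioo_subset_Icc_self hp) (hT ▸ Real.sqrt_nonneg _ : 0 ≤ T) (pow_pos hκ₀ 3)
  refine ⟨min (e / 2) c, by positivity, c ^ 2 * δ, by positivity, fun d α t hα hα₂ ht => ?_⟩
  have hr₀ := (sum_pow_three_pos hα hα₂).le
  rcases le_total (∑ i, α i ^ 3) (κ ^ 3) with hsmall | hlarge
  · left
    refine le_trans ?_ ((ht.mean_triangleKernel_ge hα hα₂ _).trans (le_abs_self _))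
    have hfour := sum_pow_four_le_mul_sum_pow_three hα hκ₀.le hsmall
    have hdensity : e ≤ gaussDensity 1 t ^ 3 := by
      rw [he, hT]
      exact pow_le_pow_left₀ (gaussDensity_nonneg _ _) (ht.gaussDensity_one_le hα hα₂ hp) 3
    have hκe : (14 + 44 * gaussianSqVar) * κ = e / 2 := by
      rw [hκ]
      field_simp
    calc min (e / 2) c * ∑ i, α i ^ 3 ≤ e / 2 * ∑ i, α i ^ 3 := by
          gcongr
          exact min_le_left _ _
      _ = e * ∑ i, α i ^ 3 - (14 + 44 * gaussianSqVar) * (κ * ∑ i, α i ^ 3) := by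
          rw [← mul_assoc, hκe]
          ring
      _ ≤ _ := by gcongr
  · obtain ⟨m, hm⟩ := exists_sum_pow_three_le hα₂
    rcases le_total c |(triangleKernel (Set.Ioo_subset_Icc_self hp) t d).mean (gaussPi d α)|
      with hmean | hmean
    · left
      calc _ ≤ c * 1 := mul_le_mul (min_le_right _ _) (sum_pow_three_le_one hα hα₂) hr₀ hc.le
        _ ≤ _ := by rwa [mul_one]
    · exact Or.inr (SymmKernel.sq_mul_le_variance_marginal₁ _ _ hc hmean
        (hmarginal d α t m hα hα₂ ht (hT ▸ abs_le_sqrt (ht.sq_le hα hα₂ hp)) (hlarge.trans hm)))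

lemma exists_one_sub_mul_le_tvDist_of_mean (hp : p ∈ Set.Icc (0 : ℝ) 1) {c : ℝ} (hc : 0 < c) :
    ∃ C : ℝ, ∀ (n d : ℕ) (α : Fin d → ℝ) (t z : ℝ), 3 ≤ n → (∀ i, 0 ≤ α i) →
      ∑ i, α i ^ 2 = 1 → IsThreshold d α p t → 0 < z → z ≤ 1 →
      1 ≤ z ^ 24 * (n ^ 3 * (∑ i, α i ^ 3) ^ 2) →
      c * ∑ i, α i ^ 3 ≤ |(triangleKernel hp t d).mean (gaussPi d α)| →
      1 - C * z ≤ tvDist (Measure.map (signedTriangles p) (erGraph n p))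
        (Measure.map (signedTriangles p) (geomGraph n d α t)) := by
  have hvar := gaussianSqVar_nonneg
  refine ⟨900000 * ((51 + 132 * gaussianSqVar) / c ^ 2),
    fun n d α t z hn hα hα₂ ht hz hz₁ hrate hmean => ?_⟩
  have hr₀ := sum_pow_three_pos hα hα₂
  have hfour := sum_pow_four_le_mul_sq_sum_pow_three hα (Nat.cast_nonneg n) hrate
  have henergy := ht.energy_triangleKernel_le hα hα₂ hp
  have hmean₀ := (mul_pos hc hr₀).trans_le hmean
  refine le_trans ?_ (one_sub_le_tvDist_of_mean_ne_zero hp hn α t (abs_pos.1 hmean₀))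
  have hsq := sq_le_sq' (by linarith [mul_pos hc hr₀]) hmean
  rw [sq_abs] at hsq
  obtain ⟨r, hr⟩ : ∃ r, r = ∑ i, α i ^ 3 := ⟨_, rfl⟩
  rw [← hr] at hr₀ hfour hrate hsq
  have : (0 : ℝ) < n := by exact_mod_cast (by omega : 0 < n)
  have henergy_term : (triangleKernel hp t d).energy (gaussPi d α) /
      (n * (triangleKernel hp t d).mean (gaussPi d α) ^ 2) ≤
        (50 + 132 * gaussianSqVar) / c ^ 2 * z := by
    calc _ ≤ (50 + 132 * gaussianSqVar) * (z ^ 8 * (n * r ^ 2)) / (n * (c * r) ^ 2) := by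
          gcongr
          exact henergy.trans (by gcongr)
      _ = (50 + 132 * gaussianSqVar) / c ^ 2 * z ^ 8 := by field_simp
      _ ≤ _ := by
          gcongr
          exact pow_le_of_le_one hz.le hz₁ (by norm_num)
  have hdiag_term : 1 / (n ^ 3 * (triangleKernel hp t d).mean (gaussPi d α) ^ 2) ≤
      1 / c ^ 2 * z := by
    calc _ ≤ z ^ 24 * (n ^ 3 * r ^ 2) / (n ^ 3 * (c * r) ^ 2) := by gcongr
      _ = 1 / c ^ 2 * z ^ 24 := by field_simp
      _ ≤ _ := by
          gcongr
          exact pow_le_of_le_one hz.le hz₁ (by norm_num)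
  have hcoeff : (51 + 132 * gaussianSqVar) / c ^ 2 * z =
      (50 + 132 * gaussianSqVar) / c ^ 2 * z + 1 / c ^ 2 * z := by ring
  linarith

/-- The Hájek projection bound with window width `K = 1 / z` and smoothing parameter `η = z`. -/
lemma one_sub_mul_le_tvDist_of_variance (hp : p ∈ Set.Icc (0 : ℝ) 1) {n d : ℕ} (hn : 3 ≤ n)
    (α : Fin d → ℝ) (t : ℝ) {v z : ℝ} (hv : 0 < v) (hz : 0 < z) (hz₁ : z ≤ 1)
    (hrate : 1 ≤ z ^ 8 * n)
    (hvar : v ≤ Var[(triangleKernel hp t d).marginal₁ (gaussPi d α); gaussPi d α]) :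
    1 - (10040 + 90 / v) * z ≤ tvDist (Measure.map (signedTriangles p) (erGraph n p))
      (Measure.map (signedTriangles p) (geomGraph n d α t)) := by
  refine le_trans ?_ (one_sub_le_tvDist_of_variance hp hn α t (inv_pos.2 hz) hz)
  have : (0 : ℝ) < n := by exact_mod_cast (by omega : 0 < n)
  obtain ⟨V, hV⟩ : ∃ V, V = Var[(triangleKernel hp t d).marginal₁ (gaussPi d α); gaussPi d α] :=
    ⟨_, rfl⟩
  rw [← hV] at hvar ⊢
  have hV₀ := hv.trans_le hvar
  have hpow {k : ℕ} (hk : k ≠ 0) : z ^ k ≤ z := pow_le_of_le_one hz.le hz₁ hk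
  have hnull : 36 / (z⁻¹ ^ 2 * n) ≤ 36 * z := by
    have hn₁ : (1 : ℝ) ≤ n := by exact_mod_cast (by omega : 1 ≤ n)
    calc 36 / (z⁻¹ ^ 2 * n) ≤ 36 / (z⁻¹ ^ 2 * 1) := by gcongr
      _ = 36 * z ^ 2 := by field_simp
      _ ≤ 36 * z := by linarith [hpow two_ne_zero]
  have hexp : rexp (-(n * V * z ^ 2 / (5 * (3 * z⁻¹) ^ 2))) ≤ 45 / v * z := by
    have hx : 0 < n * V * z ^ 2 / (5 * (3 * z⁻¹) ^ 2) := by positivity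
    calc _ ≤ (n * V * z ^ 2 / (5 * (3 * z⁻¹) ^ 2))⁻¹ := by
          rw [Real.exp_neg]
          exact inv_anti₀ hx (by linarith [add_one_le_exp (n * V * z ^ 2 / (5 * (3 * z⁻¹) ^ 2))])
      _ = 45 / (V * n * z ^ 4) := by
          field_simp
          norm_num
      _ ≤ 45 * (z ^ 8 * n) / (v * n * z ^ 4) := by
          gcongr
          linarith
      _ = 45 / v * z ^ 4 := by field_simp
      _ ≤ 45 / v * z := by
          gcongr
          exact hpow four_ne_zero
  have hrest : 10000 / z⁻¹ ^ 2 ≤ 10000 * z := by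
    calc 10000 / z⁻¹ ^ 2 = 10000 * z ^ 2 := by field_simp
      _ ≤ 10000 * z := by linarith [hpow two_ne_zero]
  have hwindow : 1 / (3 * z⁻¹) ^ 2 ≤ z := by
    calc 1 / (3 * z⁻¹) ^ 2 = z ^ 2 / 9 := by field_simp; norm_num
      _ ≤ z := by linarith [hpow two_ne_zero]
  have hcoeff : (10040 + 90 / v) * z = 10040 * z + 2 * (45 / v * z) := by ring
  linarith

lemma exists_one_sub_mul_le_tvDist (hp : p ∈ Set.Ioo (0 : ℝ) 1) :
    ∃ C : ℝ, ∀ (n d : ℕ) (α : Fin d → ℝ) (t z : ℝ), 3 ≤ n → (∀ i, 0 ≤ α i) →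
      ∑ i, α i ^ 2 = 1 → IsThreshold d α p t → 0 < z → z ≤ 1 →
      1 ≤ z ^ 24 * (n ^ 3 * (∑ i, α i ^ 3) ^ 2) →
      1 - C * z ≤ tvDist (Measure.map (signedTriangles p) (erGraph n p))
        (Measure.map (signedTriangles p) (geomGraph n d α t)) := by
  have hp' := Set.Ioo_subset_Icc_self hp
  obtain ⟨c, hc, v, hv, hdichotomy⟩ := exists_mul_le_abs_mean_or_le_variance hp
  obtain ⟨C, hmean⟩ := exists_one_sub_mul_le_tvDist_of_mean hp' hc
  refine ⟨max C (10040 + 90 / v), fun n d α t z hn hα hα₂ ht hz hz₁ hrate => ?_⟩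
  rcases hdichotomy d α t hα hα₂ ht with hcase | hcase
  · refine le_trans ?_ (hmean n d α t z hn hα hα₂ ht hz hz₁ hrate hcase)
    gcongr
    exact le_max_left _ _
  · have hrate' : 1 ≤ z ^ 8 * n := by
      refine (one_le_pow_iff_of_nonneg (by positivity) three_ne_zero).1 (hrate.trans ?_)
      calc z ^ 24 * (n ^ 3 * (∑ i, α i ^ 3) ^ 2) ≤ z ^ 24 * (n ^ 3 * 1 ^ 2) := by
            gcongr
            · exact (sum_pow_three_pos hα hα₂).le
            · exact sum_pow_three_le_one hα hα₂
        _ = (z ^ 8 * n) ^ 3 := by ring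
    refine le_trans ?_ (one_sub_mul_le_tvDist_of_variance hp' hn α t hv hz hz₁ hrate' hcase)
    gcongr
    exact le_max_right _ _

lemma tvDist_nonneg {Ω : Type*} [MeasurableSpace Ω] (μ ν : Measure Ω) : 0 ≤ tvDist μ ν :=
  Real.iSup_nonneg fun _ => abs_nonneg _

/-- A quantitative form of the theorem; the exponent `1 / 24` is not optimal. -/
theorem exists_one_sub_mul_rpow_le_tvDist (hp : p ∈ Set.Ioo (0 : ℝ) 1) :
    ∃ C : ℝ, ∀ (n d : ℕ) (α : Fin d → ℝ) (t : ℝ), 3 ≤ n → (∀ i, 0 ≤ α i) →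
      IsThreshold d α p t →
      1 - C * ((nrm 2 α / nrm 3 α) ^ 6 / n ^ 3) ^ (1 / 24 : ℝ) ≤
        tvDist (Measure.map (signedTriangles p) (erGraph n p))
          (Measure.map (signedTriangles p) (geomGraph n d α t)) := by
  obtain ⟨C, hnormalized⟩ := exists_one_sub_mul_le_tvDist hp
  refine ⟨max C 1, fun n d α t hn hα ht => ?_⟩
  have : (0 : ℝ) < n := by exact_mod_cast (by omega : 0 < n)
  have hnrm₂ := ht.nrm_two_pos hα hp
  have hα' (i : Fin d) : 0 ≤ (nrm 2 α)⁻¹ * α i := mul_nonneg (inv_pos.2 hnrm₂).le (hα i)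
  have hsum₂ : ∑ i, ((nrm 2 α)⁻¹ * α i) ^ 2 = 1 := by
    rw [sum_nrm_inv_mul_pow hα 2 two_ne_zero, div_self hnrm₂.ne', one_pow]
  have hsum₃ := sum_nrm_inv_mul_pow hα 2 three_ne_zero
  have hratio : 0 < nrm 3 α / nrm 2 α := by
    refine (div_nonneg (nrm_nonneg hα 3) hnrm₂.le).lt_of_ne' fun h => ?_
    have := sum_pow_three_pos hα' hsum₂
    simp [hsum₃, h] at this
  obtain ⟨s, hs⟩ : ∃ s, s = (nrm 2 α / nrm 3 α) ^ 6 / (n : ℝ) ^ 3 := ⟨_, rfl⟩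
  have hs_inv : s * (n ^ 3 * ((nrm 3 α / nrm 2 α) ^ 3) ^ 2) = 1 := by
    have hnrm₃ := (div_pos_iff_of_pos_right hnrm₂).1 hratio
    rw [hs]
    field_simp
  have hs₀ : 0 < s := pos_of_mul_pos_left (hs_inv ▸ one_pos) (by positivity)
  rw [← hs]
  rcases le_total (s ^ (1 / 24 : ℝ)) 1 with hz | hz
  · have hs_pow : (s ^ (1 / 24 : ℝ)) ^ 24 = s := by
      rw [← Real.rpow_natCast, ← Real.rpow_mul hs₀.le]
      norm_num
    have := hnormalized n d _ _ _ hn hα' hsum₂ (ht.mul (inv_pos.2 hnrm₂))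
      (Real.rpow_pos_of_pos hs₀ _) hz (by rw [hs_pow, hsum₃, hs_inv])
    rw [geomGraph_mul n α (inv_pos.2 hnrm₂)] at this
    refine le_trans ?_ this
    gcongr
    exact le_max_left _ _
  · refine le_trans ?_ (tvDist_nonneg _ _)
    linarith [one_le_mul_of_one_le_of_one_le (le_max_right C 1) hz]

end Quantitative

/-- Theorem 4. If `(‖α‖₂/‖α‖₃)⁶ / n³ → 0`, then
`TV(τ(G(n,p)), τ(G(n,p,α))) → 1`. -/
theorem tv_signedTriangles_tendsto_one (p : ℝ) (hp : p ∈ Set.Ioo (0 : ℝ) 1)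
    (d : ℕ → ℕ) (α : (n : ℕ) → Fin (d n) → ℝ)
    (hα : ∀ n i, 0 ≤ α n i)
    (t : ℕ → ℝ) (ht : ∀ n, IsThreshold (d n) (α n) p (t n))
    (hlim : Tendsto (fun n => (nrm 2 (α n) / nrm 3 (α n)) ^ 6 / (n : ℝ) ^ 3)
      atTop (nhds 0)) :
    Tendsto (fun n => tvDist
        (Measure.map (signedTriangles p) (erGraph n p))
        (Measure.map (signedTriangles p) (geomGraph n (d n) (α n) (t n))))
      atTop (nhds 1) := by
  obtain ⟨C, hC⟩ := exists_one_sub_mul_rpow_le_tvDist hp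
  have hrate : Tendsto (fun n => 1 - C *
      ((nrm 2 (α n) / nrm 3 (α n)) ^ 6 / (n : ℝ) ^ 3) ^ (1 / 24 : ℝ)) atTop (nhds 1) := by
    have hpower := hlim.rpow_const (p := 1 / 24) (Or.inr (by norm_num))
    simpa using (hpower.const_mul C).const_sub 1
  refine tendsto_of_tendsto_of_tendsto_of_le_of_le' hrate tendsto_const_nhds ?_ ?_
  · filter_upwards [eventually_ge_atTop 3] with n hn
    exact hC n (d n) (α n) (t n) hn (hα n) (ht n)
  · refine Eventually.of_forall fun n => ?_
    have := Measure.isProbabilityMeasure_map (μ := erGraph n p)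
      (measurable_signedTriangles p).aemeasurable
    have := Measure.isProbabilityMeasure_map (μ := geomGraph n (d n) (α n) (t n))
      (measurable_signedTriangles p).aemeasurable
    exact tvDist_le_one _ _

end
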